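/- For $\nu,\eta,\lambda>0$ the Matérn kernel of order $\nu$ on $\mathbb{R}^n$, with amplitude $\eta$ and lengthscale $\lambda$, is $$k_\nu(x,y)=\frac{\eta}{\Gamma(\nu)2^{\nu-1}}\Big(\frac{\sqrt{2\nu}\,\|x-y\|_2}{\lambda}\Big)^{\nu}K_\nu\Big(\frac{\sqrt{2\nu}\,\|x-y\|_2}{\lambda}\Big)\quad(x\neq y),\qquad k_\nu(x,x)=\eta,$$ where $K_\nu$ is the modified Bessel function of the second kind; the squared-exponential kernel is $k_{\mathrm{SE}}(x,y)=\eta\exp(-\|x-y\|_2^2/\lambda^2)$. Suppose: (i) the base space $U\subset\mathbb{R}^s$ is bounded, open, and convex; the data space $X$ is either all of $\mathbb{R}^d$ or a bounded, open, and convex subset of $\mathbb{R}^d$; the base probability measure $\mathbb{U}$ on $U$ has a density $f_{\mathbb{U}}:U\to[C_{\mathbb{U}},C'_{\mathbb{U}}]$ with $C_{\mathbb{U}},C'_{\mathbb{U}}>0$; and the pushforward $\mathbb{P}_\theta$ of $\mathbb{U}$ under a map $G_\theta:U\to X$ has a density (with respect to Lebesgue measure on $X$) that is bounded above; (ii) for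 some integer $l>s/2$, every partial derivative $\partial^\alpha G_{\theta,j}$ with $\alpha\in\mathbb{N}^s$, $|\alpha|\le l$, $j\in\{1,\dots,d\}$, exists on $U$ and is bounded; (iii) either $k$ is a Matérn kernel on $X$ of order $\nu_k$ with $\lfloor\nu_k+d/2\rfloor>s/2$, and $c$ is a Matérn kernel on $U$ of order $0<\nu_c\le\min(\lfloor\nu_k+d/2\rfloor,\,l)-s/2$; or $k$ is a squared-exponential kernel on $X$, and $c$ is a Matérn kernel on $U$ of order $0<\nu_c\le l-s/2$. Then for every $x\in X$ the function $u\mapsto k(x,G_\theta(u))$ on $U$ belongs to the reproducing kernel Hilbert space $\mathcal{H}_c$ of $c$. -/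

import Mathlib

open MeasureTheory

/-- The modified Bessel function of the second kind `K_ν`, for an argument `z > 0`, by its standard
integral representation `K_ν(z) = ∫_0^∞ exp(-z cosh t) cosh(ν t) dt`. -/
noncomputable def besselK (ν z : ℝ) : ℝ :=
  ∫ t in Set.Ioi (0 : ℝ), Real.exp (-(z * Real.cosh t)) * Real.cosh (ν * t)

open scoped Classical in
/-- The Matérn kernel of order `ν > 0` with amplitude `η > 0` and lengthscale `ℓ > 0`. On the
diagonal, where the formula reads `0 * ∞`, it is given its limit `η`. -/
noncomputable def maternKernel {n : ℕ} (ν η ℓ : ℝ) (x y : EuclideanSpace ℝ (Fin n)) : ℝ :=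
  if x = y then η
  else η / (Real.Gamma ν * (2 : ℝ) ^ (ν - 1)) *
    (Real.sqrt (2 * ν) * ‖x - y‖ / ℓ) ^ ν * besselK ν (Real.sqrt (2 * ν) * ‖x - y‖ / ℓ)

/-- The squared-exponential kernel with amplitude `η > 0` and lengthscale `ℓ > 0`. -/
noncomputable def seKernel {n : ℕ} (η ℓ : ℝ) (x y : EuclideanSpace ℝ (Fin n)) : ℝ :=
  η * Real.exp (-‖x - y‖ ^ 2 / ℓ ^ 2)

/-- `f ∈ H_c`: the function `f` belongs to the reproducing kernel Hilbert space of `c`, that is, to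
the Hilbert space of functions on `S` with continuous point evaluations whose reproducing kernel
is `c` (as a set of functions this space is determined by `c`). -/
def MemRKHS {S : Type} (c : S → S → ℝ) (f : S → ℝ) : Prop :=
  ∃ (H : Type) (_ : NormedAddCommGroup H) (_ : InnerProductSpace ℝ H) (_ : CompleteSpace H)
    (_ : RKHS ℝ H S ℝ),
    (∀ x y : S, RKHS.kernel H x y (1 : ℝ) = c x y) ∧ ∃ h : H, (h : S → ℝ) = f

/-- For every multi-index `α` with `|α| ≤ l`, the (classical, pointwise) partial derivative
`∂^α f = ∂_1^{α_1} ⋯ ∂_s^{α_s} f` exists everywhere on the open set `U` and is bounded on `U`.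
Here `D α` is `∂^α f`; the clause `∀ j < i, α j = 0` says that `∂_i` may be applied to `∂^α f`
without departing from the order of differentiation `∂_1^{α_1} ⋯ ∂_s^{α_s}`. -/
def HasBoundedPartials {s : ℕ} (U : Set (EuclideanSpace ℝ (Fin s))) (l : ℕ)
    (f : EuclideanSpace ℝ (Fin s) → ℝ) : Prop :=
  ∃ D : (Fin s → ℕ) → EuclideanSpace ℝ (Fin s) → ℝ,
    (∀ u ∈ U, D 0 u = f u) ∧
    (∀ (α : Fin s → ℕ) (i : Fin s), ∑ j, α j < l → (∀ j < i, α j = 0) →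
      ∀ u ∈ U, HasLineDerivAt ℝ (D α) (D (α + Pi.single i 1) u) u (EuclideanSpace.single i 1)) ∧
    (∀ α : Fin s → ℕ, ∑ j, α j ≤ l → ∃ C : ℝ, ∀ u ∈ U, |D α u| ≤ C)

/-!
Both kinds of kernel are mixtures over a scale `τ` of rescaled Gaussians: the Matérn kernel of order
`ν` for the Gamma distribution of shape `ν`, the squared-exponential kernel for a point mass.

For such a mixture `k`, differentiating `k (x, G ·)` produces negative powers of `τ`, which the
boundedness of the density of the pushforward allows to integrate in `L²` up to order `ν + d / 2`.
Hence `k (x, G ·)` has weak derivatives in `L²(U)` up to order `m = min ⌊ν + d / 2⌋ l`.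

On the side of `c`, Fourier inversion of the Gamma mixture shows that its spectral density is
comparable to `(1 + ‖ξ‖²) ^ (-(νc + s / 2))`. So a function belongs to the RKHS as soon as it acts
on finite combinations of point masses in `U` with a bound by their Sobolev norm of order
`-m ≤ -(νc + s / 2)`. That a function with weak derivatives of order `m` in `L²(U)` satisfies this
bound is proved without an extension theorem: after localisation, a point evaluation at a point of
a convex set is the average of Taylor expansions along a cone of directions pointing inwards.
-/

section FeatureMap

variable {S F : Type*} [NormedAddCommGroup F] [InnerProductSpace ℝ F]

/-- The closed linear span of the features `Φ x`. Identifying `v` with the function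
`x ↦ ⟪Φ x, v⟫`, it is the reproducing kernel Hilbert space of the Gram kernel of `Φ`. -/
abbrev featureSpace (Φ : S → F) : Submodule ℝ F :=
  (Submodule.span ℝ (Set.range Φ)).topologicalClosure

theorem mem_featureSpace (Φ : S → F) (x : S) : Φ x ∈ featureSpace Φ :=
  Submodule.le_topologicalClosure _ (Submodule.subset_span ⟨x, rfl⟩)

/-- The identification of a vector of the feature space with a function on `S`. -/
noncomputable def featureEval (Φ : S → F) : featureSpace Φ →L[ℝ] (S → ℝ) :=
  ContinuousLinearMap.pi fun x => (innerSL ℝ (Φ x)).comp (featureSpace Φ).subtypeL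

theorem featureEval_apply (Φ : S → F) (v : featureSpace Φ) (x : S) :
    featureEval Φ v x = inner ℝ (Φ x) (v : F) := rfl

theorem featureEval_injective (Φ : S → F) : Function.Injective (featureEval Φ) := by
  refine (injective_iff_map_eq_zero _).2 fun v hv => ?_
  have hspan : Submodule.span ℝ (Set.range Φ) ≤ (ℝ ∙ (v : F))ᗮ := by
    rw [Submodule.span_le]
    rintro _ ⟨x, rfl⟩
    rw [SetLike.mem_coe, Submodule.mem_orthogonal_singleton_iff_inner_left, ← featureEval_apply,
      hv, Pi.zero_apply]
  have hv_orth : (v : F) ∈ (ℝ ∙ (v : F))ᗮ :=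
    Submodule.topologicalClosure_minimal _ hspan (Submodule.isClosed_orthogonal _) v.2
  exact Subtype.ext <| inner_self_eq_zero.1 <|
    Submodule.mem_orthogonal_singleton_iff_inner_left.1 hv_orth

noncomputable instance featureSpace.instRKHS (Φ : S → F) : RKHS ℝ (featureSpace Φ) S ℝ :=
  ⟨featureEval Φ, featureEval_injective Φ⟩

theorem featureSpace_coe_apply (Φ : S → F) (v : featureSpace Φ) (x : S) :
    v x = inner ℝ (Φ x) (v : F) := rfl

variable [CompleteSpace F]

theorem kerFun_featureSpace (Φ : S → F) (x : S) :
    RKHS.kerFun (featureSpace Φ) x (1 : ℝ) = ⟨Φ x, mem_featureSpace Φ x⟩ := by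
  refine ext_inner_right ℝ fun v => ?_
  rw [RKHS.kerFun_inner, featureSpace_coe_apply]
  simp

theorem memRKHS_inner {S F : Type} [NormedAddCommGroup F] [InnerProductSpace ℝ F] [CompleteSpace F]
    (Φ : S → F) (h : F) :
    MemRKHS (fun x y => inner ℝ (Φ x) (Φ y)) fun x => inner ℝ (Φ x) h := by
  refine ⟨featureSpace Φ, inferInstance, inferInstance, inferInstance, inferInstance,
    fun x y => ?_, (featureSpace Φ).orthogonalProjectionOnto h, funext fun x => ?_⟩
  · rw [← RKHS.kerFun_apply, kerFun_featureSpace, featureSpace_coe_apply]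
  · rw [featureSpace_coe_apply]
    exact (featureSpace Φ).inner_orthogonalProjectionOnto_eq_of_mem_left
      ⟨Φ x, mem_featureSpace Φ x⟩ h

theorem exists_inner_eq_of_abs_sum_le (Φ : S → F) {f : S → ℝ} {M : ℝ}
    (hM : ∀ a : S →₀ ℝ, |a.sum fun x r => r * f x| ≤ M * ‖a.sum fun x r => r • Φ x‖) :
    ∃ h : F, ∀ x, inner ℝ (Φ x) h = f x := by
  set Ψ : (S →₀ ℝ) →ₗ[ℝ] F := Finsupp.linearCombination ℝ Φ
  set L : (S →₀ ℝ) →ₗ[ℝ] ℝ := Finsupp.linearCombination ℝ f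
  have hM : ∀ a, |L a| ≤ M * ‖Ψ a‖ := hM
  have hker : LinearMap.ker Ψ ≤ LinearMap.ker L := fun a ha => by
    simpa [LinearMap.mem_ker.1 ha] using hM a
  let L' : LinearMap.range Ψ →ₗ[ℝ] ℝ :=
    (LinearMap.ker Ψ).liftQ L hker ∘ₗ Ψ.quotKerEquivRange.symm.toLinearMap
  have hL' : ∀ a, L' ⟨Ψ a, LinearMap.mem_range_self Ψ a⟩ = L a := fun a => by
    simp [L', Ψ.quotKerEquivRange_symm_apply_image a]
  have hbound : ∀ y, ‖L' y‖ ≤ M * ‖y‖ := by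
    rintro ⟨_, a, rfl⟩
    rw [hL']
    exact hM a
  obtain ⟨g, hg, -⟩ := exists_extension_norm_eq (𝕜 := ℝ) _ (L'.mkContinuous M hbound)
  refine ⟨(InnerProductSpace.toDual ℝ F).symm g, fun x => ?_⟩
  have hΨ : Ψ (Finsupp.single x 1) = Φ x := by simp [Ψ]
  rw [real_inner_comm, InnerProductSpace.toDual_symm_apply, ← hΨ]
  refine (hg ⟨_, LinearMap.mem_range_self Ψ _⟩).trans ?_
  rw [LinearMap.mkContinuous_apply, hL']
  simp [L]

theorem memRKHS_of_abs_sum_le {S F : Type} [NormedAddCommGroup F] [InnerProductSpace ℝ F]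
    [CompleteSpace F] {Φ : S → F} {c : S → S → ℝ} (hc : ∀ x y, c x y = inner ℝ (Φ x) (Φ y))
    {f : S → ℝ} {M : ℝ}
    (hM : ∀ a : S →₀ ℝ, |a.sum fun x r => r * f x| ≤ M * ‖a.sum fun x r => r • Φ x‖) :
    MemRKHS c f := by
  obtain ⟨h, hf⟩ := exists_inner_eq_of_abs_sum_le Φ hM
  obtain rfl : f = fun x => inner ℝ (Φ x) h := funext fun x => (hf x).symm
  obtain rfl : c = fun x y => inner ℝ (Φ x) (Φ y) := funext₂ hc
  exact memRKHS_inner Φ h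

end FeatureMap

section Matern

open Real Set
open scoped FourierTransform

theorem integrableOn_rpow_mul_exp_neg_mul_exp_neg_div {ν : ℝ} (hν : 0 < ν) {b : ℝ} (hb : 0 ≤ b) :
    IntegrableOn (fun τ : ℝ => τ ^ (ν - 1) * exp (-τ) * exp (-(b / τ))) (Ioi 0) := by
  refine (Real.GammaIntegral_convergent hν).mono' (by fun_prop) ?_
  filter_upwards [ae_restrict_mem measurableSet_Ioi] with τ hτ
  have hτ' : (0 : ℝ) < τ := hτ
  rw [norm_of_nonneg (by positivity), mul_comm (τ ^ (ν - 1))]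
  exact mul_le_of_le_one_right (by positivity)
    (exp_le_one_iff.2 (neg_nonpos.2 (by positivity)))

section ExpSubstitution

variable {c : ℝ} (hc : 0 < c)

include hc

theorem image_mul_exp_univ : (fun t => c * exp t) '' univ = Ioi 0 := by
  rw [image_univ, show (fun t => c * exp t) = (c * ·) ∘ exp from rfl, range_comp, range_exp,
    image_mul_left_Ioi hc, mul_zero]

theorem injOn_mul_exp : InjOn (fun t => c * exp t) univ :=
  ((mul_right_injective₀ hc.ne').comp exp_injective).injOn

theorem integral_Ioi_eq_integral_comp_mul_exp (g : ℝ → ℝ) :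
    ∫ τ in Ioi 0, g τ = ∫ t, c * exp t * g (c * exp t) := by
  have h := integral_image_eq_integral_abs_deriv_smul MeasurableSet.univ
    (fun t _ => ((Real.hasDerivAt_exp t).const_mul c).hasDerivWithinAt) (injOn_mul_exp hc) g
  simpa only [image_mul_exp_univ hc, setIntegral_univ, smul_eq_mul, abs_mul, abs_exp,
    abs_of_pos hc] using h

theorem integrable_comp_mul_exp {g : ℝ → ℝ} (hg : IntegrableOn g (Ioi 0)) :
    Integrable fun t => c * exp t * g (c * exp t) := by
  have h := (integrableOn_image_iff_integrableOn_abs_deriv_smul MeasurableSet.univ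
    (fun t _ => ((Real.hasDerivAt_exp t).const_mul c).hasDerivWithinAt) (injOn_mul_exp hc) g).1
      (by rwa [image_mul_exp_univ hc])
  simpa only [integrableOn_univ, smul_eq_mul, abs_mul, abs_exp, abs_of_pos hc] using h

end ExpSubstitution

theorem integral_exp_mul_exp_neg_mul_cosh {ν z : ℝ}
    (h : Integrable fun t => exp (ν * t) * exp (-(z * cosh t))) :
    ∫ t, exp (ν * t) * exp (-(z * cosh t)) = 2 * besselK ν z := by
  rw [← intervalIntegral.integral_Iic_add_Ioi (b := 0) h.integrableOn h.integrableOn,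
    ← neg_zero, ← integral_comp_neg_Ioi, neg_zero, ← integral_add h.comp_neg.integrableOn
      h.integrableOn, besselK, ← integral_const_mul]
  congr with t
  rw [cosh_neg, cosh_eq (ν * t), mul_neg]
  ring

theorem rpow_mul_besselK {ν z : ℝ} (hν : 0 < ν) (hz : 0 < z) :
    z ^ ν * besselK ν z =
      2 ^ (ν - 1) * ∫ τ in Ioi (0 : ℝ), τ ^ (ν - 1) * exp (-τ) * exp (-(z ^ 2 / 4 / τ)) := by
  set g : ℝ → ℝ := fun τ => τ ^ (ν - 1) * exp (-τ) * exp (-(z ^ 2 / 4 / τ))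
  have hz2 : 0 < z / 2 := by positivity
  have hg : ∀ t, z / 2 * exp t * g (z / 2 * exp t) =
      (z / 2) ^ ν * (exp (ν * t) * exp (-(z * cosh t))) := fun t => by
    have hpow : z / 2 * exp t * (z / 2 * exp t) ^ (ν - 1) = (z / 2) ^ ν * exp (ν * t) := by
      rw [← rpow_one_add' (by positivity) (by linarith), add_sub_cancel,
        mul_rpow hz2.le (exp_nonneg t), ← exp_mul, mul_comm t]
    have hexp : exp (-(z / 2 * exp t)) * exp (-(z ^ 2 / 4 / (z / 2 * exp t))) =
        exp (-(z * cosh t)) := by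
      rw [← exp_add, cosh_eq, exp_neg t]
      congr 1
      field_simp
      ring
    linear_combination exp (-(z / 2 * exp t)) * exp (-(z ^ 2 / 4 / (z / 2 * exp t))) * hpow +
      (z / 2) ^ ν * exp (ν * t) * hexp
  have hint : Integrable fun t => exp (ν * t) * exp (-(z * cosh t)) := by
    have := integrable_comp_mul_exp hz2
      (integrableOn_rpow_mul_exp_neg_mul_exp_neg_div hν (by positivity : 0 ≤ z ^ 2 / 4))
    exact (integrable_const_mul_iff (rpow_pos_of_pos hz2 ν).ne'.isUnit _).1
      (this.congr (.of_forall hg))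
  rw [integral_Ioi_eq_integral_comp_mul_exp hz2, integral_congr_ae (.of_forall hg),
    integral_const_mul, integral_exp_mul_exp_neg_mul_cosh hint, div_rpow hz.le (by norm_num),
    rpow_sub (by norm_num), rpow_one]
  field_simp

theorem maternKernel_eq_integral {n : ℕ} {ν ℓ : ℝ} (hν : 0 < ν) (hℓ : 0 < ℓ) (η : ℝ)
    (x y : EuclideanSpace ℝ (Fin n)) :
    maternKernel ν η ℓ x y = η / Gamma ν * ∫ τ in Ioi (0 : ℝ),
      τ ^ (ν - 1) * exp (-τ) * exp (-(ν / (2 * ℓ ^ 2) * ‖x - y‖ ^ 2 / τ)) := by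
  rw [maternKernel]
  split_ifs with hxy
  · simp only [hxy, sub_self, norm_zero, ne_eq, OfNat.ofNat_ne_zero, not_false_eq_true, zero_pow,
      mul_zero, zero_div, neg_zero, exp_zero, mul_one, mul_comm _ (exp _)]
    rw [← Gamma_eq_integral hν]
    field_simp
  · have hr : 0 < ‖x - y‖ := norm_pos_iff.2 (sub_ne_zero.2 hxy)
    have harg : (√(2 * ν) * ‖x - y‖ / ℓ) ^ 2 / 4 = ν / (2 * ℓ ^ 2) * ‖x - y‖ ^ 2 := by
      rw [div_pow, mul_pow, sq_sqrt (by positivity)]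
      field_simp
      ring
    rw [mul_assoc, rpow_mul_besselK hν (by positivity), harg]
    generalize (∫ τ in Ioi (0 : ℝ), _ : ℝ) = J
    field_simp

section SpectralDensity

variable {E : Type*} [NormedAddCommGroup E] [InnerProductSpace ℝ E] [FiniteDimensional ℝ E]

/-- The Gamma weight `τ ^ (ν - 1) * exp (-τ)` times the Gaussian in `ξ` whose Fourier transform is
`r ↦ exp (-a * ‖r‖ ^ 2 / τ)`. Integrating over `ξ` and over `τ` in either order relates the two
sides of the spectral representation of the Matérn kernel. -/
noncomputable def gammaGaussian (a ν τ : ℝ) (ξ : E) : ℝ :=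
  τ ^ (ν - 1) * exp (-τ) *
    ((π * τ / a) ^ ((Module.finrank ℝ E : ℝ) / 2) * exp (-(π ^ 2 / a * τ) * ‖ξ‖ ^ 2))

/-- The spectral density of the Gamma mixture `∫ τ ^ (ν - 1) * exp (-τ) * exp (-a * ‖r‖ ^ 2 / τ)`
of Gaussians. -/
noncomputable def gammaMixtureDensity (a ν : ℝ) (ξ : E) : ℝ :=
  (π / a) ^ ((Module.finrank ℝ E : ℝ) / 2) * Gamma (ν + (Module.finrank ℝ E : ℝ) / 2) *
    (1 + π ^ 2 / a * ‖ξ‖ ^ 2) ^ (-(ν + (Module.finrank ℝ E : ℝ) / 2))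

variable {a ν τ : ℝ}

omit [FiniteDimensional ℝ E] in
theorem gammaGaussian_nonneg (ha : 0 < a) (hτ : 0 < τ) (ξ : E) : 0 ≤ gammaGaussian a ν τ ξ := by
  unfold gammaGaussian
  positivity

omit [FiniteDimensional ℝ E] in
theorem integral_gammaGaussian_left (ha : 0 < a) (hν : 0 < ν) (ξ : E) :
    ∫ τ in Ioi (0 : ℝ), gammaGaussian a ν τ ξ = gammaMixtureDensity a ν ξ := by
  set p : ℝ := (Module.finrank ℝ E : ℝ) / 2
  have hpos : 0 < 1 + π ^ 2 / a * ‖ξ‖ ^ 2 := by positivity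
  have hweight : ∀ τ ∈ Ioi (0 : ℝ), gammaGaussian a ν τ ξ =
      (π / a) ^ p * (τ ^ (ν + p - 1) * exp (-((1 + π ^ 2 / a * ‖ξ‖ ^ 2) * τ))) := fun τ hτ => by
    have hτ : 0 < τ := hτ
    rw [gammaGaussian, show ν + p - 1 = ν - 1 + p by ring, rpow_add hτ,
      show π * τ / a = π / a * τ by ring, mul_rpow (by positivity) hτ.le,
      show -((1 + π ^ 2 / a * ‖ξ‖ ^ 2) * τ) = -τ + -(π ^ 2 / a * τ) * ‖ξ‖ ^ 2 by ring, exp_add]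
    ring
  rw [setIntegral_congr_fun measurableSet_Ioi hweight, integral_const_mul,
    integral_rpow_mul_exp_neg_mul_Ioi (by positivity) hpos, one_div, inv_rpow hpos.le,
    gammaMixtureDensity, rpow_neg hpos.le]
  ring

variable [MeasurableSpace E] [BorelSpace E]

theorem fourier_gammaGaussian (ha : 0 < a) (hτ : 0 < τ) (r : E) :
    𝓕 (fun ξ : E => (gammaGaussian a ν τ ξ : ℂ)) r =
      ((τ ^ (ν - 1) * exp (-τ) * exp (-(a * ‖r‖ ^ 2 / τ)) : ℝ) : ℂ) := by
  set p : ℝ := (Module.finrank ℝ E : ℝ) / 2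
  have hb : 0 < π ^ 2 / a * τ := by positivity
  have hgauss := fourier_gaussian_innerProductSpace (V := E) (b := (π ^ 2 / a * τ : ℝ))
    (by simpa only [Complex.ofReal_re] using hb) r
  set C : ℝ := τ ^ (ν - 1) * exp (-τ) * (π * τ / a) ^ p with hC
  have hfun : (fun ξ : E => (gammaGaussian a ν τ ξ : ℂ)) =
      (C : ℂ) • fun ξ : E => Complex.exp (-((π ^ 2 / a * τ : ℝ) : ℂ) * (‖ξ‖ : ℂ) ^ 2) := by
    ext ξ
    simp only [gammaGaussian, Pi.smul_apply, smul_eq_mul, C, p]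
    push_cast
    ring
  have hconst : (π * τ / a) ^ p * (π / (π ^ 2 / a * τ)) ^ p = 1 := by
    rw [← mul_rpow (by positivity) (by positivity),
      show π * τ / a * (π / (π ^ 2 / a * τ)) = 1 by field_simp, one_rpow]
  have hpow : ((π : ℂ) / ((π ^ 2 / a * τ : ℝ) : ℂ)) ^ ((Module.finrank ℝ E : ℂ) / 2) =
      (((π / (π ^ 2 / a * τ)) ^ p : ℝ) : ℂ) := by
    rw [Complex.ofReal_cpow (by positivity)]
    simp [p]
  have hexp : Complex.exp (-(π : ℂ) ^ 2 * (‖r‖ : ℂ) ^ 2 / ((π ^ 2 / a * τ : ℝ) : ℂ)) =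
      ((exp (-(a * ‖r‖ ^ 2 / τ)) : ℝ) : ℂ) := by
    rw [show -(a * ‖r‖ ^ 2 / τ) = -π ^ 2 * ‖r‖ ^ 2 / (π ^ 2 / a * τ) by field_simp]
    push_cast
    rfl
  rw [hfun]
  refine (congrFun (VectorFourier.fourierIntegral_const_smul _ _ _ _ _) r).trans ?_
  refine (congrArg ((C : ℂ) * ·) hgauss).trans ?_
  rw [hpow, hexp]
  norm_cast
  rw [hC]
  linear_combination (τ ^ (ν - 1) * exp (-τ) * exp (-(a * ‖r‖ ^ 2 / τ))) * hconst

theorem integral_gammaGaussian_right (ha : 0 < a) (hτ : 0 < τ) :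
    ∫ ξ : E, gammaGaussian a ν τ ξ = τ ^ (ν - 1) * exp (-τ) := by
  have h := fourier_gammaGaussian (ν := ν) ha hτ (0 : E)
  simp only [Real.fourier_eq', inner_zero_right] at h
  simpa [integral_complex_ofReal, -Complex.ofReal_mul] using h

theorem integrable_gammaGaussian (ha : 0 < a) (hτ : 0 < τ) :
    Integrable (gammaGaussian a ν τ : E → ℝ) := by
  by_contra hcon
  have h := integral_gammaGaussian_right (E := E) (ν := ν) ha hτ
  rw [integral_undef hcon] at h
  exact (by positivity : 0 < τ ^ (ν - 1) * exp (-τ)).ne h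

theorem integrable_uncurry_gammaGaussian (ha : 0 < a) (hν : 0 < ν) :
    Integrable (Function.uncurry fun (τ : ℝ) (ξ : E) => gammaGaussian a ν τ ξ)
      ((volume.restrict (Ioi (0 : ℝ))).prod volume) := by
  have hmeas : Measurable (Function.uncurry fun (τ : ℝ) (ξ : E) => gammaGaussian a ν τ ξ) := by
    simp only [gammaGaussian, Function.uncurry_def]
    fun_prop
  rw [integrable_prod_iff hmeas.aestronglyMeasurable]
  refine ⟨?_, (Real.GammaIntegral_convergent hν).congr ?_⟩ <;>
    filter_upwards [ae_restrict_mem measurableSet_Ioi] with τ hτ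
  · exact integrable_gammaGaussian ha hτ
  · simp only [Function.uncurry_apply_pair, norm_of_nonneg (gammaGaussian_nonneg ha hτ _)]
    rw [integral_gammaGaussian_right ha hτ, mul_comm]

theorem integrable_gammaMixtureDensity (ha : 0 < a) (hν : 0 < ν) :
    Integrable (gammaMixtureDensity a ν : E → ℝ) :=
  (integrable_uncurry_gammaGaussian ha hν).integral_prod_right.congr
    (.of_forall fun ξ => integral_gammaGaussian_left ha hν ξ)

theorem fourier_gammaMixtureDensity (ha : 0 < a) (hν : 0 < ν) (r : E) :
    𝓕 (fun ξ : E => (gammaMixtureDensity a ν ξ : ℂ)) r =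
      ((∫ τ in Ioi (0 : ℝ), τ ^ (ν - 1) * exp (-τ) * exp (-(a * ‖r‖ ^ 2 / τ)) : ℝ) : ℂ) := by
  have hint : Integrable (Function.uncurry fun (τ : ℝ) (ξ : E) =>
      Complex.exp (↑(-2 * π * inner ℝ ξ r) * Complex.I) • (gammaGaussian a ν τ ξ : ℂ))
      ((volume.restrict (Ioi (0 : ℝ))).prod volume) :=
    (integrable_uncurry_gammaGaussian ha hν).ofReal.bdd_mul (c := 1)
      (Measurable.aestronglyMeasurable (by fun_prop))
      (.of_forall fun _ => (Complex.norm_exp_ofReal_mul_I _).le)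
  rw [← integral_complex_ofReal,
    setIntegral_congr_fun measurableSet_Ioi fun τ hτ => (fourier_gammaGaussian ha hτ r).symm]
  simp only [Real.fourier_eq']
  rw [integral_integral_swap hint]
  simp only [integral_smul, integral_complex_ofReal, integral_gammaGaussian_left ha hν]

end SpectralDensity

/-- The density on the frequency domain whose Fourier transform at `x - y` is
`maternKernel ν η ℓ x y`. -/
noncomputable def maternSpectralDensity {n : ℕ} (ν η ℓ : ℝ) (ξ : EuclideanSpace ℝ (Fin n)) : ℝ :=
  η / Gamma ν * gammaMixtureDensity (ν / (2 * ℓ ^ 2)) ν ξ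

theorem integrable_maternSpectralDensity {n : ℕ} {ν ℓ : ℝ} (hν : 0 < ν) (hℓ : 0 < ℓ) (η : ℝ) :
    Integrable (maternSpectralDensity ν η ℓ : EuclideanSpace ℝ (Fin n) → ℝ) :=
  (integrable_gammaMixtureDensity (by positivity) hν).const_mul _

theorem fourier_maternSpectralDensity {n : ℕ} {ν ℓ : ℝ} (hν : 0 < ν) (hℓ : 0 < ℓ) (η : ℝ)
    (x y : EuclideanSpace ℝ (Fin n)) :
    𝓕 (fun ξ => (maternSpectralDensity ν η ℓ ξ : ℂ)) (x - y) = (maternKernel ν η ℓ x y : ℂ) := by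
  rw [maternKernel_eq_integral hν hℓ, Complex.ofReal_mul,
    ← fourier_gammaMixtureDensity (by positivity) hν, Real.fourier_eq', Real.fourier_eq',
    ← integral_const_mul]
  congr with ξ
  simp only [maternSpectralDensity, smul_eq_mul, Complex.ofReal_mul]
  ring

end Matern

section Sobolev

open Set Function Metric Filter
open scoped Topology ENNReal ContDiff Convolution

/-- Bump functions at the origin with radii tending to `0`, whose normalisations form an
approximate identity. -/
noncomputable def shrinkingBump {E : Type*} [NormedAddCommGroup E] (n : ℕ) :
    ContDiffBump (0 : E) :=
  ⟨1 / (2 * (n + 1)), 1 / (n + 1), by positivity, by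
    apply one_div_lt_one_div_of_lt <;> linarith [(Nat.cast_nonneg n : (0 : ℝ) ≤ n)]⟩

theorem tendsto_shrinkingBump_rOut {E : Type*} [NormedAddCommGroup E] :
    Tendsto (fun n => (shrinkingBump (E := E) n).rOut) atTop (𝓝 0) :=
  tendsto_one_div_add_atTop_nhds_zero_nat

/-- A smooth real function with compact support. -/
structure IsTestFun {E : Type*} [NormedAddCommGroup E] [NormedSpace ℝ E] (f : E → ℝ) : Prop where
  contDiff : ContDiff ℝ ∞ f
  hasCompactSupport : HasCompactSupport f

theorem tsupport_fderiv_apply_subset_tsupport {E : Type*} [NormedAddCommGroup E] [NormedSpace ℝ E]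
    (f : E → ℝ) (v : E) : tsupport (fun x => fderiv ℝ f x v) ⊆ tsupport f :=
  closure_minimal (fun x hx => tsupport_fderiv_subset ℝ (subset_tsupport _ fun h0 => hx (by
    simp only [h0, zero_apply]))) (isClosed_tsupport f)

namespace IsTestFun

section NormedSpace

variable {E : Type*} [NormedAddCommGroup E] [NormedSpace ℝ E] {f g : E → ℝ}

theorem continuous (hf : IsTestFun f) : Continuous f := hf.contDiff.continuous

theorem differentiable (hf : IsTestFun f) : Differentiable ℝ f :=
  hf.contDiff.differentiable (by simp)

theorem exists_bound (hf : IsTestFun f) : ∃ C, ∀ x, ‖f x‖ ≤ C :=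
  hf.continuous.bounded_above_of_compact_support hf.hasCompactSupport

theorem mul_contDiff (hf : IsTestFun f) (hg : ContDiff ℝ ∞ g) : IsTestFun fun x => f x * g x :=
  ⟨hf.contDiff.mul hg, hf.hasCompactSupport.mul_right⟩

theorem fderiv_apply (hf : IsTestFun f) (v : E) : IsTestFun fun x => fderiv ℝ f x v :=
  ⟨(hf.contDiff.fderiv_right (by simp)).clm_apply contDiff_const,
    hf.hasCompactSupport.fderiv_apply ℝ v⟩

theorem fderiv_fderiv_comm (hf : IsTestFun f) (v w x : E) :
    fderiv ℝ (fun y => fderiv ℝ f y w) x v = fderiv ℝ (fun y => fderiv ℝ f y v) x w := by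
  have hdiff : DifferentiableAt ℝ (fderiv ℝ f) x :=
    (hf.contDiff.fderiv_right (m := ∞) (by simp)).differentiable (by simp) x
  have hflip : ∀ u, fderiv ℝ (fun y => fderiv ℝ f y u) x = (fderiv ℝ (fderiv ℝ f) x).flip u := by
    intro u
    rw [fderiv_clm_apply hdiff (differentiableAt_const u)]
    simp
  rw [hflip, hflip]
  exact (hf.contDiff.contDiffAt.isSymmSndFDerivAt (by simp; norm_cast)).eq v w

theorem comp_const_sub (hf : IsTestFun f) (x : E) : IsTestFun fun y => f (x - y) :=
  ⟨hf.contDiff.comp (contDiff_const.sub contDiff_id),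
    hf.hasCompactSupport.comp_homeomorph (Homeomorph.subLeft x)⟩

theorem fderiv_comp_const_sub (hf : IsTestFun f) (x y v : E) :
    fderiv ℝ (fun y => f (x - y)) y v = -fderiv ℝ f (x - y) v := by
  have hcomp : HasFDerivAt (fun y => f (x - y))
      ((fderiv ℝ f (x - y)).comp (-ContinuousLinearMap.id ℝ E)) y :=
    (hf.differentiable (x - y)).hasFDerivAt.comp y ((hasFDerivAt_id y).const_sub x)
  rw [hcomp.fderiv]
  simp

end NormedSpace

variable {E : Type*} [NormedAddCommGroup E] [InnerProductSpace ℝ E] [FiniteDimensional ℝ E]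
  [MeasurableSpace E] [BorelSpace E] {f ψ : E → ℝ}

theorem memLp (hf : IsTestFun f) (p : ℝ≥0∞) : MemLp f p volume :=
  hf.continuous.memLp_of_hasCompactSupport hf.hasCompactSupport

theorem integrable (hf : IsTestFun f) : Integrable f :=
  hf.continuous.integrable_of_hasCompactSupport hf.hasCompactSupport

theorem integrable_mul (hψ : IsTestFun ψ) (hf : LocallyIntegrable f) :
    Integrable fun x => f x * ψ x := by
  simpa [mul_comm] using
    hf.integrable_smul_left_of_hasCompactSupport hψ.continuous hψ.hasCompactSupport

end IsTestFun

variable {E : Type*} [NormedAddCommGroup E] [InnerProductSpace ℝ E] [FiniteDimensional ℝ E]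
  [MeasurableSpace E] [BorelSpace E]

/-- `h` is the weak derivative of `f` in the direction `v` on the open set `Ω`. -/
def HasWeakLineDeriv (Ω : Set E) (v : E) (f h : E → ℝ) : Prop :=
  ∀ ψ : E → ℝ, IsTestFun ψ → tsupport ψ ⊆ Ω → ∫ x, f x * fderiv ℝ ψ x v = -∫ x, h x * ψ x

namespace HasWeakLineDeriv

variable {Ω : Set E} {v w : E} {f g h k : E → ℝ}

theorem add (hf : LocallyIntegrable f) (hg : LocallyIntegrable g) (hh : LocallyIntegrable h)
    (hk : LocallyIntegrable k) (hfh : HasWeakLineDeriv Ω v f h) (hgk : HasWeakLineDeriv Ω v g k) :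
    HasWeakLineDeriv Ω v (fun x => f x + g x) (fun x => h x + k x) := by
  intro ψ hψ hs
  have hψv := hψ.fderiv_apply v
  simp only [add_mul]
  rw [integral_add (hψv.integrable_mul hf) (hψv.integrable_mul hg),
    integral_add (hψ.integrable_mul hh) (hψ.integrable_mul hk), hfh ψ hψ hs, hgk ψ hψ hs]
  ring

theorem const_mul (c : ℝ) (hfh : HasWeakLineDeriv Ω v f h) :
    HasWeakLineDeriv Ω v (fun x => c * f x) (fun x => c * h x) := by
  intro ψ hψ hs
  simp only [mul_assoc]
  rw [integral_const_mul, integral_const_mul, hfh ψ hψ hs, mul_neg]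

theorem const_smul_dir (c : ℝ) (hfh : HasWeakLineDeriv Ω v f h) :
    HasWeakLineDeriv Ω (c • v) f (fun x => c * h x) := by
  intro ψ hψ hs
  simp only [map_smul, smul_eq_mul, mul_assoc, mul_left_comm _ c]
  rw [integral_const_mul, integral_const_mul, hfh ψ hψ hs, mul_neg]

theorem add_dir (hf : LocallyIntegrable f) (hh : LocallyIntegrable h)
    (hk : LocallyIntegrable k) (hv : HasWeakLineDeriv Ω v f h) (hw : HasWeakLineDeriv Ω w f k) :
    HasWeakLineDeriv Ω (v + w) f (fun x => h x + k x) := by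
  intro ψ hψ hs
  simp only [map_add, mul_add, add_mul]
  rw [integral_add ((hψ.fderiv_apply v).integrable_mul hf) ((hψ.fderiv_apply w).integrable_mul hf),
    integral_add (hψ.integrable_mul hh) (hψ.integrable_mul hk), hv ψ hψ hs, hw ψ hψ hs]
  ring

theorem zero_dir : HasWeakLineDeriv Ω 0 f (fun _ => 0) := by
  intro ψ _ _
  simp

theorem sum_smul_dir {ι : Type*} (t : Finset ι) {w : ι → E} {h : ι → E → ℝ} (c : ι → ℝ)
    (hf : LocallyIntegrable f) (hh : ∀ i, LocallyIntegrable (h i))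
    (hw : ∀ i, HasWeakLineDeriv Ω (w i) f (h i)) :
    HasWeakLineDeriv Ω (∑ i ∈ t, c i • w i) f (fun x => ∑ i ∈ t, c i * h i x) := by
  classical
  induction t using Finset.induction_on with
  | empty => simpa using HasWeakLineDeriv.zero_dir
  | insert i t hi ih =>
    simp only [Finset.sum_insert hi]
    exact ((hw i).const_smul_dir (c i)).add_dir hf ((hh i).smul (c i))
      (locallyIntegrable_finsetSum t fun j _ => (hh j).smul (c j)) ih

theorem comm {hv hw hwv : E → ℝ} (hfv : HasWeakLineDeriv Ω v f hv)
    (hfw : HasWeakLineDeriv Ω w f hw) (hfwv : HasWeakLineDeriv Ω v hw hwv) :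
    HasWeakLineDeriv Ω w hv hwv := by
  intro ψ hψ hs
  have hv_test := hfv _ (hψ.fderiv_apply w) ((tsupport_fderiv_apply_subset_tsupport ψ w).trans hs)
  have hw_test := hfw _ (hψ.fderiv_apply v) ((tsupport_fderiv_apply_subset_tsupport ψ v).trans hs)
  have hwv_test := hfwv ψ hψ hs
  simp only [hψ.fderiv_fderiv_comm v w] at hv_test
  linarith

end HasWeakLineDeriv

/-- Convolution of a function with a scalar kernel. -/
noncomputable def mollify (κ f : E → ℝ) (x : E) : ℝ := ∫ y, κ (x - y) * f y

theorem mollify_eq_convolution (κ f : E → ℝ) :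
    mollify κ f = κ ⋆[ContinuousLinearMap.lsmul ℝ ℝ, volume] f := by
  funext x
  rw [convolution_eq_swap]
  rfl

theorem contDiff_mollify {κ f : E → ℝ} (hκ : IsTestFun κ) (hf : LocallyIntegrable f) :
    ContDiff ℝ ∞ (mollify κ f) := by
  rw [mollify_eq_convolution]
  exact hκ.hasCompactSupport.contDiff_convolution_left _ hκ.contDiff hf

theorem fderiv_mollify_apply {κ f : E → ℝ} (hκ : IsTestFun κ) (hf : LocallyIntegrable f)
    (x v : E) : fderiv ℝ (mollify κ f) x v = ∫ y, fderiv ℝ κ (x - y) v * f y := by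
  have hcont : Continuous (fderiv ℝ κ) := hκ.contDiff.continuous_fderiv (by simp)
  rw [mollify_eq_convolution, (hκ.hasCompactSupport.hasFDerivAt_convolution_left _
    (hκ.contDiff.of_le (by norm_cast)) hf x).fderiv, convolution_eq_swap,
    ContinuousLinearMap.integral_apply
      ((hκ.hasCompactSupport.fderiv ℝ).convolutionExists_left _ hcont hf x).integrable_swap]
  rfl

theorem HasWeakLineDeriv.fderiv_mollify_apply {Ω : Set E} {v : E} {κ f h : E → ℝ}
    (hw : HasWeakLineDeriv Ω v f h) (hκ : IsTestFun κ) (hf : LocallyIntegrable f) {x : E}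
    (hx : tsupport (fun y => κ (x - y)) ⊆ Ω) :
    fderiv ℝ (mollify κ f) x v = mollify κ h x := by
  have htest := hw _ (hκ.comp_const_sub x) hx
  simp only [hκ.fderiv_comp_const_sub x _ v, mul_neg, integral_neg, neg_inj] at htest
  rw [_root_.fderiv_mollify_apply hκ hf, mollify]
  simpa only [mul_comm] using htest

theorem ae_norm_le_of_memLp_top {b : E → ℝ} (hb : MemLp b ∞ volume) :
    ∀ᵐ x, ‖b x‖ ≤ (eLpNorm b ∞ volume).toReal := by
  filter_upwards [ae_le_eLpNormEssSup (f := b) (μ := volume)] with x hx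
  rw [eLpNorm_exponent_top, ← toReal_enorm]
  exact ENNReal.toReal_mono (by simpa using hb.2.ne) hx

theorem integral_mul_mollify {κ b f : E → ℝ} (hκ : Integrable κ) (hκe : ∀ x, κ (-x) = κ x)
    (hb : MemLp b ∞ volume) (hf : Integrable f) :
    ∫ x, b x * mollify κ f x = ∫ x, mollify κ b x * f x := by
  have hconv := hf.convolution_integrand (ContinuousLinearMap.lsmul ℝ ℝ) (μ := volume) hκ
  have hint : Integrable (fun p : E × E => b p.1 * (κ (p.1 - p.2) * f p.2))
      (volume.prod volume) := by
    refine Integrable.bdd_mul (c := (eLpNorm b ∞ volume).toReal) ?_ hb.1.comp_fst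
      (Measure.quasiMeasurePreserving_fst.ae (ae_norm_le_of_memLp_top hb))
    exact hconv.congr (Eventually.of_forall fun p => by simp [mul_comm])
  simp only [mollify, ← integral_const_mul, ← integral_mul_const]
  rw [integral_integral_swap hint]
  refine integral_congr_ae (Eventually.of_forall fun y => ?_)
  refine integral_congr_ae (Eventually.of_forall fun x => ?_)
  simp only
  rw [← hκe (x - y), neg_sub]
  ring

theorem norm_mollify_le {κ b : E → ℝ} (hκ : Integrable κ) (hκ0 : ∀ x, 0 ≤ κ x)
    (hκ1 : ∫ x, κ x = 1) {C : ℝ} (hb : ∀ᵐ x, ‖b x‖ ≤ C) (x : E) :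
    ‖mollify κ b x‖ ≤ C := by
  have hmean : ∫ y, κ (x - y) * C = C := by
    rw [integral_mul_const, integral_sub_left_eq_self κ volume x, hκ1, one_mul]
  rw [mollify, ← hmean]
  refine norm_integral_le_of_norm_le ((hκ.comp_sub_left x).mul_const C) ?_
  filter_upwards [hb] with y hy
  rw [norm_mul, Real.norm_of_nonneg (hκ0 _)]
  exact mul_le_mul_of_nonneg_left hy (hκ0 _)

theorem isTestFun_normed {c : E} (φ : ContDiffBump c) : IsTestFun (φ.normed volume) :=
  ⟨φ.contDiff_normed, φ.hasCompactSupport_normed⟩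

theorem ae_tendsto_mollify_shrinkingBump {b : E → ℝ} (hb : LocallyIntegrable b) :
    ∀ᵐ x, Tendsto (fun n => mollify ((shrinkingBump (E := E) n).normed volume) b x) atTop
      (𝓝 (b x)) := by
  simp only [mollify_eq_convolution]
  refine ContDiffBump.ae_convolution_tendsto_right_of_locallyIntegrable (K := 2)
    tendsto_shrinkingBump_rOut (Eventually.of_forall fun n => ?_) hb
  simp only [shrinkingBump]
  field_simp
  exact le_rfl

theorem tendsto_integral_mul_mollify {b f : E → ℝ} (hb : MemLp b ∞ volume)
    (hf : Integrable f) :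
    Tendsto (fun n => ∫ x, b x * mollify ((shrinkingBump (E := E) n).normed volume) f x) atTop
      (𝓝 (∫ x, b x * f x)) := by
  have hbl : LocallyIntegrable b := hb.locallyIntegrable le_top
  have hswap : ∀ n, ∫ x, b x * mollify ((shrinkingBump (E := E) n).normed volume) f x =
      ∫ x, mollify ((shrinkingBump (E := E) n).normed volume) b x * f x := fun n =>
    integral_mul_mollify (shrinkingBump n).integrable_normed (shrinkingBump n).normed_neg hb hf
  simp only [hswap]
  refine tendsto_integral_of_dominated_convergence
    (fun x => (eLpNorm b ∞ volume).toReal * ‖f x‖) (fun n => ?_) (hf.norm.const_mul _)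
    (fun n => Eventually.of_forall fun x => ?_) ?_
  · exact (contDiff_mollify (isTestFun_normed _) hbl).continuous.aestronglyMeasurable.mul hf.1
  · rw [norm_mul]
    exact mul_le_mul_of_nonneg_right (norm_mollify_le (shrinkingBump n).integrable_normed
      (fun x => (shrinkingBump n).nonneg_normed x) (shrinkingBump n).integral_normed
      (ae_norm_le_of_memLp_top hb) x) (norm_nonneg _)
  · filter_upwards [ae_tendsto_mollify_shrinkingBump hbl] with x hx
    exact hx.mul_const _

theorem tsupport_normed_const_sub_subset_cthickening {φ : ContDiffBump (0 : E)} {δ : ℝ}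
    (hφ : φ.rOut ≤ δ) {K : Set E} {x : E} (hx : x ∈ K) :
    tsupport (fun y => φ.normed volume (x - y)) ⊆ cthickening δ K := by
  refine closure_minimal (fun y hy => ?_) isClosed_cthickening
  have hy' : x - y ∈ support (φ.normed volume) := hy
  rw [φ.support_normed_eq, mem_ball_zero_iff] at hy'
  refine mem_cthickening_of_dist_le y x δ _ hx ?_
  rw [dist_comm, dist_eq_norm]
  exact hy'.le.trans hφ

namespace HasWeakLineDeriv

variable {Ω : Set E} {v : E} {f f' a a' : E → ℝ}

theorem fderiv_mul_mollify_apply (hf : LocallyIntegrable f) (hff' : HasWeakLineDeriv Ω v f f')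
    {ψ : E → ℝ} (hψ : IsTestFun ψ) {φ : ContDiffBump (0 : E)} {δ : ℝ} (hφ : φ.rOut ≤ δ)
    (hδ : cthickening δ (tsupport ψ) ⊆ Ω) (x : E) :
    fderiv ℝ (fun x => ψ x * mollify (φ.normed volume) f x) x v =
      ψ x * mollify (φ.normed volume) f' x + fderiv ℝ ψ x v * mollify (φ.normed volume) f x := by
  have hm := contDiff_mollify (isTestFun_normed φ) hf
  rw [fderiv_fun_mul (hψ.differentiable x) (hm.differentiable (by simp) x)]
  simp only [add_apply, smul_apply, smul_eq_mul]
  by_cases hx : x ∈ tsupport ψ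
  · rw [hff'.fderiv_mollify_apply (isTestFun_normed φ) hf
      ((tsupport_normed_const_sub_subset_cthickening hφ hx).trans hδ)]
    ring
  · rw [image_eq_zero_of_notMem_tsupport hx]
    ring

theorem integral_add_integral_mollify (hf : LocallyIntegrable f) (hf' : LocallyIntegrable f')
    (ha : LocallyIntegrable a) (hff' : HasWeakLineDeriv Ω v f f')
    (haa' : HasWeakLineDeriv Ω v a a') {ψ : E → ℝ} (hψ : IsTestFun ψ) {φ : ContDiffBump (0 : E)}
    {δ : ℝ} (hφ : φ.rOut ≤ δ) (hδ : cthickening δ (tsupport ψ) ⊆ Ω) :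
    (∫ x, a x * ψ x * mollify (φ.normed volume) f' x) +
      (∫ x, a x * fderiv ℝ ψ x v * mollify (φ.normed volume) f x) =
      -∫ x, a' x * ψ x * mollify (φ.normed volume) f x := by
  have hκ := isTestFun_normed φ
  have htest := haa' (fun x => ψ x * mollify (φ.normed volume) f x)
    (hψ.mul_contDiff (contDiff_mollify hκ hf))
    (tsupport_mul_subset_left.trans ((self_subset_cthickening _).trans hδ))
  simp only [hff'.fderiv_mul_mollify_apply hf hψ hφ hδ, mul_add] at htest
  rw [integral_add ((hψ.mul_contDiff (contDiff_mollify hκ hf')).integrable_mul ha)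
    (((hψ.fderiv_apply v).mul_contDiff (contDiff_mollify hκ hf)).integrable_mul ha)] at htest
  simpa only [mul_assoc] using htest

theorem mul (hΩ : IsOpen Ω) (hf : Integrable f) (hf' : Integrable f') (ha : MemLp a ∞ volume)
    (ha' : MemLp a' ∞ volume) (hff' : HasWeakLineDeriv Ω v f f')
    (haa' : HasWeakLineDeriv Ω v a a') :
    HasWeakLineDeriv Ω v (fun x => f x * a x) (fun x => f' x * a x + f x * a' x) := by
  intro ψ hψ hs
  have haψ : MemLp (fun x => a x * ψ x) ∞ volume := (hψ.memLp ∞).mul ha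
  have ha'ψ : MemLp (fun x => a' x * ψ x) ∞ volume := (hψ.memLp ∞).mul ha'
  have haψv : MemLp (fun x => a x * fderiv ℝ ψ x v) ∞ volume :=
    ((hψ.fderiv_apply v).memLp ∞).mul ha
  obtain ⟨δ, hδ, hδΩ⟩ := hψ.hasCompactSupport.exists_cthickening_subset_open hΩ hs
  have hmollified := (tendsto_shrinkingBump_rOut (E := E)).eventually_le_const hδ |>.mono
    fun n hn => integral_add_integral_mollify hf.locallyIntegrable hf'.locallyIntegrable
      (ha.locallyIntegrable le_top) hff' haa' hψ hn hδΩ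
  have hlim := tendsto_nhds_unique
    (((tendsto_integral_mul_mollify haψ hf').add
      (tendsto_integral_mul_mollify haψv hf)).congr' hmollified)
    (tendsto_integral_mul_mollify ha'ψ hf).neg
  have hint : Integrable fun x => a x * ψ x * f' x :=
    hf'.bdd_mul haψ.1 (ae_norm_le_of_memLp_top haψ)
  have hint' : Integrable fun x => a' x * ψ x * f x :=
    hf.bdd_mul ha'ψ.1 (ae_norm_le_of_memLp_top ha'ψ)
  calc ∫ x, f x * a x * fderiv ℝ ψ x v
      = ∫ x, a x * fderiv ℝ ψ x v * f x := integral_congr_ae (.of_forall fun x => by ring)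
    _ = -((∫ x, a x * ψ x * f' x) + ∫ x, a' x * ψ x * f x) := by linarith
    _ = -∫ x, (f' x * a x + f x * a' x) * ψ x := by
      rw [← integral_add hint hint']
      exact congrArg _ (integral_congr_ae (.of_forall fun x => by ring))

end HasWeakLineDeriv

/-- Functions vanishing off `K` whose weak derivatives on `Ω` up to order `n` are `p`-integrable
and can be chosen to vanish off `K`. -/
def SobolevOn (p : ℝ≥0∞) (K Ω : Set E) : ℕ → (E → ℝ) → Prop
  | 0, f => MemLp f p volume ∧ support f ⊆ K
  | n + 1, f => (MemLp f p volume ∧ support f ⊆ K) ∧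
      ∀ v, ∃ h, HasWeakLineDeriv Ω v f h ∧ SobolevOn p K Ω n h

namespace SobolevOn

variable {p : ℝ≥0∞} {K Ω : Set E}

theorem memLp : ∀ {n : ℕ} {f : E → ℝ}, SobolevOn p K Ω n f → MemLp f p volume
  | 0, _, h => h.1
  | _ + 1, _, h => h.1.1

theorem support_subset : ∀ {n : ℕ} {f : E → ℝ}, SobolevOn p K Ω n f → support f ⊆ K
  | 0, _, h => h.2
  | _ + 1, _, h => h.1.2

theorem of_succ : ∀ {n : ℕ} {f : E → ℝ}, SobolevOn p K Ω (n + 1) f → SobolevOn p K Ω n f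
  | 0, _, h => h.1
  | _ + 1, _, h => ⟨h.1, fun v => let ⟨g, hg, hg'⟩ := h.2 v; ⟨g, hg, hg'.of_succ⟩⟩

theorem of_le {n m : ℕ} (hnm : n ≤ m) {f : E → ℝ} (h : SobolevOn p K Ω m f) :
    SobolevOn p K Ω n f := by
  induction hnm with
  | refl => exact h
  | step _ ih => exact ih h.of_succ

theorem zero : ∀ {n : ℕ}, SobolevOn p K Ω n (fun _ => (0 : ℝ))
  | 0 => ⟨MemLp.zero, by simp⟩
  | n + 1 => ⟨⟨MemLp.zero, by simp⟩, fun v => ⟨fun _ => 0, fun ψ _ _ => by simp, zero⟩⟩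

theorem add (hp : 1 ≤ p) : ∀ {n : ℕ} {f g : E → ℝ}, SobolevOn p K Ω n f → SobolevOn p K Ω n g →
    SobolevOn p K Ω n (fun x => f x + g x)
  | 0, _, _, hf, hg => ⟨hf.1.add hg.1, (support_add _ _).trans (union_subset hf.2 hg.2)⟩
  | n + 1, f, g, hf, hg => by
      refine ⟨⟨hf.1.1.add hg.1.1, (support_add _ _).trans (union_subset hf.1.2 hg.1.2)⟩,
        fun v => ?_⟩
      obtain ⟨h, hfh, hh⟩ := hf.2 v
      obtain ⟨k, hgk, hk⟩ := hg.2 v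
      exact ⟨_, hfh.add (hf.1.1.locallyIntegrable hp) (hg.1.1.locallyIntegrable hp)
        (hh.memLp.locallyIntegrable hp) (hk.memLp.locallyIntegrable hp) hgk, hh.add hp hk⟩

theorem const_mul (c : ℝ) : ∀ {n : ℕ} {f : E → ℝ}, SobolevOn p K Ω n f →
    SobolevOn p K Ω n (fun x => c * f x)
  | 0, _, hf => ⟨hf.1.const_mul c, fun _ hx => hf.2 (right_ne_zero_of_mul hx)⟩
  | _ + 1, _, hf => ⟨⟨hf.1.1.const_mul c, fun _ hx => hf.1.2 (right_ne_zero_of_mul hx)⟩,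
      fun v => let ⟨_, hfh, hh⟩ := hf.2 v; ⟨_, hfh.const_mul c, hh.const_mul c⟩⟩

theorem sum (hp : 1 ≤ p) {n : ℕ} {ι : Type*} (s : Finset ι) {f : ι → E → ℝ}
    (hf : ∀ i ∈ s, SobolevOn p K Ω n (f i)) : SobolevOn p K Ω n (fun x => ∑ i ∈ s, f i x) := by
  classical
  induction s using Finset.induction_on with
  | empty => simpa using zero
  | insert i s hi ih =>
    simp only [Finset.sum_insert hi]
    exact (hf i (Finset.mem_insert_self i s)).add hp
      (ih fun j hj => hf j (Finset.mem_insert_of_mem hj))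

theorem succ_of_orthonormalBasis {ι : Type*} [Fintype ι] (b : OrthonormalBasis ι ℝ E)
    (hp : 1 ≤ p) {n : ℕ} {f : E → ℝ} {h : ι → E → ℝ} (hf : MemLp f p volume)
    (hfK : support f ⊆ K) (hfh : ∀ i, HasWeakLineDeriv Ω (b i) f (h i))
    (hh : ∀ i, SobolevOn p K Ω n (h i)) : SobolevOn p K Ω (n + 1) f := by
  refine ⟨⟨hf, hfK⟩, fun v => ⟨fun x => ∑ i, b.repr v i * h i x, ?_,
    SobolevOn.sum hp _ fun i _ => (hh i).const_mul _⟩⟩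
  have hsum := HasWeakLineDeriv.sum_smul_dir Finset.univ (fun i => b.repr v i)
    (hf.locallyIntegrable hp) (fun i => (hh i).memLp.locallyIntegrable hp) hfh
  rwa [b.sum_repr v] at hsum

theorem integrable (hp : 1 ≤ p) (hK : Bornology.IsBounded K) {n : ℕ} {f : E → ℝ}
    (hf : SobolevOn p K Ω n f) : Integrable f := by
  have hsub : support f ⊆ closure K := hf.support_subset.trans subset_closure
  rw [← integrableOn_iff_integrable_of_support_subset hsub]
  have : IsFiniteMeasure (volume.restrict (closure K)) :=
    ⟨by simpa using hK.isCompact_closure.measure_lt_top⟩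
  exact (hf.memLp.restrict _).integrable hp

theorem mul (hp : 1 ≤ p) (hΩ : IsOpen Ω) (hK : Bornology.IsBounded K) :
    ∀ {n : ℕ} {f a : E → ℝ}, SobolevOn p K Ω n f → SobolevOn ∞ K Ω n a →
    SobolevOn p K Ω n (fun x => f x * a x)
  | 0, _, _, hf, ha => ⟨ha.1.mul hf.1, fun _ hx => hf.2 (left_ne_zero_of_mul hx)⟩
  | n + 1, f, a, hf, ha => by
      refine ⟨⟨ha.1.1.mul hf.1.1, fun x hx => hf.1.2 (left_ne_zero_of_mul hx)⟩, fun v => ?_⟩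
      obtain ⟨f', hff', hf'⟩ := hf.2 v
      obtain ⟨a', haa', ha'⟩ := ha.2 v
      exact ⟨_, HasWeakLineDeriv.mul hΩ (hf.integrable hp hK) (hf'.integrable hp hK) ha.memLp
        ha'.memLp hff' haa', (hf'.mul hp hΩ hK ha.of_succ).add hp (hf.of_succ.mul hp hΩ hK ha')⟩

end SobolevOn

end Sobolev

section Partials

open Set Function Metric Filter
open scoped Topology ENNReal ContDiff

theorem abs_add_smul_sub_le_of_hasLineDerivAt {E : Type*} [NormedAddCommGroup E] [NormedSpace ℝ E]
    {f : E → ℝ} {f' : ℝ → ℝ} {y v : E} {c C : ℝ}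
    (hd : ∀ t ∈ Icc (0 : ℝ) 1, HasLineDerivAt ℝ f (f' t) (y + (t * c) • v) v)
    (hC : ∀ t ∈ Icc (0 : ℝ) 1, |f' t| ≤ C) : |f (y + c • v) - f y| ≤ C * |c| := by
  have hder : ∀ t ∈ Icc (0 : ℝ) 1,
      HasDerivWithinAt (fun t : ℝ => f (y + (t * c) • v)) (f' t * c) (Icc 0 1) t := by
    intro t ht
    have hinner : HasDerivAt (fun t' : ℝ => (t' - t) * c) c t := by
      simpa using ((hasDerivAt_id t).sub_const t).mul_const c
    have hcomp := HasDerivAt.comp_of_eq (h₂ := fun τ : ℝ => f (y + (t * c) • v + τ • v)) t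
      (hd t ht) hinner (by simp)
    refine (hcomp.congr_of_eventuallyEq (.of_forall fun t' => ?_)).hasDerivWithinAt
    simp only [comp_apply]
    congr 1
    module
  have hmv := norm_image_sub_le_of_norm_deriv_le_segment_01' hder (C := C * |c|) fun t ht => by
    rw [norm_mul]
    exact mul_le_mul_of_nonneg_right (hC t ⟨ht.1, ht.2.le⟩) (norm_nonneg _)
  simpa using hmv

section LineDeriv

variable {E : Type*} [NormedAddCommGroup E] [InnerProductSpace ℝ E] [FiniteDimensional ℝ E]
  [MeasurableSpace E] [BorelSpace E] {U : Set E} {v : E} {f f' : E → ℝ}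

omit [FiniteDimensional ℝ E] in
theorem measurable_indicator_of_hasLineDerivAt (hU : IsOpen U) (hf : Measurable (U.indicator f))
    (hd : ∀ u ∈ U, HasLineDerivAt ℝ f (f' u) u v) : Measurable (U.indicator f') := by
  have hstep : Tendsto (fun n : ℕ => (1 / (n + 1) : ℝ)) atTop (𝓝[≠] 0) :=
    tendsto_nhdsWithin_iff.2 ⟨tendsto_one_div_add_atTop_nhds_zero_nat,
      .of_forall fun n => by simp only [mem_compl_iff, mem_singleton_iff]; positivity⟩
  have hslope : ∀ u, Tendsto (fun n : ℕ => U.indicator (fun x => (n + 1 : ℝ) *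
      (U.indicator f (x + (1 / (n + 1) : ℝ) • v) - U.indicator f x)) u) atTop
      (𝓝 (U.indicator f' u)) := by
    intro u
    by_cases hu : u ∈ U
    · simp only [indicator_of_mem hu]
      have hindicator := (hd u hu).congr_of_eventuallyEq
        ((eqOn_indicator (s := U) (f := f)).eventuallyEq_of_mem (hU.mem_nhds hu))
      refine (hindicator.tendsto_slope_zero.comp hstep).congr fun n => ?_
      simp [indicator_of_mem hu]
    · simp [indicator_of_notMem hu]
  refine measurable_of_tendsto_metrizable (fun n => ?_) (tendsto_pi_nhds.2 hslope)
  exact (((hf.comp (measurable_add_const _)).sub hf).const_mul _).indicator hU.measurableSet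

theorem hasWeakLineDeriv_of_hasLineDerivAt (hU : IsOpen U)
    (hd : ∀ u ∈ U, HasLineDerivAt ℝ f (f' u) u v)
    (hf : LocallyIntegrable (U.indicator f)) (hf' : LocallyIntegrable (U.indicator f')) :
    HasWeakLineDeriv U v (U.indicator f) (U.indicator f') := by
  intro ψ hψ hs
  refine integral_bilinear_hasLineDerivAt_right_eq_neg_left_of_integrable
    (B := ContinuousLinearMap.mul ℝ ℝ) (v := v) (hψ.integrable_mul hf')
    ((hψ.fderiv_apply v).integrable_mul hf) (hψ.integrable_mul hf) (fun x hx => ?_)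
    (fun x _ => (hψ.differentiable x).hasFDerivAt.hasLineDerivAt v)
  rw [indicator_of_mem (hs hx)]
  exact (hd x (hs hx)).congr_of_eventuallyEq
    (eqOn_indicator.eventuallyEq_of_mem (hU.mem_nhds (hs hx)))

theorem memLp_top_indicator (hm : Measurable (U.indicator f)) {C : ℝ} (hC : ∀ u ∈ U, |f u| ≤ C) :
    MemLp (U.indicator f) ∞ volume := by
  refine memLp_top_of_bound hm.aestronglyMeasurable |C| (.of_forall fun u => ?_)
  by_cases hu : u ∈ U
  · rw [indicator_of_mem hu]
    exact (hC u hu).trans (le_abs_self C)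
  · simp [indicator_of_notMem hu]

end LineDeriv

variable {s : ℕ} {U : Set (EuclideanSpace ℝ (Fin s))}

theorem euclideanSpace_sum_smul_single (h : EuclideanSpace ℝ (Fin s)) :
    ∑ i, h i • EuclideanSpace.single i (1 : ℝ) = h := by
  simpa using (EuclideanSpace.basisFun (Fin s) ℝ).sum_repr h

theorem euclideanSpace_norm_le_norm_of_abs_le {v w : EuclideanSpace ℝ (Fin s)}
    (h : ∀ i, |v i| ≤ |w i|) : ‖v‖ ≤ ‖w‖ := by
  rw [EuclideanSpace.norm_eq, EuclideanSpace.norm_eq]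
  exact Real.sqrt_le_sqrt (Finset.sum_le_sum fun i _ =>
    pow_le_pow_left₀ (norm_nonneg _) (h i) 2)

theorem abs_sum_smul_single_add_smul_single_apply_le {A : Finset (Fin s)} {i : Fin s} (hi : i ∉ A)
    (h : EuclideanSpace ℝ (Fin s)) {t : ℝ} (ht : t ∈ Icc (0 : ℝ) 1) (j : Fin s) :
    |((∑ k ∈ A, h k • EuclideanSpace.single k (1 : ℝ)) +
      (t * h i) • EuclideanSpace.single i (1 : ℝ)) j| ≤ |h j| := by
  have hsum : (∑ k ∈ A, h k • EuclideanSpace.single k (1 : ℝ)) j = if j ∈ A then h j else 0 := by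
    simp [Pi.single_apply]
  simp only [PiLp.add_apply, PiLp.smul_apply, PiLp.single_apply, hsum, smul_eq_mul]
  by_cases hj : j = i
  · subst hj
    simp only [hi, if_false, zero_add, if_true, mul_one, abs_mul, abs_of_nonneg ht.1]
    exact mul_le_of_le_one_left (abs_nonneg _) ht.2
  · simp only [hj, if_false, mul_zero, add_zero]
    split_ifs <;> simp

theorem abs_add_sum_sub_le_of_hasLineDerivAt {f : EuclideanSpace ℝ (Fin s) → ℝ}
    {P : Fin s → EuclideanSpace ℝ (Fin s) → ℝ} {C : ℝ} {u h : EuclideanSpace ℝ (Fin s)}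
    (hbox : ∀ w : EuclideanSpace ℝ (Fin s), (∀ i, |w i| ≤ |h i|) → u + w ∈ U)
    (hd : ∀ i, ∀ u ∈ U, HasLineDerivAt ℝ f (P i u) u (EuclideanSpace.single i 1))
    (hC : ∀ i, ∀ u ∈ U, |P i u| ≤ C) (A : Finset (Fin s)) :
    |f (u + ∑ i ∈ A, h i • EuclideanSpace.single i (1 : ℝ)) - f u| ≤ ∑ i ∈ A, C * |h i| := by
  induction A using Finset.induction_on with
  | empty => simp
  | insert i A hi ih =>
    rw [Finset.sum_insert hi, Finset.sum_insert hi, add_comm (h i • _), ← add_assoc]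
    set y := ∑ k ∈ A, h k • EuclideanSpace.single k (1 : ℝ)
    have hmem : ∀ t ∈ Icc (0 : ℝ) 1,
        u + y + (t * h i) • EuclideanSpace.single i (1 : ℝ) ∈ U := fun t ht => by
      rw [add_assoc]
      exact hbox _ (abs_sum_smul_single_add_smul_single_apply_le hi h ht)
    calc |f (u + y + h i • EuclideanSpace.single i 1) - f u|
        ≤ |f (u + y + h i • EuclideanSpace.single i 1) - f (u + y)| + |f (u + y) - f u| :=
          abs_sub_le _ _ _
      _ ≤ C * |h i| + ∑ k ∈ A, C * |h k| :=
          add_le_add (abs_add_smul_sub_le_of_hasLineDerivAt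
            (fun t ht => hd i _ (hmem t ht)) (fun t ht => hC i _ (hmem t ht))) ih

theorem continuousOn_of_bounded_partials (hU : IsOpen U) {f : EuclideanSpace ℝ (Fin s) → ℝ}
    {P : Fin s → EuclideanSpace ℝ (Fin s) → ℝ} {C : ℝ}
    (hd : ∀ i, ∀ u ∈ U, HasLineDerivAt ℝ f (P i u) u (EuclideanSpace.single i 1))
    (hC : ∀ i, ∀ u ∈ U, |P i u| ≤ C) : ContinuousOn f U := by
  intro u hu
  refine ContinuousAt.continuousWithinAt (tendsto_iff_norm_sub_tendsto_zero.2 ?_)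
  obtain ⟨r, hr, hrU⟩ := Metric.isOpen_iff.1 hU u hu
  have hlim : Tendsto (fun x : EuclideanSpace ℝ (Fin s) => ∑ i, C * |(x - u) i|) (𝓝 u) (𝓝 0) := by
    have hcont : Continuous fun x : EuclideanSpace ℝ (Fin s) => ∑ i, C * |(x - u) i| := by
      fun_prop
    simpa using hcont.tendsto u
  refine squeeze_zero' (.of_forall fun _ => norm_nonneg _) ?_ hlim
  filter_upwards [ball_mem_nhds u hr] with x hx
  have hbox : ∀ w : EuclideanSpace ℝ (Fin s), (∀ i, |w i| ≤ |(x - u) i|) → u + w ∈ U :=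
    fun w hw => hrU (by
      rw [mem_ball_iff_norm, add_sub_cancel_left]
      exact (euclideanSpace_norm_le_norm_of_abs_le hw).trans_lt (mem_ball_iff_norm.1 hx))
  have hbound := abs_add_sum_sub_le_of_hasLineDerivAt hbox hd hC Finset.univ
  rwa [euclideanSpace_sum_smul_single, add_sub_cancel] at hbound

theorem exists_eq_add_single {α : Fin s → ℕ} (hα : α ≠ 0) :
    ∃ (i : Fin s) (β : Fin s → ℕ), α = β + Pi.single i 1 ∧ ∀ j < i, β j = 0 := by
  obtain ⟨i, hi⟩ := (Set.toFinite {i | α i ≠ 0}).exists_minimal (Function.ne_iff.1 hα)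
  have hlt : ∀ j < i, α j = 0 := fun j hj => by_contra fun hne => hj.not_ge (hi.2 hne hj.le)
  refine ⟨i, α - Pi.single i 1, (tsub_add_cancel_of_le fun j => ?_).symm,
    fun j hj => by simp [hlt j hj]⟩
  rcases eq_or_ne j i with rfl | hj
  · simpa using Nat.one_le_iff_ne_zero.2 hi.1
  · simp [hj]

theorem sum_add_single (α : Fin s → ℕ) (i : Fin s) :
    ∑ j, (α + Pi.single i 1 : Fin s → ℕ) j = ∑ j, α j + 1 := by
  simp [Finset.sum_add_distrib]

/-- The family `D α` of iterated partial derivatives in `HasBoundedPartials`. -/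
structure IsBoundedPartialFamily (U : Set (EuclideanSpace ℝ (Fin s))) (l : ℕ)
    (D : (Fin s → ℕ) → EuclideanSpace ℝ (Fin s) → ℝ) : Prop where
  hasLineDerivAt : ∀ (α : Fin s → ℕ) (i : Fin s), ∑ j, α j < l → (∀ j < i, α j = 0) →
    ∀ u ∈ U, HasLineDerivAt ℝ (D α) (D (α + Pi.single i 1) u) u (EuclideanSpace.single i 1)
  bounded : ∀ α : Fin s → ℕ, ∑ j, α j ≤ l → ∃ C : ℝ, ∀ u ∈ U, |D α u| ≤ C

namespace IsBoundedPartialFamily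

variable {l : ℕ} {D : (Fin s → ℕ) → EuclideanSpace ℝ (Fin s) → ℝ}

theorem hasLineDerivAt_zero (hD : IsBoundedPartialFamily U l D) (hl : 1 ≤ l) (i : Fin s) :
    ∀ u ∈ U, HasLineDerivAt ℝ (D 0) (D (Pi.single i 1) u) u (EuclideanSpace.single i 1) := by
  have hpos : ∑ j, (0 : Fin s → ℕ) j < l := by simpa using Nat.lt_of_succ_le hl
  simpa using hD.hasLineDerivAt 0 i hpos fun _ _ => rfl

theorem continuousOn_zero (hD : IsBoundedPartialFamily U l D) (hU : IsOpen U) (hl : 1 ≤ l) :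
    ContinuousOn (D 0) U := by
  choose C hC using fun i : Fin s => hD.bounded (Pi.single i 1) (by simpa using hl)
  refine continuousOn_of_bounded_partials hU (C := ∑ i, |C i|) (hD.hasLineDerivAt_zero hl)
    fun i u hu => ?_
  exact (hC i u hu).trans ((le_abs_self _).trans
    (Finset.single_le_sum (f := fun i => |C i|) (fun _ _ => abs_nonneg _) (Finset.mem_univ i)))

theorem measurable_indicator (hD : IsBoundedPartialFamily U l D) (hU : IsOpen U) (hl : 1 ≤ l)
    {n : ℕ} (hn : n ≤ l) {α : Fin s → ℕ} (hα : ∑ j, α j = n) : Measurable (U.indicator (D α)) := by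
  classical
  induction n generalizing α with
  | zero =>
    have hα0 : α = 0 := funext fun j => (Finset.sum_eq_zero_iff.1 hα) j (Finset.mem_univ j)
    rw [hα0, ← piecewise_eq_indicator]
    exact (hD.continuousOn_zero hU hl).measurable_piecewise continuousOn_const hU.measurableSet
  | succ n ih =>
    obtain ⟨i, β, rfl, hβ⟩ := exists_eq_add_single (α := α) (by rintro rfl; simp at hα)
    rw [sum_add_single] at hα
    exact measurable_indicator_of_hasLineDerivAt hU (ih (by omega) (by omega))
      (hD.hasLineDerivAt β i (by omega) hβ)

theorem memLp_indicator (hD : IsBoundedPartialFamily U l D) (hU : IsOpen U) (hl : 1 ≤ l)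
    {α : Fin s → ℕ} (hα : ∑ j, α j ≤ l) : MemLp (U.indicator (D α)) ∞ volume :=
  let ⟨_, hC⟩ := hD.bounded α hα
  memLp_top_indicator (hD.measurable_indicator hU hl hα rfl) hC

theorem hasWeakLineDeriv_of_forall_lt (hD : IsBoundedPartialFamily U l D) (hU : IsOpen U)
    {α : Fin s → ℕ} (hα : ∑ j, α j < l) {i : Fin s} (hi : ∀ j < i, α j = 0) :
    HasWeakLineDeriv U (EuclideanSpace.single i 1) (U.indicator (D α))
      (U.indicator (D (α + Pi.single i 1))) := by
  have hl : 1 ≤ l := by omega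
  refine hasWeakLineDeriv_of_hasLineDerivAt hU (hD.hasLineDerivAt α i hα hi)
    ((hD.memLp_indicator hU hl hα.le).locallyIntegrable le_top)
    ((hD.memLp_indicator hU hl ?_).locallyIntegrable le_top)
  rw [sum_add_single]
  omega

/-- Commuting weak derivatives removes the restriction on the order of differentiation. -/
theorem hasWeakLineDeriv (hD : IsBoundedPartialFamily U l D) (hU : IsOpen U) {n : ℕ} (hn : n < l)
    {α : Fin s → ℕ} (hα : ∑ j, α j = n) (k : Fin s) :
    HasWeakLineDeriv U (EuclideanSpace.single k 1) (U.indicator (D α))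
      (U.indicator (D (α + Pi.single k 1))) := by
  induction n generalizing α with
  | zero =>
    refine hD.hasWeakLineDeriv_of_forall_lt hU (hα.trans_lt hn) fun j _ => ?_
    exact (Finset.sum_eq_zero_iff.1 hα) j (Finset.mem_univ j)
  | succ n ih =>
    obtain ⟨i, β, rfl, hβ⟩ := exists_eq_add_single (α := α) (by rintro rfl; simp at hα)
    rcases le_or_gt k i with hki | hki
    · refine hD.hasWeakLineDeriv_of_forall_lt hU (hα.trans_lt hn) fun j hj => ?_
      have hji : j < i := hj.trans_le hki
      simp [hβ j hji, hji.ne]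
    · rw [sum_add_single] at hα
      have hi := hD.hasWeakLineDeriv_of_forall_lt hU (α := β) (by omega) hβ
      have hk := ih (by omega) (α := β) (by omega)
      have hki' := hD.hasWeakLineDeriv_of_forall_lt hU (α := β + Pi.single k 1) (i := i)
        (by rw [sum_add_single]; omega) fun j hj => by simp [hβ j hj, (hj.trans hki).ne]
      have hcomm := hi.comm hk hki'
      rwa [add_right_comm] at hcomm

theorem sobolevOn_indicator (hD : IsBoundedPartialFamily U l D) (hU : IsOpen U) (hl : 1 ≤ l)
    {n : ℕ} {α : Fin s → ℕ} (hα : ∑ j, α j + n ≤ l) : SobolevOn ∞ U U n (U.indicator (D α)) := by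
  induction n generalizing α with
  | zero => exact ⟨hD.memLp_indicator hU hl hα, support_indicator_subset⟩
  | succ n ih =>
    refine SobolevOn.succ_of_orthonormalBasis (EuclideanSpace.basisFun (Fin s) ℝ) le_top
      (hD.memLp_indicator hU hl (by omega)) support_indicator_subset
      (h := fun k => U.indicator (D (α + Pi.single k 1))) (fun k => ?_)
      fun k => ih (by rw [sum_add_single]; omega)
    rw [EuclideanSpace.basisFun_apply]
    exact hD.hasWeakLineDeriv hU (by omega) rfl k

end IsBoundedPartialFamily

namespace HasBoundedPartials

variable {l : ℕ} {f : EuclideanSpace ℝ (Fin s) → ℝ}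

theorem continuousOn (hf : HasBoundedPartials U l f) (hU : IsOpen U) (hl : 1 ≤ l) :
    ContinuousOn f U := by
  obtain ⟨D, hDf, hd, hb⟩ := hf
  exact (IsBoundedPartialFamily.continuousOn_zero ⟨hd, hb⟩ hU hl).congr fun u hu => (hDf u hu).symm

theorem exists_sobolevOn_partial (hf : HasBoundedPartials U l f) (hU : IsOpen U) (hl : 1 ≤ l)
    (i : Fin s) : ∃ P : EuclideanSpace ℝ (Fin s) → ℝ,
      (∀ u ∈ U, HasLineDerivAt ℝ f (P u) u (EuclideanSpace.single i 1)) ∧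
      SobolevOn ∞ U U (l - 1) (U.indicator P) := by
  obtain ⟨D, hDf, hd, hb⟩ := hf
  have hD : IsBoundedPartialFamily U l D := ⟨hd, hb⟩
  refine ⟨D (Pi.single i 1), fun u hu => ?_, hD.sobolevOn_indicator hU hl (by simp; omega)⟩
  have hfD : EqOn f (D 0) U := fun u hu => (hDf u hu).symm
  exact (hD.hasLineDerivAt_zero hl i u hu).congr_of_eventuallyEq
    (hfD.eventuallyEq_of_mem (hU.mem_nhds hu))

end HasBoundedPartials

end Partials

section ScaleMixture

open Set Function Filter
open scoped Topology ENNReal NNReal SchwartzMap LineDeriv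

theorem lintegral_mul_sq_le {α : Type*} [MeasurableSpace α] {μ : Measure α} {f g : α → ℝ≥0∞}
    (hf : AEMeasurable f μ) (hg : AEMeasurable g μ) :
    (∫⁻ a, f a * g a ∂μ) ^ 2 ≤ (∫⁻ a, f a ^ 2 ∂μ) * ∫⁻ a, g a ^ 2 ∂μ := by
  have hHolder := ENNReal.lintegral_mul_le_Lp_mul_Lq μ Real.HolderConjugate.two_two hf hg
  simp only [Pi.mul_apply, ENNReal.rpow_two] at hHolder
  refine (pow_le_pow_left₀ zero_le hHolder 2).trans (le_of_eq ?_)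
  rw [mul_pow, ← ENNReal.rpow_natCast, ← ENNReal.rpow_natCast, ← ENNReal.rpow_mul,
    ← ENNReal.rpow_mul]
  norm_num

theorem lintegral_comp_inv_smul_sub {F : Type*} [NormedAddCommGroup F] [InnerProductSpace ℝ F]
    [FiniteDimensional ℝ F] [MeasurableSpace F] [BorelSpace F] {f : F → ℝ≥0∞} (hf : Measurable f)
    {r : ℝ} (hr : 0 < r) (x₀ : F) :
    ∫⁻ y, f (r⁻¹ • (y - x₀)) = ENNReal.ofReal (r ^ Module.finrank ℝ F) * ∫⁻ y, f y := by
  rw [lintegral_sub_right_eq_self (fun y => f (r⁻¹ • y)) x₀,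
    ← lintegral_map hf (measurable_const_smul r⁻¹),
    Measure.map_addHaar_smul (volume : Measure F) (inv_ne_zero hr.ne'), lintegral_smul_measure,
    inv_pow, inv_inv, abs_of_pos (by positivity), smul_eq_mul]

/-- A measure on the positive reals whose power moments of order at least `-ν / 2` are finite. -/
structure IsScaleMeasure (ν : ℝ) (Λ : Measure ℝ) : Prop where
  ae_pos : ∀ᵐ τ ∂Λ, 0 < τ
  integrable_rpow : ∀ p : ℝ, -(ν / 2) ≤ p → Integrable (fun τ : ℝ => τ ^ p) Λ

/-- The mixture over the scales `√τ` of the copies of a Schwartz function rescaled about `x₀`; the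
weight `τ ^ (-q / 2)` is the factor produced by `q` derivatives. -/
noncomputable def scaleMixture {F : Type*} [NormedAddCommGroup F] [InnerProductSpace ℝ F]
    (Λ : Measure ℝ) (x₀ : F) (H : 𝓢(F, ℝ)) (q : ℕ) (y : F) : ℝ :=
  ∫ τ, τ ^ (-(q : ℝ) / 2) * H ((√τ)⁻¹ • (y - x₀)) ∂Λ

theorem indicator_scaleMixture_comp {α F : Type*} [NormedAddCommGroup F] [InnerProductSpace ℝ F]
    (Λ : Measure ℝ) (x₀ : F) (G : α → F) (U : Set α) (H : 𝓢(F, ℝ)) (q : ℕ) (u : α) :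
    U.indicator (fun u => scaleMixture Λ x₀ H q (G u)) u =
      ∫ τ, τ ^ (-(q : ℝ) / 2) * U.indicator (fun u => H ((√τ)⁻¹ • (G u - x₀))) u ∂Λ := by
  by_cases hu : u ∈ U <;> simp [hu, scaleMixture]

theorem IsScaleMeasure.sq_lintegral_enorm_rpow_mul_le {ν : ℝ} {Λ : Measure ℝ}
    (hΛ : IsScaleMeasure ν Λ) (q : ℕ) {h : ℝ → ℝ} (hh : Measurable h) :
    (∫⁻ τ, ‖τ ^ (-(q : ℝ) / 2) * h τ‖ₑ ∂Λ) ^ 2 ≤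
      (∫⁻ τ, ENNReal.ofReal (τ ^ (-(ν / 2))) ∂Λ) *
        ∫⁻ τ, ENNReal.ofReal (τ ^ (ν / 2 - q)) * ‖h τ‖ₑ ^ 2 ∂Λ := by
  have hsq : ∀ {τ : ℝ}, 0 < τ → ∀ p : ℝ,
      ENNReal.ofReal (τ ^ p) ^ 2 = ENNReal.ofReal (τ ^ (2 * p)) := fun {τ} hτ p => by
    rw [← ENNReal.ofReal_pow (by positivity), ← Real.rpow_natCast, ← Real.rpow_mul hτ.le]
    congr 2
    push_cast
    ring
  calc (∫⁻ τ, ‖τ ^ (-(q : ℝ) / 2) * h τ‖ₑ ∂Λ) ^ 2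
      = (∫⁻ τ, ENNReal.ofReal (τ ^ (-(ν / 4))) *
          (ENNReal.ofReal (τ ^ (ν / 4 - q / 2)) * ‖h τ‖ₑ) ∂Λ) ^ 2 := by
        congr 1
        refine lintegral_congr_ae ?_
        filter_upwards [hΛ.ae_pos] with τ hτ
        rw [enorm_mul, ← mul_assoc, ← ENNReal.ofReal_mul (by positivity), ← Real.rpow_add hτ,
          Real.enorm_of_nonneg (by positivity)]
        congr 3
        ring
    _ ≤ (∫⁻ τ, ENNReal.ofReal (τ ^ (-(ν / 4))) ^ 2 ∂Λ) *
          ∫⁻ τ, (ENNReal.ofReal (τ ^ (ν / 4 - q / 2)) * ‖h τ‖ₑ) ^ 2 ∂Λ :=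
        lintegral_mul_sq_le (by fun_prop) (by fun_prop)
    _ = _ := by
        congr 1 <;> refine lintegral_congr_ae ?_ <;> filter_upwards [hΛ.ae_pos] with τ hτ
        · rw [hsq hτ]
          congr 2
          ring
        · rw [mul_pow, hsq hτ]
          congr 3
          ring

section Pushforward

variable {Ω F : Type*} [MeasurableSpace Ω] {μ : Measure Ω} [NormedAddCommGroup F]
  [InnerProductSpace ℝ F] [FiniteDimensional ℝ F] [MeasurableSpace F] [BorelSpace F] {G : Ω → F}
  {C : ℝ≥0} {Λ : Measure ℝ} {ν : ℝ} {x₀ : F}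

theorem measurable_scaleMixture_integrand (hG : Measurable G) (H : 𝓢(F, ℝ)) (q : ℕ) :
    Measurable (uncurry fun (ω : Ω) (τ : ℝ) =>
      τ ^ (-(q : ℝ) / 2) * H ((√τ)⁻¹ • (G ω - x₀))) := by
  have hH := H.continuous.measurable
  simp only [uncurry_def]
  fun_prop

theorem lintegral_enorm_sq_lt_top (H : 𝓢(F, ℝ)) : ∫⁻ y, ‖H y‖ₑ ^ 2 < ∞ := by
  simpa using (eLpNorm_lt_top_iff_lintegral_rpow_enorm_lt_top two_ne_zero
    ENNReal.ofNat_ne_top).1 (H.memLp 2 volume).2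

theorem lintegral_enorm_sq_comp_le (hG : Measurable G) (hpush : μ.map G ≤ C • volume)
    (H : 𝓢(F, ℝ)) {τ : ℝ} (hτ : 0 < τ) :
    ∫⁻ ω, ‖H ((√τ)⁻¹ • (G ω - x₀))‖ₑ ^ 2 ∂μ ≤
      ENNReal.ofReal (τ ^ ((Module.finrank ℝ F : ℝ) / 2)) * (C * ∫⁻ y, ‖H y‖ₑ ^ 2) := by
  have hH := H.continuous.measurable
  have hsqrt : √τ ^ Module.finrank ℝ F = τ ^ ((Module.finrank ℝ F : ℝ) / 2) := by
    rw [Real.sqrt_eq_rpow, ← Real.rpow_natCast, ← Real.rpow_mul hτ.le]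
    congr 1
    ring
  calc ∫⁻ ω, ‖H ((√τ)⁻¹ • (G ω - x₀))‖ₑ ^ 2 ∂μ
      = ∫⁻ y, ‖H ((√τ)⁻¹ • (y - x₀))‖ₑ ^ 2 ∂μ.map G :=
        (lintegral_map (f := fun y => ‖H ((√τ)⁻¹ • (y - x₀))‖ₑ ^ 2) (by fun_prop) hG).symm
    _ ≤ ∫⁻ y, ‖H ((√τ)⁻¹ • (y - x₀))‖ₑ ^ 2 ∂(C • volume) := lintegral_mono' hpush le_rfl
    _ = ENNReal.ofReal (τ ^ ((Module.finrank ℝ F : ℝ) / 2)) * (C * ∫⁻ y, ‖H y‖ₑ ^ 2) := by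
        rw [lintegral_smul_measure, lintegral_comp_inv_smul_sub (f := fun y => ‖H y‖ₑ ^ 2)
          (by fun_prop) (Real.sqrt_pos.2 hτ) x₀, hsqrt, ENNReal.smul_def, smul_eq_mul]
        ring

variable [SFinite μ] [SFinite Λ]

theorem lintegral_scaleMixture_sq_lt_top (hG : Measurable G) (hpush : μ.map G ≤ C • volume)
    (hΛ : IsScaleMeasure ν Λ) (H : 𝓢(F, ℝ)) {q : ℕ}
    (hq : (q : ℝ) ≤ ν + (Module.finrank ℝ F : ℝ) / 2) :
    ∫⁻ ω, (∫⁻ τ, ‖τ ^ (-(q : ℝ) / 2) * H ((√τ)⁻¹ • (G ω - x₀))‖ₑ ∂Λ) ^ 2 ∂μ < ∞ := by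
  have hH := H.continuous.measurable
  have hΛ_lt_top := (hΛ.integrable_rpow _ le_rfl).lintegral_lt_top
  have hCH : C * ∫⁻ y, ‖H y‖ₑ ^ 2 < ∞ := ENNReal.mul_lt_top (by simp) (lintegral_enorm_sq_lt_top H)
  refine (lintegral_mono fun ω =>
    hΛ.sq_lintegral_enorm_rpow_mul_le q (by fun_prop)).trans_lt ?_
  rw [lintegral_const_mul' _ _ hΛ_lt_top.ne, lintegral_lintegral_swap
    (Measurable.aemeasurable (by simp only [uncurry_def]; fun_prop))]
  refine ENNReal.mul_lt_top hΛ_lt_top ?_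
  have hinner : ∀ᵐ τ ∂Λ,
      ∫⁻ ω, ENNReal.ofReal (τ ^ (ν / 2 - q)) * ‖H ((√τ)⁻¹ • (G ω - x₀))‖ₑ ^ 2 ∂μ ≤
        ENNReal.ofReal (τ ^ (ν / 2 - q + (Module.finrank ℝ F : ℝ) / 2)) *
          (C * ∫⁻ y, ‖H y‖ₑ ^ 2) := by
    filter_upwards [hΛ.ae_pos] with τ hτ
    rw [lintegral_const_mul' _ _ ENNReal.ofReal_ne_top, Real.rpow_add hτ,
      ENNReal.ofReal_mul (by positivity), mul_assoc]
    exact mul_le_mul_right (lintegral_enorm_sq_comp_le hG hpush H hτ) _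
  refine (lintegral_mono_ae hinner).trans_lt ?_
  rw [lintegral_mul_const' _ _ hCH.ne]
  exact ENNReal.mul_lt_top (hΛ.integrable_rpow _ (by linarith)).lintegral_lt_top hCH

theorem integrable_scaleMixture_integrand [IsFiniteMeasure μ] (hG : Measurable G)
    (hpush : μ.map G ≤ C • volume) (hΛ : IsScaleMeasure ν Λ) (H : 𝓢(F, ℝ)) {q : ℕ}
    (hq : (q : ℝ) ≤ ν + (Module.finrank ℝ F : ℝ) / 2) :
    Integrable (uncurry fun (ω : Ω) (τ : ℝ) =>
      τ ^ (-(q : ℝ) / 2) * H ((√τ)⁻¹ • (G ω - x₀))) (μ.prod Λ) := by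
  have hm := measurable_scaleMixture_integrand (x₀ := x₀) hG H q
  refine ⟨hm.aestronglyMeasurable, ?_⟩
  rw [hasFiniteIntegral_iff_enorm, lintegral_prod _ hm.enorm.aemeasurable]
  have hle : ∀ a : ℝ≥0∞, a ≤ 1 + a ^ 2 := fun a => by
    rcases le_total a 1 with h | h
    · exact h.trans le_self_add
    · exact (le_self_pow h two_ne_zero).trans le_add_self
  refine (lintegral_mono fun ω => hle _).trans_lt ?_
  rw [lintegral_add_left measurable_const]
  exact ENNReal.add_lt_top.2
    ⟨by simp, lintegral_scaleMixture_sq_lt_top hG hpush hΛ H hq⟩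

theorem memLp_scaleMixture_comp (hG : Measurable G) (hpush : μ.map G ≤ C • volume)
    (hΛ : IsScaleMeasure ν Λ) (H : 𝓢(F, ℝ)) {q : ℕ}
    (hq : (q : ℝ) ≤ ν + (Module.finrank ℝ F : ℝ) / 2) :
    MemLp (fun ω => scaleMixture Λ x₀ H q (G ω)) 2 μ := by
  have hm := measurable_scaleMixture_integrand (x₀ := x₀) hG H q
  refine ⟨hm.stronglyMeasurable.integral_prod_right.aestronglyMeasurable, ?_⟩
  rw [eLpNorm_lt_top_iff_lintegral_rpow_enorm_lt_top two_ne_zero ENNReal.ofNat_ne_top]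
  refine (lintegral_mono fun ω => ?_).trans_lt
    (lintegral_scaleMixture_sq_lt_top (x₀ := x₀) hG hpush hΛ H hq)
  simp only [ENNReal.toReal_ofNat, ENNReal.rpow_two]
  exact pow_le_pow_left₀ zero_le (enorm_integral_le_lintegral_enorm _) 2

end Pushforward

section ChainRule

variable {E : Type*} [NormedAddCommGroup E] [InnerProductSpace ℝ E] [FiniteDimensional ℝ E]
  [MeasurableSpace E] [BorelSpace E] {U : Set E} {v : E}

theorem HasWeakLineDeriv.congr_ae {f h k : E → ℝ} (hfh : HasWeakLineDeriv U v f h)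
    (hhk : h =ᵐ[volume] k) : HasWeakLineDeriv U v f k := by
  intro ψ hψ hs
  have hint : ∫ x, h x * ψ x = ∫ x, k x * ψ x :=
    integral_congr_ae (hhk.mono fun x hx => by simp only [hx])
  rw [hfh ψ hψ hs, hint]

theorem hasWeakLineDeriv_integral {α : Type*} [MeasurableSpace α] {Λ : Measure α} [SFinite Λ]
    {f h : E → α → ℝ} (hf : Integrable (uncurry f) (volume.prod Λ))
    (hh : Integrable (uncurry h) (volume.prod Λ))
    (hfh : ∀ᵐ a ∂Λ, HasWeakLineDeriv U v (fun u => f u a) (fun u => h u a)) :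
    HasWeakLineDeriv U v (fun u => ∫ a, f u a ∂Λ) (fun u => ∫ a, h u a ∂Λ) := by
  intro ψ hψ hs
  have hmul : ∀ {g : E → α → ℝ} {χ : E → ℝ}, Integrable (uncurry g) (volume.prod Λ) →
      IsTestFun χ → ∫ u, (∫ a, g u a ∂Λ) * χ u = ∫ a, (∫ u, g u a * χ u) ∂Λ := by
    intro g χ hg hχ
    obtain ⟨C, hC⟩ := hχ.exists_bound
    simp only [← integral_mul_const]
    exact integral_integral_swap (f := fun u a => g u a * χ u)
      (hg.mul_bdd hχ.continuous.aestronglyMeasurable.comp_fst (.of_forall fun p => hC p.1))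
  rw [hmul hf (hψ.fderiv_apply v), hmul hh hψ, ← integral_neg]
  exact integral_congr_ae (hfh.mono fun a ha => ha ψ hψ hs)

variable {d : ℕ} {G : E → EuclideanSpace ℝ (Fin d)} {x₀ : EuclideanSpace ℝ (Fin d)}
  {P : Fin d → E → ℝ}

theorem hasDerivAt_of_forall_hasDerivAt_apply {g : ℝ → EuclideanSpace ℝ (Fin d)} {g' : Fin d → ℝ}
    {t : ℝ} (h : ∀ j, HasDerivAt (fun t => g t j) (g' j) t) :
    HasDerivAt g (∑ j, g' j • EuclideanSpace.single j (1 : ℝ)) t := by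
  have hsum : HasDerivAt (fun t => ∑ j, g t j • EuclideanSpace.single j (1 : ℝ))
      (∑ j, g' j • EuclideanSpace.single j (1 : ℝ)) t :=
    HasDerivAt.fun_sum fun j _ => (h j).smul_const _
  simpa only [euclideanSpace_sum_smul_single] using hsum

omit [FiniteDimensional ℝ E] [MeasurableSpace E] [BorelSpace E] in
theorem hasLineDerivAt_schwartz_comp {u : E}
    (hP : ∀ j, HasLineDerivAt ℝ (fun u => G u j) (P j u) u v)
    (H : 𝓢(EuclideanSpace ℝ (Fin d), ℝ)) (r : ℝ) :
    HasLineDerivAt ℝ (fun u => H (r • (G u - x₀)))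
      (∑ j, r * (∂_{EuclideanSpace.single j (1 : ℝ)} H) (r • (G u - x₀)) * P j u) u v := by
  have hG : HasDerivAt (fun t : ℝ => r • (G (u + t • v) - x₀))
      (r • ∑ j, P j u • EuclideanSpace.single j (1 : ℝ)) 0 :=
    ((hasDerivAt_of_forall_hasDerivAt_apply hP).sub_const x₀).const_smul r
  have hH : HasFDerivAt H (fderiv ℝ H (r • (G u - x₀))) (r • (G u - x₀)) :=
    (H.differentiable _).hasFDerivAt
  have hcomp : HasLineDerivAt ℝ (fun u => H (r • (G u - x₀)))
      (fderiv ℝ H (r • (G u - x₀)) (r • ∑ j, P j u • EuclideanSpace.single j (1 : ℝ))) u v :=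
    hH.comp_hasDerivAt_of_eq (0 : ℝ) hG (by simp)
  convert hcomp using 1
  rw [map_smul, map_sum, smul_eq_mul, Finset.mul_sum]
  refine Finset.sum_congr rfl fun j _ => ?_
  rw [SchwartzMap.lineDerivOp_apply_eq_fderiv, (fderiv ℝ H _).map_smul, smul_eq_mul]
  ring

theorem hasWeakLineDeriv_schwartz_comp (hU : IsOpen U) (hG : Measurable G)
    (hP : ∀ j, ∀ u ∈ U, HasLineDerivAt ℝ (fun u => G u j) (P j u) u v)
    (hP_memLp : ∀ j, MemLp (U.indicator (P j)) ∞ volume)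
    (H : 𝓢(EuclideanSpace ℝ (Fin d), ℝ)) (r : ℝ) :
    HasWeakLineDeriv U v (U.indicator fun u => H (r • (G u - x₀)))
      (fun u => ∑ j, r * (∂_{EuclideanSpace.single j (1 : ℝ)} H) (r • (G u - x₀)) *
        U.indicator (P j) u) := by
  have hbdd : ∀ H : 𝓢(EuclideanSpace ℝ (Fin d), ℝ),
      MemLp (fun u => H (r • (G u - x₀))) ∞ volume := fun H => by
    have hH := H.continuous.measurable
    exact memLp_top_of_bound (Measurable.aestronglyMeasurable (by fun_prop))
      ((SchwartzMap.seminorm ℝ 0 0) H) (.of_forall fun u => SchwartzMap.norm_le_seminorm ℝ H _)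
  have hindicator : U.indicator (fun u => ∑ j, r *
      (∂_{EuclideanSpace.single j (1 : ℝ)} H) (r • (G u - x₀)) * P j u) = fun u => ∑ j, r *
        (∂_{EuclideanSpace.single j (1 : ℝ)} H) (r • (G u - x₀)) * U.indicator (P j) u := by
    funext u
    by_cases hu : u ∈ U <;> simp [hu]
  rw [← hindicator]
  refine hasWeakLineDeriv_of_hasLineDerivAt hU
    (fun u hu => hasLineDerivAt_schwartz_comp (fun j => hP j u hu) H r)
    (((hbdd H).indicator hU.measurableSet).locallyIntegrable le_top) ?_
  rw [hindicator]
  exact (memLp_finsetSum _ fun j _ =>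
    (hP_memLp j).mul ((hbdd _).const_mul r)).locallyIntegrable le_top

variable {Λ : Measure ℝ} [SFinite Λ] {ν : ℝ} {C : ℝ≥0}

theorem integrable_indicator_scaleMixture_integrand (hU : IsOpen U) (hUb : Bornology.IsBounded U)
    (hG : Measurable G) (hpush : (volume.restrict U).map G ≤ C • volume)
    (hΛ : IsScaleMeasure ν Λ) (H : 𝓢(EuclideanSpace ℝ (Fin d), ℝ)) {q : ℕ}
    (hq : (q : ℝ) ≤ ν + (d : ℝ) / 2) :
    Integrable (uncurry fun (u : E) (τ : ℝ) =>
      τ ^ (-(q : ℝ) / 2) * U.indicator (fun u => H ((√τ)⁻¹ • (G u - x₀))) u)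
      (volume.prod Λ) := by
  have : IsFiniteMeasure (volume.restrict U) := ⟨by simpa using hUb.measure_lt_top⟩
  have hint := integrable_scaleMixture_integrand (x₀ := x₀) hG hpush hΛ H (q := q) (by simpa)
  have hprod : (volume.restrict U).prod Λ = (volume.prod Λ).restrict (U ×ˢ univ) := by
    rw [← Measure.prod_restrict, Measure.restrict_univ]
  rw [hprod, ← IntegrableOn,
    ← integrable_indicator_iff (hU.measurableSet.prod .univ)] at hint
  refine hint.congr (.of_forall fun ⟨u, τ⟩ => ?_)
  by_cases hu : u ∈ U <;> simp [hu]

theorem hasWeakLineDeriv_scaleMixture_integrand (hU : IsOpen U) (hG : Measurable G)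
    (hP : ∀ j, ∀ u ∈ U, HasLineDerivAt ℝ (fun u => G u j) (P j u) u v)
    (hP_memLp : ∀ j, MemLp (U.indicator (P j)) ∞ volume)
    (H : 𝓢(EuclideanSpace ℝ (Fin d), ℝ)) (q : ℕ) {τ : ℝ} (hτ : 0 < τ) :
    HasWeakLineDeriv U v
      (fun u => τ ^ (-(q : ℝ) / 2) * U.indicator (fun u => H ((√τ)⁻¹ • (G u - x₀))) u)
      (fun u => ∑ j, τ ^ (-((q + 1 : ℕ) : ℝ) / 2) *
        U.indicator (fun u => (∂_{EuclideanSpace.single j (1 : ℝ)} H) ((√τ)⁻¹ • (G u - x₀))) u *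
          U.indicator (P j) u) := by
  have hpow : τ ^ (-((q + 1 : ℕ) : ℝ) / 2) = τ ^ (-(q : ℝ) / 2) * (√τ)⁻¹ := by
    rw [Real.sqrt_eq_rpow, ← Real.rpow_neg hτ.le, ← Real.rpow_add hτ]
    congr 1
    push_cast
    ring
  convert (hasWeakLineDeriv_schwartz_comp (x₀ := x₀) hU hG hP hP_memLp H (√τ)⁻¹).const_mul
    (τ ^ (-(q : ℝ) / 2)) using 2 with u
  rw [Finset.mul_sum, hpow]
  refine Finset.sum_congr rfl fun j _ => ?_
  by_cases hu : u ∈ U <;> simp [hu, mul_assoc]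

theorem integrable_scaleMixture_integrand_mul (hU : IsOpen U) (hUb : Bornology.IsBounded U)
    (hG : Measurable G) (hpush : (volume.restrict U).map G ≤ C • volume)
    (hΛ : IsScaleMeasure ν Λ) (H : 𝓢(EuclideanSpace ℝ (Fin d), ℝ)) {q : ℕ}
    (hq : (q : ℝ) ≤ ν + (d : ℝ) / 2) {g : E → ℝ} (hg : MemLp g ∞ volume) :
    Integrable (uncurry fun (u : E) (τ : ℝ) =>
      τ ^ (-(q : ℝ) / 2) * U.indicator (fun u => H ((√τ)⁻¹ • (G u - x₀))) u * g u)
      (volume.prod Λ) :=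
  (integrable_indicator_scaleMixture_integrand hU hUb hG hpush hΛ H hq).mul_bdd hg.1.comp_fst
    (Measure.quasiMeasurePreserving_fst.ae (ae_norm_le_of_memLp_top hg))

theorem hasWeakLineDeriv_scaleMixture_comp (hU : IsOpen U) (hUb : Bornology.IsBounded U)
    (hG : Measurable G) (hpush : (volume.restrict U).map G ≤ C • volume)
    (hΛ : IsScaleMeasure ν Λ) (H : 𝓢(EuclideanSpace ℝ (Fin d), ℝ)) {q : ℕ}
    (hq : (q : ℝ) + 1 ≤ ν + (d : ℝ) / 2)
    (hP : ∀ j, ∀ u ∈ U, HasLineDerivAt ℝ (fun u => G u j) (P j u) u v)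
    (hP_memLp : ∀ j, MemLp (U.indicator (P j)) ∞ volume) :
    HasWeakLineDeriv U v (U.indicator fun u => scaleMixture Λ x₀ H q (G u))
      (fun u => ∑ j, U.indicator
        (fun u => scaleMixture Λ x₀ (∂_{EuclideanSpace.single j (1 : ℝ)} H) (q + 1) (G u)) u *
          U.indicator (P j) u) := by
  have hint' : ∀ j, Integrable (uncurry fun (u : E) (τ : ℝ) => τ ^ (-((q + 1 : ℕ) : ℝ) / 2) *
      U.indicator (fun u => (∂_{EuclideanSpace.single j (1 : ℝ)} H) ((√τ)⁻¹ • (G u - x₀))) u *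
        U.indicator (P j) u) (volume.prod Λ) := fun j =>
    integrable_scaleMixture_integrand_mul hU hUb hG hpush hΛ _ (by exact_mod_cast hq) (hP_memLp j)
  have hsum : Integrable (uncurry fun (u : E) (τ : ℝ) => ∑ j, τ ^ (-((q + 1 : ℕ) : ℝ) / 2) *
      U.indicator (fun u => (∂_{EuclideanSpace.single j (1 : ℝ)} H) ((√τ)⁻¹ • (G u - x₀))) u *
        U.indicator (P j) u) (volume.prod Λ) :=
    integrable_finsetSum Finset.univ fun j _ => hint' j
  have hweak := (hasWeakLineDeriv_integral
    (integrable_indicator_scaleMixture_integrand hU hUb hG hpush hΛ H (by linarith)) hsum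
    (hΛ.ae_pos.mono fun τ hτ =>
      hasWeakLineDeriv_scaleMixture_integrand (x₀ := x₀) hU hG hP hP_memLp H q hτ))
  simp only [← indicator_scaleMixture_comp] at hweak
  refine hweak.congr_ae ?_
  filter_upwards [ae_all_iff.2 fun j => (hint' j).prod_right_ae] with u hu
  simp only [uncurry_apply_pair] at hu
  rw [integral_finsetSum _ fun j _ => hu j]
  exact Finset.sum_congr rfl fun j _ => by rw [integral_mul_const, indicator_scaleMixture_comp]

theorem sobolevOn_scaleMixture_comp {ι : Type*} [Fintype ι] (b : OrthonormalBasis ι ℝ E)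
    (hU : IsOpen U) (hUb : Bornology.IsBounded U) (hG : Measurable G)
    (hpush : (volume.restrict U).map G ≤ C • volume) (hΛ : IsScaleMeasure ν Λ)
    {P : ι → Fin d → E → ℝ} {l : ℕ}
    (hP : ∀ i j, ∀ u ∈ U, HasLineDerivAt ℝ (fun u => G u j) (P i j u) u (b i))
    (hP_sobolev : ∀ i j, SobolevOn ∞ U U (l - 1) (U.indicator (P i j)))
    {n q : ℕ} (hl : n ≤ l) (hq : ((q + n : ℕ) : ℝ) ≤ ν + (d : ℝ) / 2)
    (H : 𝓢(EuclideanSpace ℝ (Fin d), ℝ)) :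
    SobolevOn 2 U U n (U.indicator fun u => scaleMixture Λ x₀ H q (G u)) := by
  have hmemLp : ∀ {q : ℕ} (H : 𝓢(EuclideanSpace ℝ (Fin d), ℝ)), (q : ℝ) ≤ ν + (d : ℝ) / 2 →
      MemLp (U.indicator fun u => scaleMixture Λ x₀ H q (G u)) 2 volume := fun H hq => by
    rw [memLp_indicator_iff_restrict hU.measurableSet]
    exact memLp_scaleMixture_comp hG hpush hΛ H (by simpa using hq)
  induction n generalizing q H with
  | zero => exact ⟨hmemLp H (by simpa using hq), support_indicator_subset⟩
  | succ n ih =>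
    push_cast at hq
    have hq_succ : (q : ℝ) + 1 ≤ ν + (d : ℝ) / 2 := by linarith [n.cast_nonneg (α := ℝ)]
    refine SobolevOn.succ_of_orthonormalBasis b one_le_two (hmemLp H (by linarith))
      support_indicator_subset
      (fun i => hasWeakLineDeriv_scaleMixture_comp hU hUb hG hpush hΛ H hq_succ (hP i)
        fun j => (hP_sobolev i j).memLp)
      fun i => SobolevOn.sum one_le_two _ fun j _ => ?_
    exact (ih (by omega) (by push_cast; linarith) _).mul one_le_two hU hUb
      ((hP_sobolev i j).of_le (by omega))

end ChainRule

end ScaleMixture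

section SpectralBound

open Set Function Filter
open scoped Topology ENNReal SchwartzMap FourierTransform

section PlaneWave

variable {E : Type*} [NormedAddCommGroup E] [InnerProductSpace ℝ E]

/-- The character `exp (2πi ⟪ξ, x⟫)`, in the normalisation of the Fourier transform of Mathlib. -/
noncomputable def planeWave (ξ x : E) : ℂ :=
  Complex.exp (((2 * Real.pi * inner ℝ ξ x : ℝ) : ℂ) * Complex.I)

theorem norm_planeWave (ξ x : E) : ‖planeWave ξ x‖ = 1 := Complex.norm_exp_ofReal_mul_I _

theorem continuous_planeWave : Continuous (uncurry (planeWave (E := E))) := by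
  simp only [planeWave, uncurry_def]
  fun_prop

theorem planeWave_add_smul (ξ x w : E) (t : ℝ) :
    planeWave ξ (x + t • w) = planeWave ξ x * planeWave w (t • ξ) := by
  rw [planeWave, planeWave, planeWave, ← Complex.exp_add, inner_add_right, inner_smul_right,
    inner_smul_right, real_inner_comm w ξ]
  congr 1
  push_cast
  ring

/-- The Fourier transform, up to the sign of the frequency, of the discrete measure `∑ a u δ_u`. -/
noncomputable def trigSum (a : E →₀ ℝ) (ξ : E) : ℂ := a.sum fun u r => (r : ℂ) * planeWave ξ u

theorem continuous_trigSum (a : E →₀ ℝ) : Continuous (trigSum a) :=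
  continuous_finsetSum _ fun u _ => continuous_const.mul
    (continuous_planeWave.comp (Continuous.prodMk_left u))

theorem norm_trigSum_le (a : E →₀ ℝ) (ξ : E) : ‖trigSum a ξ‖ ≤ a.sum fun _ r => |r| := by
  refine (norm_sum_le _ _).trans (Finset.sum_le_sum fun u _ => ?_)
  rw [norm_mul, norm_planeWave, mul_one, Complex.norm_real, Real.norm_eq_abs]

variable [MeasurableSpace E] [BorelSpace E]

theorem integrable_planeWave_mul {μ : Measure E} {f : E → ℂ} (hf : Integrable f μ) (x : E) :
    Integrable (fun ξ => planeWave ξ x * f ξ) μ :=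
  hf.bdd_mul (c := 1) (continuous_planeWave.comp (Continuous.prodMk_left x)).aestronglyMeasurable
    (.of_forall fun ξ => (norm_planeWave ξ x).le)

theorem sum_mul_eq_integral_mul_trigSum {μ : Measure E} {f : E → ℂ} (hf : Integrable f μ)
    {φ : E → ℝ} (hφ : ∀ u, (φ u : ℂ) = ∫ ξ, planeWave ξ u * f ξ ∂μ) (a : E →₀ ℝ) :
    ((a.sum fun u r => r * φ u : ℝ) : ℂ) = ∫ ξ, f ξ * trigSum a ξ ∂μ := by
  have hterm : ∀ ξ, f ξ * trigSum a ξ = ∑ u ∈ a.support, (a u : ℂ) * (planeWave ξ u * f ξ) :=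
    fun ξ => by
      rw [trigSum, Finsupp.sum, Finset.mul_sum]
      exact Finset.sum_congr rfl fun u _ => by ring
  simp only [hterm]
  rw [integral_finsetSum _ fun u _ => (integrable_planeWave_mul hf u).const_mul _, Finsupp.sum,
    Complex.ofReal_sum]
  exact Finset.sum_congr rfl fun u _ => by rw [Complex.ofReal_mul, hφ, integral_const_mul]

end PlaneWave

theorem norm_integral_mul_le_sqrt_mul_sqrt {α : Type*} [MeasurableSpace α] {μ : Measure α}
    {f g : α → ℂ} (hf : MemLp f 2 μ) (hg : MemLp g 2 μ) :
    ‖∫ a, f a * g a ∂μ‖ ≤ √(∫ a, ‖f a‖ ^ 2 ∂μ) * √(∫ a, ‖g a‖ ^ 2 ∂μ) := by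
  have hHolder := integral_mul_norm_le_Lp_mul_Lq (μ := μ) Real.HolderConjugate.two_two
    (by simpa using hf) (by simpa using hg)
  simp only [Real.rpow_two, ← Real.sqrt_eq_rpow] at hHolder
  refine (norm_integral_le_integral_norm _).trans ?_
  simpa only [norm_mul] using hHolder

variable {E : Type*} [NormedAddCommGroup E] [InnerProductSpace ℝ E] [FiniteDimensional ℝ E]
  [MeasurableSpace E] [BorelSpace E]

section DualNorm

/-- The Sobolev norm of order `-m` of the discrete measure with weights `a`. -/
noncomputable def dualNorm (m : ℕ) (a : E →₀ ℝ) : ℝ :=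
  √(∫ ξ, ‖trigSum a ξ‖ ^ 2 * ((1 + ‖ξ‖ ^ 2) ^ m)⁻¹)

theorem integrable_inv_one_add_norm_sq_pow {m : ℕ} (hm : Module.finrank ℝ E < 2 * m) :
    Integrable fun ξ : E => ((1 + ‖ξ‖ ^ 2) ^ m)⁻¹ := by
  have hm' : (Module.finrank ℝ E : ℝ) < 2 * m := by exact_mod_cast hm
  refine (integrable_rpow_neg_one_add_norm_sq (μ := volume) hm').congr (.of_forall fun ξ => ?_)
  simp only
  rw [show (-(2 * (m : ℝ)) / 2) = -(m : ℝ) by ring, Real.rpow_neg (by positivity),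
    Real.rpow_natCast]

theorem integrable_trigSum_sq {m : ℕ} (hm : Module.finrank ℝ E < 2 * m) (a : E →₀ ℝ) :
    Integrable fun ξ => ‖trigSum a ξ‖ ^ 2 * ((1 + ‖ξ‖ ^ 2) ^ m)⁻¹ := by
  refine (integrable_inv_one_add_norm_sq_pow hm).bdd_mul (c := (a.sum fun _ r => |r|) ^ 2)
    ((continuous_trigSum a).norm.pow 2).aestronglyMeasurable (.of_forall fun ξ => ?_)
  rw [Real.norm_of_nonneg (by positivity)]
  exact pow_le_pow_left₀ (norm_nonneg _) (norm_trigSum_le a ξ) 2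

/-- On the discrete measures supported in `Ω`, the functional `a ↦ ∑ a u * f u` is bounded by `M`
times the Sobolev norm of order `-m`. By duality this says that `f` is the restriction to `Ω` of a
function in the Sobolev space of order `m`; the formulation avoids extension operators. -/
def IsDualBounded (m : ℕ) (Ω : Set E) (M : ℝ) (f : E → ℝ) : Prop :=
  ∀ a : E →₀ ℝ, (∀ u ∈ a.support, u ∈ Ω) → |a.sum fun u r => r * f u| ≤ M * dualNorm m a

namespace IsDualBounded

variable {m : ℕ} {Ω Ω' : Set E} {M N : ℝ} {f g : E → ℝ}

theorem mono_set (hf : IsDualBounded m Ω' M f) (hΩ : Ω ⊆ Ω') : IsDualBounded m Ω M f :=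
  fun a ha => hf a fun u hu => hΩ (ha u hu)

theorem mono_bound (hf : IsDualBounded m Ω M f) (hMN : M ≤ N) : IsDualBounded m Ω N f :=
  fun a ha => (hf a ha).trans (mul_le_mul_of_nonneg_right hMN (Real.sqrt_nonneg _))

theorem congr (hf : IsDualBounded m Ω M f) (hfg : EqOn f g Ω) : IsDualBounded m Ω M g :=
  fun a ha => by
    have hsum : (a.sum fun u r => r * f u) = a.sum fun u r => r * g u :=
      Finset.sum_congr rfl fun u hu => congrArg (a u * ·) (hfg (ha u hu))
    exact hsum ▸ hf a ha

theorem zero : IsDualBounded m Ω 0 (fun _ : E => (0 : ℝ)) := fun a _ => by simp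

theorem add (hf : IsDualBounded m Ω M f) (hg : IsDualBounded m Ω N g) :
    IsDualBounded m Ω (M + N) (fun u => f u + g u) := fun a ha => by
  simp only [mul_add, Finsupp.sum_add, add_mul]
  exact (abs_add_le _ _).trans (add_le_add (hf a ha) (hg a ha))

theorem const_mul (hf : IsDualBounded m Ω M f) (c : ℝ) :
    IsDualBounded m Ω (|c| * M) (fun u => c * f u) := fun a ha => by
  simp only [mul_left_comm _ c, ← Finsupp.mul_sum, abs_mul, mul_assoc]
  exact mul_le_mul_of_nonneg_left (hf a ha) (abs_nonneg c)

theorem sub (hf : IsDualBounded m Ω M f) (hg : IsDualBounded m Ω N g) :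
    IsDualBounded m Ω (M + N) (fun u => f u - g u) := by
  simpa [sub_eq_add_neg] using hf.add (hg.const_mul (-1))

theorem sum {ι : Type*} (s : Finset ι) {M : ι → ℝ} {f : ι → E → ℝ}
    (hf : ∀ i ∈ s, IsDualBounded m Ω (M i) (f i)) :
    IsDualBounded m Ω (∑ i ∈ s, M i) (fun u => ∑ i ∈ s, f i u) := by
  induction s using Finset.cons_induction with
  | empty => simpa using zero
  | cons i s hi ih =>
    simp only [Finset.sum_cons]
    exact (hf i (Finset.mem_cons_self i s)).add (ih fun j hj => hf j (Finset.mem_cons_of_mem hj))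

theorem of_tendsto {F : ℕ → E → ℝ} (hF : ∀ j, IsDualBounded m Ω M (F j))
    (hlim : ∀ u ∈ Ω, Tendsto (fun j => F j u) atTop (𝓝 (f u))) : IsDualBounded m Ω M f :=
  fun a ha => le_of_tendsto
    (tendsto_finsetSum _ fun u hu => (hlim u (ha u hu)).const_mul (a u)).abs
    (.of_forall fun j => hF j a ha)

end IsDualBounded

theorem sq_le_of_le_inv_one_add_pow {m : ℕ} {b C R : ℝ} (hb : 0 ≤ b) (hR : 0 ≤ R)
    (hbC : b ≤ C * ((1 + R) ^ m)⁻¹) : b ^ 2 ≤ C ^ 2 * ((1 + R ^ 2) ^ m)⁻¹ := by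
  refine (pow_le_pow_left₀ hb hbC 2).trans ?_
  rw [mul_pow, inv_pow, ← pow_mul, mul_comm m 2, pow_mul]
  gcongr
  nlinarith

theorem isDualBounded_of_eq_integral_planeWave {m : ℕ} (hm : Module.finrank ℝ E < 2 * m)
    {γ B : E → ℂ} (hγ : MemLp γ 2 volume) (hB : AEStronglyMeasurable B volume) {C : ℝ}
    (hC : 0 ≤ C) (hBC : ∀ ξ, ‖B ξ‖ ≤ C * ((1 + ‖ξ‖) ^ m)⁻¹) {φ : E → ℝ}
    (hφ : ∀ u, (φ u : ℂ) = ∫ ξ, planeWave ξ u * (γ ξ * B ξ)) :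
    IsDualBounded m univ (C * √(∫ ξ, ‖γ ξ‖ ^ 2)) φ := by
  intro a _
  have hB_sq : ∀ ξ, ‖B ξ‖ ^ 2 ≤ C ^ 2 * ((1 + ‖ξ‖ ^ 2) ^ m)⁻¹ := fun ξ =>
    sq_le_of_le_inv_one_add_pow (norm_nonneg _) (norm_nonneg ξ) (hBC ξ)
  have hB_memLp : MemLp B 2 volume := by
    rw [memLp_two_iff_integrable_sq_norm hB]
    exact ((integrable_inv_one_add_norm_sq_pow hm).const_mul (C ^ 2)).mono' (hB.norm.pow 2)
      (.of_forall fun ξ => by simpa using hB_sq ξ)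
  have hT_sq : ∀ ξ, ‖B ξ * trigSum a ξ‖ ^ 2 ≤
      C ^ 2 * (‖trigSum a ξ‖ ^ 2 * ((1 + ‖ξ‖ ^ 2) ^ m)⁻¹) := fun ξ => by
    rw [norm_mul, mul_pow, mul_left_comm, mul_comm (‖B ξ‖ ^ 2)]
    exact mul_le_mul_of_nonneg_left (hB_sq ξ) (by positivity)
  have hT : AEStronglyMeasurable (fun ξ => B ξ * trigSum a ξ) volume :=
    hB.mul (continuous_trigSum a).aestronglyMeasurable
  have hint := (integrable_trigSum_sq hm a).const_mul (C ^ 2)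
  have hT_int : Integrable fun ξ => ‖B ξ * trigSum a ξ‖ ^ 2 :=
    hint.mono' (hT.norm.pow 2) (.of_forall fun ξ => by simpa using hT_sq ξ)
  calc |a.sum fun u r => r * φ u|
      = ‖∫ ξ, γ ξ * (B ξ * trigSum a ξ)‖ := by
        rw [← Real.norm_eq_abs, ← Complex.norm_real,
          sum_mul_eq_integral_mul_trigSum (hγ.integrable_mul hB_memLp) hφ a]
        simp only [Pi.mul_apply, mul_assoc]
    _ ≤ √(∫ ξ, ‖γ ξ‖ ^ 2) * √(∫ ξ, ‖B ξ * trigSum a ξ‖ ^ 2) :=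
        norm_integral_mul_le_sqrt_mul_sqrt hγ ((memLp_two_iff_integrable_sq_norm hT).2 hT_int)
    _ ≤ √(∫ ξ, ‖γ ξ‖ ^ 2) * (C * dualNorm m a) := by
        refine mul_le_mul_of_nonneg_left ?_ (Real.sqrt_nonneg _)
        rw [dualNorm, ← Real.sqrt_sq hC, ← Real.sqrt_mul (sq_nonneg C), ← integral_const_mul]
        exact Real.sqrt_le_sqrt (integral_mono hT_int hint hT_sq)
    _ = C * √(∫ ξ, ‖γ ξ‖ ^ 2) * dualNorm m a := by ring

end DualNorm

section ConeMultiplier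

theorem schwartz_eq_integral_planeWave_mul_fourier (g : 𝓢(E, ℂ)) (x : E) :
    g x = ∫ ξ, planeWave ξ x * (𝓕 g) ξ := by
  conv_lhs => rw [← FourierTransform.fourierInv_fourier_eq (F := 𝓢(E, ℂ)) g,
    SchwartzMap.fourierInv_coe, Real.fourierInv_eq']
  rfl

theorem fourierInv_schwartz_eq_integral_planeWave (θ : 𝓢(E, ℂ)) (ζ : E) :
    (𝓕⁻ θ) ζ = ∫ w, planeWave w ζ * θ w := by
  rw [SchwartzMap.fourierInv_coe, Real.fourierInv_eq']
  rfl

theorem integral_schwartz_add_smul_mul (g θ : 𝓢(E, ℂ)) (t : ℝ) (x : E) :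
    ∫ w, g (x + t • w) * θ w = ∫ ξ, planeWave ξ x * ((𝓕 g) ξ * (𝓕⁻ θ) (t • ξ)) := by
  have hint : Integrable (uncurry fun w ξ : E =>
      planeWave ξ (x + t • w) * (θ w * (𝓕 g) ξ)) (volume.prod volume) :=
    (θ.integrable.mul_prod (𝓕 g).integrable).bdd_mul (c := 1)
      (continuous_planeWave.comp (f := fun p : E × E => (p.2, x + t • p.1))
        (by fun_prop)).aestronglyMeasurable (.of_forall fun p => (norm_planeWave _ _).le)
  have hinversion : ∀ w,
      g (x + t • w) * θ w = ∫ ξ, planeWave ξ (x + t • w) * (θ w * (𝓕 g) ξ) := fun w => by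
    rw [schwartz_eq_integral_planeWave_mul_fourier, ← integral_mul_const]
    exact integral_congr_ae (.of_forall fun ξ => by simp only; ring)
  simp only [hinversion]
  rw [integral_integral_swap hint]
  refine integral_congr_ae (.of_forall fun ξ => ?_)
  simp only [planeWave_add_smul, fourierInv_schwartz_eq_integral_planeWave, ← integral_const_mul]
  exact integral_congr_ae (.of_forall fun w => by simp only; ring)

omit [FiniteDimensional ℝ E] [MeasurableSpace E] [BorelSpace E] in
theorem exists_norm_schwartz_le_inv_pow (Θ : 𝓢(E, ℂ)) (m : ℕ) :
    ∃ C : ℝ, 0 ≤ C ∧ ∀ ξ, ‖Θ ξ‖ ≤ C * ((1 + ‖ξ‖) ^ m)⁻¹ := by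
  refine ⟨2 ^ m * ((Finset.Iic (m, 0)).sup fun m => SchwartzMap.seminorm ℝ m.1 m.2) Θ,
    by positivity, fun ξ => ?_⟩
  have hdecay := SchwartzMap.one_add_le_sup_seminorm_apply (𝕜 := ℝ) (m := (m, 0)) (k := m) (n := 0)
    le_rfl le_rfl Θ ξ
  rw [norm_iteratedFDeriv_zero] at hdecay
  rw [← div_eq_mul_inv, le_div_iff₀ (by positivity), mul_comm]
  exact hdecay

theorem integral_pow_div_one_add_mul_pow (k : ℕ) {R : ℝ} (hR : 0 ≤ R) :
    ∫ t in (0 : ℝ)..1, t ^ k * ((1 + t * R) ^ (k + 2))⁻¹ =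
      ((k : ℝ) + 1)⁻¹ * ((1 + R) ^ (k + 1))⁻¹ := by
  have hpos : ∀ t ∈ uIcc (0 : ℝ) 1, 0 < 1 + t * R := fun t ht => by
    rw [uIcc_of_le zero_le_one] at ht
    linarith [mul_nonneg ht.1 hR]
  have hderiv : ∀ t ∈ uIcc (0 : ℝ) 1, HasDerivAt
      (fun t : ℝ => ((k : ℝ) + 1)⁻¹ * (t / (1 + t * R)) ^ (k + 1))
      (t ^ k * ((1 + t * R) ^ (k + 2))⁻¹) t := fun t ht => by
    have hden := hpos t ht
    have hden_deriv : HasDerivAt (fun t : ℝ => 1 + t * R) R t := by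
      simpa using ((hasDerivAt_id t).mul_const R).const_add 1
    refine ((((hasDerivAt_id t).div hden_deriv hden.ne').pow (k + 1)).const_mul
      (((k : ℝ) + 1)⁻¹)).congr_deriv ?_
    simp only [id, Pi.div_apply, div_pow]
    push_cast
    field_simp
    ring
  rw [intervalIntegral.integral_eq_sub_of_hasDerivAt hderiv]
  · simp
  · exact ContinuousOn.intervalIntegrable (ContinuousOn.mul (by fun_prop)
      (ContinuousOn.inv₀ (by fun_prop) fun t ht => (pow_pos (hpos t ht) _).ne'))

/-- The Fourier multiplier of `g ↦ ∫ t in 0..1, t ^ k * ∫ w, g (· + t • w) * θ w`, when `Θ` is the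
inverse Fourier transform of `θ`. -/
noncomputable def coneMultiplier (k : ℕ) (Θ : 𝓢(E, ℂ)) (ξ : E) : ℂ :=
  ∫ t in (0 : ℝ)..1, ((t ^ k : ℝ) : ℂ) * Θ (t • ξ)

omit [FiniteDimensional ℝ E] [MeasurableSpace E] [BorelSpace E] in
theorem continuous_coneMultiplier (k : ℕ) (Θ : 𝓢(E, ℂ)) : Continuous (coneMultiplier k Θ) := by
  refine intervalIntegral.continuous_parametric_intervalIntegral_of_continuous' ?_ 0 1
  have hΘ := Θ.continuous
  simp only [uncurry_def]
  fun_prop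

omit [FiniteDimensional ℝ E] [MeasurableSpace E] [BorelSpace E] in
theorem exists_norm_coneMultiplier_le (k : ℕ) (Θ : 𝓢(E, ℂ)) :
    ∃ C : ℝ, 0 ≤ C ∧ ∀ ξ, ‖coneMultiplier k Θ ξ‖ ≤ C * ((1 + ‖ξ‖) ^ (k + 1))⁻¹ := by
  obtain ⟨C, hC, hΘC⟩ := exists_norm_schwartz_le_inv_pow Θ (k + 2)
  refine ⟨C * ((k : ℝ) + 1)⁻¹, by positivity, fun ξ => ?_⟩
  rw [mul_assoc, ← integral_pow_div_one_add_mul_pow k (norm_nonneg ξ),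
    ← intervalIntegral.integral_const_mul]
  refine intervalIntegral.norm_integral_le_of_norm_le zero_le_one
    (.of_forall fun t ht => ?_) ?_
  · have hΘt := hΘC (t • ξ)
    rw [norm_smul, Real.norm_of_nonneg ht.1.le] at hΘt
    rw [norm_mul, Complex.norm_real, Real.norm_of_nonneg (pow_nonneg ht.1.le k), mul_left_comm]
    exact mul_le_mul_of_nonneg_left hΘt (pow_nonneg ht.1.le k)
  · refine ContinuousOn.intervalIntegrable (ContinuousOn.mul (by fun_prop)
      (ContinuousOn.mul (by fun_prop) (ContinuousOn.inv₀ (by fun_prop) fun t ht => ?_)))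
    rw [uIcc_of_le zero_le_one] at ht
    exact (pow_pos (by linarith [mul_nonneg ht.1 (norm_nonneg ξ)]) _).ne'

theorem integrable_pow_mul_planeWave_mul_schwartz (γ Θ : 𝓢(E, ℂ)) (k : ℕ) (x : E) :
    Integrable (uncurry fun (t : ℝ) (ξ : E) =>
      ((t ^ k : ℝ) : ℂ) * (planeWave ξ x * (γ ξ * Θ (t • ξ))))
      ((volume.restrict (Ioc (0 : ℝ) 1)).prod volume) := by
  have hΘ := Θ.continuous
  have hwave : Continuous fun p : ℝ × E => planeWave p.2 x :=
    continuous_planeWave.comp (f := fun p : ℝ × E => (p.2, x)) (by fun_prop)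
  have hIoc : ∀ᵐ t ∂(volume.restrict (Ioc (0 : ℝ) 1)), t ∈ Ioc (0 : ℝ) 1 :=
    ae_restrict_mem measurableSet_Ioc
  have hγ : Integrable (fun p : ℝ × E => γ p.2)
      ((volume.restrict (Ioc (0 : ℝ) 1)).prod volume) := γ.integrable.comp_snd _
  have hint := hγ.bdd_mul
    (f := fun p : ℝ × E => ((p.1 ^ k : ℝ) : ℂ) * (planeWave p.2 x * Θ (p.1 • p.2)))
    (c := SchwartzMap.seminorm ℝ 0 0 Θ) (Continuous.aestronglyMeasurable (by fun_prop)) ?_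
  · refine hint.congr (.of_forall fun p => ?_)
    simp only [uncurry_def]
    ring
  · filter_upwards [Measure.quasiMeasurePreserving_fst.ae hIoc] with p hp
    rw [norm_mul, norm_mul, norm_planeWave, one_mul, Complex.norm_real,
      Real.norm_of_nonneg (pow_nonneg hp.1.le k)]
    exact (mul_le_of_le_one_left (norm_nonneg _) (pow_le_one₀ hp.1.le hp.2)).trans
      (SchwartzMap.norm_le_seminorm ℝ _ _)

theorem integral_pow_mul_schwartz_add_smul_mul (g θ : 𝓢(E, ℂ)) (k : ℕ) (x : E) :
    ∫ t in (0 : ℝ)..1, ((t ^ k : ℝ) : ℂ) * ∫ w, g (x + t • w) * θ w =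
      ∫ ξ, planeWave ξ x * ((𝓕 g) ξ * coneMultiplier k (𝓕⁻ θ) ξ) := by
  simp only [coneMultiplier, integral_schwartz_add_smul_mul,
    intervalIntegral.integral_of_le zero_le_one, ← integral_const_mul]
  rw [integral_integral_swap (integrable_pow_mul_planeWave_mul_schwartz (𝓕 g) (𝓕⁻ θ) k x)]
  refine integral_congr_ae (.of_forall fun ξ => integral_congr_ae (.of_forall fun t => ?_))
  simp only
  ring

end ConeMultiplier

end SpectralBound

section ConeDuality

open Set Function Filter Metric
open scoped Topology SchwartzMap FourierTransform ContDiff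

variable {E : Type*} [NormedAddCommGroup E] [InnerProductSpace ℝ E] [FiniteDimensional ℝ E]
  [MeasurableSpace E] [BorelSpace E]

/-- The average of `γ` over the points `x + t • w` with weight `θ w`. -/
noncomputable def dirAvg (θ γ : E → ℝ) (t : ℝ) (x : E) : ℝ := ∫ w, γ (x + t • w) * θ w

/-- The moment of order `k` in the scale `t ∈ [0, 1]` of the directional averages `dirAvg`. When `θ`
is supported in a cone of directions, it involves only the values of `γ` on the cone at `x`. -/
noncomputable def dirMoment (k : ℕ) (θ γ : E → ℝ) (x : E) : ℝ :=
  ∫ t in (0 : ℝ)..1, t ^ k * dirAvg θ γ t x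

theorem integral_sq_eq_integral_norm_fourier_sq {γ : E → ℝ} {g : 𝓢(E, ℂ)}
    (hg : ∀ x, g x = (γ x : ℂ)) : ∫ x, γ x ^ 2 = ∫ ξ, ‖(𝓕 g) ξ‖ ^ 2 := by
  rw [SchwartzMap.integral_norm_sq_fourier]
  simp [hg]

namespace IsTestFun

variable {f γ θ : E → ℝ}

omit [FiniteDimensional ℝ E] [MeasurableSpace E] [BorelSpace E] in
theorem inner_mul (hf : IsTestFun f) (v : E) : IsTestFun fun x => inner ℝ v x * f x :=
  ⟨(contDiff_const.inner ℝ contDiff_id).mul hf.contDiff, hf.hasCompactSupport.mul_left⟩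

omit [FiniteDimensional ℝ E] [MeasurableSpace E] [BorelSpace E] in
theorem exists_schwartzMap_eq (hf : IsTestFun f) : ∃ g : 𝓢(E, ℂ), ∀ x, g x = (f x : ℂ) :=
  ⟨(hf.hasCompactSupport.comp_left Complex.ofReal_zero).toSchwartzMap
    (Complex.ofRealCLM.contDiff.comp hf.contDiff), fun _ => rfl⟩

theorem integrable_dirAvg (hγ : IsTestFun γ) (hθ : IsTestFun θ) (t : ℝ) (x : E) :
    Integrable fun w => γ (x + t • w) * θ w := by
  obtain ⟨C, hC⟩ := hγ.exists_bound
  have hγ_cont := hγ.continuous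
  exact hθ.integrable.bdd_mul (Continuous.aestronglyMeasurable (by fun_prop))
    (.of_forall fun w => hC _)

theorem continuous_dirAvg (hγ : IsTestFun γ) (hθ : IsTestFun θ) (x : E) :
    Continuous fun t => dirAvg θ γ t x := by
  obtain ⟨C, hC⟩ := hγ.exists_bound
  have hγ_cont := hγ.continuous
  refine continuous_of_dominated (bound := fun w => C * ‖θ w‖)
    (fun t => (hγ.integrable_dirAvg hθ t x).1) (fun t => .of_forall fun w => ?_)
    (hθ.integrable.norm.const_mul C) (.of_forall fun w => by fun_prop)
  rw [norm_mul]
  exact mul_le_mul_of_nonneg_right (hC _) (norm_nonneg _)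

omit [FiniteDimensional ℝ E] [MeasurableSpace E] [BorelSpace E] in
theorem hasDerivAt_comp_add_smul {ι : Type*} [Fintype ι] (b : OrthonormalBasis ι ℝ E)
    (hγ : IsTestFun γ) (x w : E) (t : ℝ) :
    HasDerivAt (fun t : ℝ => γ (x + t • w))
      (∑ i, fderiv ℝ γ (x + t • w) (b i) * inner ℝ (b i) w) t := by
  have hline : HasDerivAt (fun t : ℝ => x + t • w) w t := by
    simpa using ((hasDerivAt_id t).smul_const w).const_add x
  refine ((hγ.differentiable _).hasFDerivAt.comp_hasDerivAt t hline).congr_deriv ?_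
  nth_rewrite 2 [← b.sum_repr' w]
  simp only [map_sum, map_smul, smul_eq_mul, mul_comm]

theorem hasDerivAt_dirAvg {ι : Type*} [Fintype ι] (b : OrthonormalBasis ι ℝ E)
    (hγ : IsTestFun γ) (hθ : IsTestFun θ) (x : E) (t : ℝ) :
    HasDerivAt (fun t => dirAvg θ γ t x)
      (∑ i, dirAvg (fun w => inner ℝ (b i) w * θ w) (fun y => fderiv ℝ γ y (b i)) t x) t := by
  choose C hC using fun i => (hγ.fderiv_apply (b i)).exists_bound
  have hint : ∀ t i, Integrable fun w => fderiv ℝ γ (x + t • w) (b i) * (inner ℝ (b i) w * θ w) :=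
    fun t i => (hγ.fderiv_apply (b i)).integrable_dirAvg (hθ.inner_mul (b i)) t x
  have hbound_int : Integrable fun w => ∑ i, C i * ‖inner ℝ (b i) w * θ w‖ :=
    integrable_finsetSum _ fun i _ => (hθ.inner_mul (b i)).integrable.norm.const_mul (C i)
  have hderiv := (hasDerivAt_integral_of_dominated_loc_of_deriv_le (μ := volume) (𝕜 := ℝ)
    (F := fun t w => γ (x + t • w) * θ w) (x₀ := t)
    (F' := fun t w => ∑ i, fderiv ℝ γ (x + t • w) (b i) * (inner ℝ (b i) w * θ w))
    (bound := fun w => ∑ i, C i * ‖inner ℝ (b i) w * θ w‖) (s := univ) univ_mem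
    (.of_forall fun t => (hγ.integrable_dirAvg hθ t x).1) (hγ.integrable_dirAvg hθ t x)
    (integrable_finsetSum _ fun i _ => hint t i).1 (.of_forall fun w t _ => ?_) hbound_int
    (.of_forall fun w t _ => ?_)).2
  · rwa [integral_finsetSum _ fun i _ => hint t i] at hderiv
  · refine (norm_sum_le _ _).trans (Finset.sum_le_sum fun i _ => ?_)
    rw [norm_mul]
    exact mul_le_mul_of_nonneg_right (hC i _) (norm_nonneg _)
  · simpa only [Finset.sum_mul, mul_assoc] using
      (hγ.hasDerivAt_comp_add_smul b x w t).mul_const (θ w)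

theorem sum_dirMoment_fderiv {ι : Type*} [Fintype ι] (b : OrthonormalBasis ι ℝ E)
    (hγ : IsTestFun γ) (hθ : IsTestFun θ) (x : E) (k : ℕ) :
    ∑ i, dirMoment k (fun w => inner ℝ (b i) w * θ w) (fun y => fderiv ℝ γ y (b i)) x =
      dirAvg θ γ 1 x - 0 ^ k * dirAvg θ γ 0 x -
        ∫ t in (0 : ℝ)..1, (k : ℝ) * t ^ (k - 1) * dirAvg θ γ t x := by
  have hcont : ∀ i, Continuous fun t =>
      dirAvg (fun w => inner ℝ (b i) w * θ w) (fun y => fderiv ℝ γ y (b i)) t x := fun i =>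
    (hγ.fderiv_apply (b i)).continuous_dirAvg (hθ.inner_mul (b i)) x
  have hparts := intervalIntegral.integral_mul_deriv_eq_deriv_mul (a := 0) (b := 1)
    (u := fun t : ℝ => t ^ k) (u' := fun t : ℝ => (k : ℝ) * t ^ (k - 1))
    (fun t _ => hasDerivAt_pow k t) (fun t _ => hγ.hasDerivAt_dirAvg b hθ x t)
    (Continuous.intervalIntegrable (by fun_prop) _ _)
    (Continuous.intervalIntegrable (continuous_finsetSum _ fun i _ => hcont i) _ _)
  rw [one_pow, one_mul] at hparts
  rw [← hparts]
  simp only [dirMoment, Finset.mul_sum]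
  exact (intervalIntegral.integral_finsetSum fun i _ =>
    Continuous.intervalIntegrable ((continuous_pow k).mul (hcont i)) _ _).symm

theorem sum_dirMoment_zero_fderiv {ι : Type*} [Fintype ι] (b : OrthonormalBasis ι ℝ E)
    (hγ : IsTestFun γ) (hθ : IsTestFun θ) (x : E) :
    ∑ i, dirMoment 0 (fun w => inner ℝ (b i) w * θ w) (fun y => fderiv ℝ γ y (b i)) x =
      dirAvg θ γ 1 x - dirAvg θ γ 0 x := by
  simp [hγ.sum_dirMoment_fderiv b hθ]

theorem sum_dirMoment_succ_fderiv {ι : Type*} [Fintype ι] (b : OrthonormalBasis ι ℝ E)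
    (hγ : IsTestFun γ) (hθ : IsTestFun θ) (x : E) (k : ℕ) :
    ∑ i, dirMoment (k + 1) (fun w => inner ℝ (b i) w * θ w) (fun y => fderiv ℝ γ y (b i)) x =
      dirAvg θ γ 1 x - (k + 1) * dirMoment k θ γ x := by
  rw [hγ.sum_dirMoment_fderiv b hθ]
  simp [dirMoment, mul_assoc]

theorem exists_isDualBounded_dirAvg (hθ : IsTestFun θ) {m : ℕ}
    (hm : Module.finrank ℝ E < 2 * m) :
    ∃ C, 0 ≤ C ∧ ∀ γ : E → ℝ, IsTestFun γ →
      IsDualBounded m univ (C * √(∫ x, γ x ^ 2)) (dirAvg θ γ 1) := by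
  obtain ⟨Θ, hΘ⟩ := hθ.exists_schwartzMap_eq
  obtain ⟨C, hC, hbound⟩ := exists_norm_schwartz_le_inv_pow (𝓕⁻ Θ) m
  refine ⟨C, hC, fun γ hγ => ?_⟩
  obtain ⟨g, hg⟩ := hγ.exists_schwartzMap_eq
  rw [integral_sq_eq_integral_norm_fourier_sq hg]
  refine isDualBounded_of_eq_integral_planeWave hm ((𝓕 g).memLp 2 volume)
    (𝓕⁻ Θ).continuous.aestronglyMeasurable hC hbound fun u => ?_
  have hspectral := integral_schwartz_add_smul_mul g Θ 1 u
  simp only [one_smul] at hspectral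
  simp only [← hspectral, dirAvg, ← integral_complex_ofReal, one_smul, hg, hΘ,
    Complex.ofReal_mul]

theorem exists_isDualBounded_dirMoment (hθ : IsTestFun θ) {k : ℕ}
    (hk : Module.finrank ℝ E < 2 * (k + 1)) :
    ∃ C, 0 ≤ C ∧ ∀ γ : E → ℝ, IsTestFun γ →
      IsDualBounded (k + 1) univ (C * √(∫ x, γ x ^ 2)) (dirMoment k θ γ) := by
  obtain ⟨Θ, hΘ⟩ := hθ.exists_schwartzMap_eq
  obtain ⟨C, hC, hbound⟩ := exists_norm_coneMultiplier_le k (𝓕⁻ Θ)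
  refine ⟨C, hC, fun γ hγ => ?_⟩
  obtain ⟨g, hg⟩ := hγ.exists_schwartzMap_eq
  rw [integral_sq_eq_integral_norm_fourier_sq hg]
  refine isDualBounded_of_eq_integral_planeWave hk ((𝓕 g).memLp 2 volume)
    (continuous_coneMultiplier k _).aestronglyMeasurable hC hbound fun u => ?_
  rw [← integral_pow_mul_schwartz_add_smul_mul, dirMoment, ← intervalIntegral.integral_ofReal]
  simp only [hg, hΘ, dirAvg, Complex.ofReal_mul, ← integral_complex_ofReal]

end IsTestFun

section Mollify

variable {κ g : E → ℝ}

theorem lintegral_ofReal_const_sub_eq_one (hκ : Integrable κ) (hκ0 : ∀ x, 0 ≤ κ x)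
    (hκ1 : ∫ x, κ x = 1) (x : E) : ∫⁻ y, ENNReal.ofReal (κ (x - y)) = 1 := by
  rw [lintegral_sub_left_eq_self (fun y => ENNReal.ofReal (κ y)) x,
    ← ofReal_integral_eq_lintegral_ofReal hκ (.of_forall hκ0), hκ1, ENNReal.ofReal_one]

theorem enorm_mollify_sq_le (hκ : Integrable κ) (hκm : Measurable κ) (hκ0 : ∀ x, 0 ≤ κ x)
    (hκ1 : ∫ x, κ x = 1) (hg : AEMeasurable g volume) (x : E) :
    ‖mollify κ g x‖ₑ ^ 2 ≤ ∫⁻ y, ENNReal.ofReal (κ (x - y)) * ‖g y‖ₑ ^ 2 := by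
  have hsqrt : ∀ y, ENNReal.ofReal (√(κ (x - y))) ^ 2 = ENNReal.ofReal (κ (x - y)) := fun y => by
    rw [← ENNReal.ofReal_pow (Real.sqrt_nonneg _), Real.sq_sqrt (hκ0 _)]
  have hsqrt_meas : AEMeasurable (fun y => ENNReal.ofReal (√(κ (x - y)))) volume :=
    Measurable.aemeasurable (by fun_prop)
  have hle : ‖mollify κ g x‖ₑ ≤ ∫⁻ y, ENNReal.ofReal (√(κ (x - y))) *
      (ENNReal.ofReal (√(κ (x - y))) * ‖g y‖ₑ) := by
    refine (enorm_integral_le_lintegral_enorm _).trans (le_of_eq (lintegral_congr fun y => ?_))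
    rw [enorm_mul, Real.enorm_of_nonneg (hκ0 _), ← mul_assoc, ← sq, hsqrt]
  refine (pow_le_pow_left₀ zero_le hle 2).trans
    ((lintegral_mul_sq_le hsqrt_meas (hsqrt_meas.mul hg.enorm)).trans (le_of_eq ?_))
  simp only [Pi.mul_apply, hsqrt, lintegral_ofReal_const_sub_eq_one hκ hκ0 hκ1, one_mul, mul_pow]

theorem lintegral_enorm_mollify_sq_le (hκ : Integrable κ) (hκm : Measurable κ)
    (hκ0 : ∀ x, 0 ≤ κ x) (hκ1 : ∫ x, κ x = 1) (hg : AEMeasurable g volume) :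
    ∫⁻ x, ‖mollify κ g x‖ₑ ^ 2 ≤ ∫⁻ y, ‖g y‖ₑ ^ 2 := by
  refine (lintegral_mono (enorm_mollify_sq_le hκ hκm hκ0 hκ1 hg)).trans (le_of_eq ?_)
  have hκ_meas : Measurable fun p : E × E => ENNReal.ofReal (κ (p.1 - p.2)) := by fun_prop
  rw [lintegral_lintegral_swap (hκ_meas.aemeasurable.mul (hg.enorm.pow_const 2).comp_snd)]
  refine lintegral_congr fun y => ?_
  have hκy : Measurable fun x => ENNReal.ofReal (κ (x - y)) := by fun_prop
  have hone := lintegral_ofReal_const_sub_eq_one hκ hκ0 hκ1 y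
  rw [lintegral_sub_left_eq_self (fun x => ENNReal.ofReal (κ x)) y] at hone
  rw [lintegral_mul_const _ hκy, lintegral_sub_right_eq_self (fun x => ENNReal.ofReal (κ x)) y,
    hone, one_mul]

theorem integral_sq_eq_toReal_lintegral_enorm_sq {α : Type*} [MeasurableSpace α] {μ : Measure α}
    {f : α → ℝ} (hf : AEStronglyMeasurable f μ) :
    ∫ a, f a ^ 2 ∂μ = (∫⁻ a, ‖f a‖ₑ ^ 2 ∂μ).toReal := by
  have hnorm := integral_norm_eq_lintegral_enorm (hf.pow 2)
  simpa only [Pi.pow_apply, norm_pow, Real.norm_eq_abs, sq_abs, enorm_pow] using hnorm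

theorem integral_mollify_sq_le (hκt : IsTestFun κ) (hκ0 : ∀ x, 0 ≤ κ x)
    (hκ1 : ∫ x, κ x = 1) (hg : MemLp g 2 volume) :
    ∫ x, mollify κ g x ^ 2 ≤ ∫ x, g x ^ 2 := by
  have hfin : ∫⁻ y, ‖g y‖ₑ ^ 2 ≠ ⊤ := by
    have hLp := (eLpNorm_lt_top_iff_lintegral_rpow_enorm_lt_top two_ne_zero
      ENNReal.ofNat_ne_top).1 hg.2
    simpa using hLp.ne
  have hmollify := (contDiff_mollify hκt (hg.locallyIntegrable one_le_two)).continuous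
  rw [integral_sq_eq_toReal_lintegral_enorm_sq hmollify.aestronglyMeasurable,
    integral_sq_eq_toReal_lintegral_enorm_sq hg.1]
  exact ENNReal.toReal_mono hfin (lintegral_enorm_mollify_sq_le hκt.integrable
    hκt.continuous.measurable hκ0 hκ1 hg.1.aemeasurable)

theorem isTestFun_mollify (hκ : IsTestFun κ) (hg : LocallyIntegrable g)
    (hg_supp : Bornology.IsBounded (support g)) : IsTestFun (mollify κ g) := by
  refine ⟨contDiff_mollify hκ hg, ?_⟩
  rw [mollify_eq_convolution]
  exact hκ.hasCompactSupport.convolution _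
    (HasCompactSupport.of_support_subset_isCompact hg_supp.isCompact_closure subset_closure)

end Mollify

/-- A smooth averaging kernel whose mollifications at points of `Ω` only see values on `Ω`. -/
structure IsInwardKernel (Ω : Set E) (κ : E → ℝ) : Prop where
  isTestFun : IsTestFun κ
  nonneg : ∀ x, 0 ≤ κ x
  integral_eq_one : ∫ x, κ x = 1
  tsupport_subset : ∀ x ∈ Ω, tsupport (fun y => κ (x - y)) ⊆ Ω

/-- Every point of `Ω` may be moved along any direction close to `w₀` without leaving `Ω`. -/
def IsConeStable (Ω : Set E) (w₀ : E) (ρ : ℝ) : Prop :=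
  ∀ x ∈ Ω, ∀ t : ℝ, 0 ≤ t → ∀ w ∈ ball w₀ ρ, x + t • w ∈ Ω

section UniformBound

variable {K Ω : Set E} {w₀ : E} {ρ : ℝ} {θ κ g : E → ℝ}

theorem IsConeStable.dirAvg_congr (hcone : IsConeStable Ω w₀ ρ) {γ γ' : E → ℝ}
    (hθ : support θ ⊆ ball w₀ ρ) (hγ : EqOn γ γ' Ω) {x : E} (hx : x ∈ Ω) {t : ℝ} (ht : 0 ≤ t) :
    dirAvg θ γ t x = dirAvg θ γ' t x := by
  refine integral_congr_ae (.of_forall fun w => ?_)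
  by_cases hw : w ∈ support θ
  · simp only [hγ (hcone x hx t ht w (hθ hw))]
  · simp only [notMem_support.1 hw, mul_zero]

theorem IsConeStable.dirMoment_congr (hcone : IsConeStable Ω w₀ ρ) {γ γ' : E → ℝ}
    (hθ : support θ ⊆ ball w₀ ρ) (hγ : EqOn γ γ' Ω) {x : E} (hx : x ∈ Ω) (k : ℕ) :
    dirMoment k θ γ x = dirMoment k θ γ' x := by
  refine intervalIntegral.integral_congr fun t ht => ?_
  rw [uIcc_of_le zero_le_one] at ht
  simp only [hcone.dirAvg_congr hθ hγ hx ht.1]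

omit [FiniteDimensional ℝ E] [MeasurableSpace E] [BorelSpace E] in
theorem support_inner_mul_subset {S : Set E} (hθ : support θ ⊆ S) (v : E) :
    support (fun w => inner ℝ v w * θ w) ⊆ S :=
  fun _ hw => hθ (right_ne_zero_of_mul hw)

theorem IsConeStable.sum_dirMoment_mollify (hcone : IsConeStable Ω w₀ ρ) {ι : Type*} [Fintype ι]
    (b : OrthonormalBasis ι ℝ E) (hκ : IsInwardKernel Ω κ) (hθ : support θ ⊆ ball w₀ ρ)
    (hg : LocallyIntegrable g) {h : ι → E → ℝ} (hgh : ∀ i, HasWeakLineDeriv Ω (b i) g (h i))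
    {x : E} (hx : x ∈ Ω) (k : ℕ) :
    ∑ i, dirMoment k (fun w => inner ℝ (b i) w * θ w) (mollify κ (h i)) x =
      ∑ i, dirMoment k (fun w => inner ℝ (b i) w * θ w)
        (fun y => fderiv ℝ (mollify κ g) y (b i)) x :=
  Finset.sum_congr rfl fun i _ => hcone.dirMoment_congr (support_inner_mul_subset hθ (b i))
    (fun y hy => ((hgh i).fderiv_mollify_apply hκ.isTestFun hg (hκ.tsupport_subset y hy)).symm)
    hx k

theorem exists_isDualBounded_dirAvg_mollify {m : ℕ} (hm : Module.finrank ℝ E < 2 * m)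
    (hθ : IsTestFun θ) (hg : MemLp g 2 volume) (hg_supp : Bornology.IsBounded (support g)) :
    ∃ M : ℝ, ∀ κ, IsInwardKernel Ω κ → IsDualBounded m Ω M (dirAvg θ (mollify κ g) 1) := by
  obtain ⟨C, hC, hbound⟩ := hθ.exists_isDualBounded_dirAvg hm
  refine ⟨C * √(∫ x, g x ^ 2), fun κ hκ => ?_⟩
  have hmollify := isTestFun_mollify hκ.isTestFun (hg.locallyIntegrable one_le_two) hg_supp
  refine ((hbound _ hmollify).mono_set (subset_univ Ω)).mono_bound ?_
  exact mul_le_mul_of_nonneg_left (Real.sqrt_le_sqrt (integral_mollify_sq_le hκ.isTestFun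
    hκ.nonneg hκ.integral_eq_one hg)) hC

theorem exists_isDualBounded_dirMoment_mollify {k : ℕ} (hk : Module.finrank ℝ E < 2 * (k + 1))
    (hθ : IsTestFun θ) (hg : MemLp g 2 volume) (hg_supp : Bornology.IsBounded (support g)) :
    ∃ M : ℝ, ∀ κ, IsInwardKernel Ω κ →
      IsDualBounded (k + 1) Ω M (dirMoment k θ (mollify κ g)) := by
  obtain ⟨C, hC, hbound⟩ := hθ.exists_isDualBounded_dirMoment hk
  refine ⟨C * √(∫ x, g x ^ 2), fun κ hκ => ?_⟩
  have hmollify := isTestFun_mollify hκ.isTestFun (hg.locallyIntegrable one_le_two) hg_supp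
  refine ((hbound _ hmollify).mono_set (subset_univ Ω)).mono_bound ?_
  exact mul_le_mul_of_nonneg_left (Real.sqrt_le_sqrt (integral_mollify_sq_le hκ.isTestFun
    hκ.nonneg hκ.integral_eq_one hg)) hC

/-- Each integration by parts in the scale trades one weak derivative of `g` for one power of `t`,
which in turn gains one order of decay of the Fourier multiplier. -/
theorem IsConeStable.exists_isDualBounded_dirMoment_mollify (hcone : IsConeStable Ω w₀ ρ)
    (hK : Bornology.IsBounded K) {m : ℕ} (hm : Module.finrank ℝ E < 2 * m) (n k : ℕ)
    (hnk : n + (k + 1) = m) {θ : E → ℝ} (hθ : IsTestFun θ) (hθ_supp : support θ ⊆ ball w₀ ρ)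
    {g : E → ℝ} (hg : SobolevOn 2 K Ω n g) :
    ∃ M : ℝ, ∀ κ, IsInwardKernel Ω κ → IsDualBounded m Ω M (dirMoment k θ (mollify κ g)) := by
  induction n generalizing k θ g with
  | zero =>
    obtain rfl : k + 1 = m := by omega
    exact _root_.exists_isDualBounded_dirMoment_mollify hm hθ hg.memLp
      (hK.subset hg.support_subset)
  | succ n ih =>
    have hg_loc := hg.memLp.locallyIntegrable one_le_two
    have hg_supp := hK.subset hg.support_subset
    let b := stdOrthonormalBasis ℝ E
    choose h hgh hh using fun i => hg.2 (b i)
    obtain ⟨M₀, hM₀⟩ := exists_isDualBounded_dirAvg_mollify (Ω := Ω) hm hθ hg.memLp hg_supp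
    choose M hM using fun i => ih (k + 1) (by omega) (hθ.inner_mul (b i))
      (support_inner_mul_subset hθ_supp (b i)) (hh i)
    refine ⟨|((k : ℝ) + 1)⁻¹| * (M₀ + ∑ i, M i), fun κ hκ => (((hM₀ κ hκ).sub
      (.sum Finset.univ fun i _ => hM i κ hκ)).const_mul _).congr fun x hx => ?_⟩
    have hγ := isTestFun_mollify hκ.isTestFun hg_loc hg_supp
    simp only [hcone.sum_dirMoment_mollify b hκ hθ_supp hg_loc hgh hx,
      hγ.sum_dirMoment_succ_fderiv b hθ]
    have hk : (k : ℝ) + 1 ≠ 0 := by positivity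
    field_simp
    ring

theorem dirAvg_normed_zero (β : ContDiffBump w₀) (γ : E → ℝ) (x : E) :
    dirAvg (β.normed volume) γ 0 x = γ x := by
  simp only [dirAvg, zero_smul, add_zero]
  rw [integral_const_mul, β.integral_normed, mul_one]

theorem IsConeStable.exists_isDualBounded_mollify (hcone : IsConeStable Ω w₀ ρ) (hρ : 0 < ρ)
    (hK : Bornology.IsBounded K) {m : ℕ} (hm : Module.finrank ℝ E < 2 * m)
    (hg : SobolevOn 2 K Ω m g) :
    ∃ M : ℝ, ∀ κ, IsInwardKernel Ω κ → IsDualBounded m Ω M (mollify κ g) := by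
  obtain ⟨n, rfl⟩ : ∃ n, m = n + 1 := ⟨m - 1, by omega⟩
  have hg_loc := hg.memLp.locallyIntegrable one_le_two
  have hg_supp := hK.subset hg.support_subset
  let β : ContDiffBump w₀ := ⟨ρ / 2, ρ, by positivity, by linarith⟩
  have hθ := isTestFun_normed β
  have hθ_supp : support (β.normed volume) ⊆ ball w₀ ρ := β.support_normed_eq.subset
  let b := stdOrthonormalBasis ℝ E
  choose h hgh hh using fun i => hg.2 (b i)
  obtain ⟨M₀, hM₀⟩ := exists_isDualBounded_dirAvg_mollify (Ω := Ω) hm hθ hg.memLp hg_supp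
  choose M hM using fun i => hcone.exists_isDualBounded_dirMoment_mollify hK hm n 0 (by omega)
    (hθ.inner_mul (b i)) (support_inner_mul_subset hθ_supp (b i)) (hh i)
  refine ⟨M₀ + ∑ i, M i, fun κ hκ => ((hM₀ κ hκ).sub
    (.sum Finset.univ fun i _ => hM i κ hκ)).congr fun x hx => ?_⟩
  have hγ := isTestFun_mollify hκ.isTestFun hg_loc hg_supp
  simp only [hcone.sum_dirMoment_mollify b hκ hθ_supp hg_loc hgh hx,
    hγ.sum_dirMoment_zero_fderiv b hθ, dirAvg_normed_zero, sub_sub_cancel]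

end UniformBound

section InwardBump

variable {K Ω : Set E} {w₀ : E} {ρ : ℝ}

/-- Bump functions shrinking to the origin along the direction `-w₀`. -/
noncomputable def inwardBump (w₀ : E) {ρ : ℝ} (hρ : 0 < ρ) (j : ℕ) :
    ContDiffBump (-((1 : ℝ) / (j + 1)) • w₀) :=
  ⟨ρ / 4 / (j + 1), ρ / 2 / (j + 1), by positivity, by gcongr; norm_num⟩

omit [FiniteDimensional ℝ E] [MeasurableSpace E] [BorelSpace E] in
theorem IsConeStable.mem_of_norm_sub_le (hcone : IsConeStable Ω w₀ ρ) {x y : E} (hx : x ∈ Ω)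
    {t r : ℝ} (ht : 0 < t) (hr : r < t * ρ) (hy : ‖x - y - -t • w₀‖ ≤ r) : y ∈ Ω := by
  have hdir : t⁻¹ • (y - x) ∈ ball w₀ ρ := by
    have hrescale : t⁻¹ • (y - x) - w₀ = -(t⁻¹ • (x - y - -t • w₀)) := by
      rw [smul_sub t⁻¹ (x - y), neg_smul, smul_neg, inv_smul_smul₀ ht.ne', ← neg_sub x y, smul_neg]
      abel
    rw [mem_ball_iff_norm, hrescale, norm_neg, norm_smul, Real.norm_of_nonneg (by positivity),
      inv_mul_lt_iff₀ ht]
    exact hy.trans_lt hr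
  simpa [smul_inv_smul₀ ht.ne'] using hcone x hx t ht.le _ hdir

theorem IsConeStable.isInwardKernel_inwardBump (hcone : IsConeStable Ω w₀ ρ) (hρ : 0 < ρ)
    (j : ℕ) : IsInwardKernel Ω ((inwardBump w₀ hρ j).normed volume) := by
  refine ⟨isTestFun_normed _, fun x => (inwardBump w₀ hρ j).nonneg_normed x,
    (inwardBump w₀ hρ j).integral_normed, fun x hx => ?_⟩
  have hclosed : IsClosed {y : E | x - y ∈ closedBall (-((1 : ℝ) / (j + 1)) • w₀)
      (ρ / 2 / (j + 1))} := isClosed_closedBall.preimage (by fun_prop)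
  refine (closure_minimal (fun y hy => ?_) hclosed).trans fun y hy => ?_
  · exact ball_subset_closedBall ((inwardBump w₀ hρ j).support_normed_eq.subset hy)
  · refine hcone.mem_of_norm_sub_le hx (by positivity) ?_ (mem_closedBall_iff_norm.1 hy)
    rw [one_div_mul_eq_div]
    gcongr
    linarith

theorem support_normed_inwardBump_subset (hρ : 0 < ρ) (j : ℕ) :
    support ((inwardBump w₀ hρ j).normed volume) ⊆
      ball 0 ((‖w₀‖ + ρ) * (1 / ((j : ℝ) + 1))) := by
  rw [(inwardBump w₀ hρ j).support_normed_eq]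
  refine ball_subset_ball' ?_
  rw [dist_zero_right, norm_smul, norm_neg, Real.norm_of_nonneg (by positivity)]
  have hrOut : (inwardBump w₀ hρ j).rOut ≤ ρ * (1 / ((j : ℝ) + 1)) := by
    simp only [inwardBump, mul_one_div]
    gcongr
    linarith
  linarith

theorem tendsto_mollify_inwardBump (hρ : 0 < ρ) {g : E → ℝ}
    (hg : AEStronglyMeasurable g volume) {x : E} (hx : ContinuousAt g x) :
    Tendsto (fun j => mollify ((inwardBump w₀ hρ j).normed volume) g x) atTop (𝓝 (g x)) := by
  rw [Metric.tendsto_nhds]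
  intro ε hε
  obtain ⟨δ, hδ, hδε⟩ := Metric.continuousAt_iff.1 hx (ε / 2) (by positivity)
  have hlim : Tendsto (fun j : ℕ => (‖w₀‖ + ρ) * (1 / ((j : ℝ) + 1))) atTop (𝓝 0) := by
    simpa using tendsto_one_div_add_atTop_nhds_zero_nat.const_mul (‖w₀‖ + ρ)
  filter_upwards [hlim.eventually_lt_const hδ] with j hj
  refine lt_of_le_of_lt ?_ (half_lt_self hε)
  rw [mollify_eq_convolution]
  exact dist_convolution_le (R := δ) (by positivity)
    ((support_normed_inwardBump_subset hρ j).trans (ball_subset_ball hj.le))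
    (fun x => (inwardBump w₀ hρ j).nonneg_normed x) (inwardBump w₀ hρ j).integral_normed hg
    fun y hy => (hδε hy).le

theorem IsConeStable.exists_isDualBounded (hcone : IsConeStable Ω w₀ ρ) (hρ : 0 < ρ)
    (hΩ : IsOpen Ω) (hK : Bornology.IsBounded K) {m : ℕ} (hm : Module.finrank ℝ E < 2 * m)
    {g : E → ℝ} (hg : SobolevOn 2 K Ω m g) (hg_cont : ContinuousOn g Ω) :
    ∃ M : ℝ, IsDualBounded m Ω M g := by
  obtain ⟨M, hM⟩ := hcone.exists_isDualBounded_mollify hρ hK hm hg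
  exact ⟨M, .of_tendsto (fun j => hM _ (hcone.isInwardKernel_inwardBump hρ j)) fun u hu =>
    tendsto_mollify_inwardBump hρ hg.memLp.1 ((hg_cont u hu).continuousAt (hΩ.mem_nhds hu))⟩

end InwardBump

end ConeDuality

section Localisation

open Set Function Filter Metric
open scoped Topology ENNReal ContDiff

section ConeHull

variable {E : Type*} [NormedAddCommGroup E] [NormedSpace ℝ E] {U : Set E} {w₀ : E} {ρ : ℝ}

/-- The smallest superset of `U` stable under the cone of directions `ball w₀ ρ`. -/
def coneHull (U : Set E) (w₀ : E) (ρ : ℝ) : Set E :=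
  {q | ∃ x ∈ U, ∃ t : ℝ, 0 ≤ t ∧ ∃ w ∈ ball w₀ ρ, x + t • w = q}

theorem isOpen_coneHull (hU : IsOpen U) (w₀ : E) (ρ : ℝ) : IsOpen (coneHull U w₀ ρ) := by
  have hunion : coneHull U w₀ ρ = ⋃ p : {p : ℝ × E // 0 ≤ p.1 ∧ p.2 ∈ ball w₀ ρ},
      (fun x => x + p.1.1 • p.1.2) '' U := by
    ext q
    simp only [coneHull, mem_ofPred_eq, mem_iUnion, mem_image]
    constructor
    · rintro ⟨x, hx, t, ht, w, hw, hq⟩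
      exact ⟨⟨(t, w), ht, hw⟩, x, hx, hq⟩
    · rintro ⟨⟨⟨t, w⟩, ht, hw⟩, x, hx, hq⟩
      exact ⟨x, hx, t, ht, w, hw, hq⟩
  rw [hunion]
  exact isOpen_iUnion fun p => isOpenMap_add_right _ U hU

theorem subset_coneHull (hρ : 0 < ρ) : U ⊆ coneHull U w₀ ρ :=
  fun x hx => ⟨x, hx, 0, le_rfl, w₀, mem_ball_self hρ, by simp⟩

theorem coneHull_inter_ball_subset (hU : Convex ℝ U) {z₀ p : E} {r : ℝ} (hz₀ : ball z₀ r ⊆ U) :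
    coneHull U (z₀ - p) (r / 2) ∩ ball p (r / 2) ⊆ U := by
  rintro q ⟨⟨x, hx, t, ht, w, hw, hq⟩, hqp⟩
  have hwq : w + q ∈ U := by
    refine hz₀ ?_
    rw [mem_ball_iff_norm] at hw hqp ⊢
    calc ‖w + q - z₀‖ = ‖(w - (z₀ - p)) + (q - p)‖ := by congr 1; abel
      _ ≤ ‖w - (z₀ - p)‖ + ‖q - p‖ := norm_add_le _ _
      _ < r := by linarith
  have ht' : 1 + t ≠ 0 := by positivity
  have hcomb : (1 + t)⁻¹ • x + (t * (1 + t)⁻¹) • (w + q) = q := by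
    rw [← sub_eq_of_eq_add hq.symm]
    match_scalars <;> field_simp
    ring
  rw [← hcomb]
  exact hU hx hwq (by positivity) (by positivity) (by field_simp)

end ConeHull

variable {E : Type*} [NormedAddCommGroup E] [InnerProductSpace ℝ E] [FiniteDimensional ℝ E]
  [MeasurableSpace E] [BorelSpace E]

omit [FiniteDimensional ℝ E] [MeasurableSpace E] [BorelSpace E] in
theorem isConeStable_coneHull (U : Set E) (w₀ : E) (ρ : ℝ) :
    IsConeStable (coneHull U w₀ ρ) w₀ ρ := by
  rintro _ ⟨y, hy, t', ht', w', hw', rfl⟩ t ht w hw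
  obtain ⟨z, hz, hzw⟩ := (convex_ball w₀ ρ).exists_mem_add_smul_eq hw' hw ht' ht
  exact ⟨y, hy, t' + t, by positivity, z, hz, by rw [hzw, add_assoc]⟩

section Cutoff

variable {p : ℝ≥0∞} {K U Ω : Set E} {f h χ : E → ℝ}

theorem HasWeakLineDeriv.testFun_mul (hχ : IsTestFun χ) (hχU : tsupport χ ∩ Ω ⊆ U) {v : E}
    (hf : LocallyIntegrable f) (hh : LocallyIntegrable h) (hfh : HasWeakLineDeriv U v f h) :
    HasWeakLineDeriv Ω v (fun x => χ x * f x) (fun x => fderiv ℝ χ x v * f x + χ x * h x) := by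
  intro ψ hψ hψΩ
  have hsupp : tsupport (fun x => χ x * ψ x) ⊆ U := fun x hx =>
    hχU ⟨tsupport_mul_subset_left hx, hψΩ (tsupport_mul_subset_right hx)⟩
  have htest := hfh _ (hχ.mul_contDiff hψ.contDiff) hsupp
  have hderiv : ∀ x, fderiv ℝ (fun x => χ x * ψ x) x v =
      χ x * fderiv ℝ ψ x v + fderiv ℝ χ x v * ψ x := fun x => by
    rw [fderiv_fun_mul (hχ.differentiable x) (hψ.differentiable x)]
    simp [mul_comm]
  have hχψ' := (hχ.mul_contDiff (hψ.fderiv_apply v).contDiff).integrable_mul hf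
  have hχ'ψ := ((hχ.fderiv_apply v).mul_contDiff hψ.contDiff).integrable_mul hf
  have hχψ := (hχ.mul_contDiff hψ.contDiff).integrable_mul hh
  simp only [hderiv, mul_add] at htest
  rw [integral_add hχψ' hχ'ψ] at htest
  have hlhs : ∫ x, χ x * f x * fderiv ℝ ψ x v = ∫ x, f x * (χ x * fderiv ℝ ψ x v) :=
    integral_congr_ae (.of_forall fun x => by ring)
  have hrhs : ∫ x, (fderiv ℝ χ x v * f x + χ x * h x) * ψ x =
      (∫ x, f x * (fderiv ℝ χ x v * ψ x)) + ∫ x, h x * (χ x * ψ x) := by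
    rw [← integral_add hχ'ψ hχψ]
    exact integral_congr_ae (.of_forall fun x => by ring)
  rw [hlhs, hrhs]
  linarith

theorem IsTestFun.memLp_mul (hχ : IsTestFun χ) (hf : MemLp f p volume) :
    MemLp (fun x => χ x * f x) p volume := by
  obtain ⟨C, hC⟩ := hχ.exists_bound
  refine (hf.const_mul C).mono (hχ.continuous.aestronglyMeasurable.mul hf.1)
    (.of_forall fun x => ?_)
  rw [norm_mul, norm_mul]
  exact mul_le_mul_of_nonneg_right ((hC x).trans (le_abs_self C)) (norm_nonneg _)

theorem SobolevOn.testFun_mul (hp : 1 ≤ p) {n : ℕ} (hχ : IsTestFun χ)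
    (hχU : tsupport χ ∩ Ω ⊆ U) (hf : SobolevOn p K U n f) :
    SobolevOn p K Ω n fun x => χ x * f x := by
  have hzero : ∀ {f χ : E → ℝ}, IsTestFun χ → MemLp f p volume ∧ support f ⊆ K →
      MemLp (fun x => χ x * f x) p volume ∧ support (fun x => χ x * f x) ⊆ K := fun hχ hf =>
    ⟨hχ.memLp_mul hf.1, fun x hx => hf.2 (right_ne_zero_of_mul hx)⟩
  induction n generalizing f χ with
  | zero => exact hzero hχ hf
  | succ n ih =>
    refine ⟨hzero hχ hf.1, fun v => ?_⟩
    obtain ⟨h, hfh, hh⟩ := hf.2 v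
    have hχ'U : tsupport (fun x => fderiv ℝ χ x v) ∩ Ω ⊆ U :=
      (inter_subset_inter_left _ (tsupport_fderiv_apply_subset_tsupport χ v)).trans hχU
    exact ⟨fun x => fderiv ℝ χ x v * f x + χ x * h x,
      .testFun_mul hχ hχU (hf.memLp.locallyIntegrable hp) (hh.memLp.locallyIntegrable hp) hfh,
      (ih (hχ.fderiv_apply v) hχ'U hf.of_succ).add hp (ih hχ hχU hh)⟩

omit [FiniteDimensional ℝ E] [MeasurableSpace E] [BorelSpace E] in
theorem IsTestFun.continuousOn_mul (hχ : IsTestFun χ) (hχU : tsupport χ ∩ Ω ⊆ U) (hU : IsOpen U)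
    (hf : ContinuousOn f U) : ContinuousOn (fun x => χ x * f x) Ω := by
  intro x hx
  refine ContinuousAt.continuousWithinAt ?_
  by_cases hxχ : x ∈ tsupport χ
  · exact hχ.continuous.continuousAt.mul (hf.continuousAt (hU.mem_nhds (hχU ⟨hxχ, hx⟩)))
  · refine (continuousAt_const (y := (0 : ℝ))).congr ?_
    filter_upwards [(isClosed_tsupport χ).isOpen_compl.mem_nhds hxχ] with y hy
    rw [image_eq_zero_of_notMem_tsupport hy, zero_mul]

end Cutoff

section Convex

variable {U : Set E} {z₀ : E} {r : ℝ} {m : ℕ} {f : E → ℝ}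

theorem exists_isDualBounded_testFun_mul (hU_bdd : Bornology.IsBounded U) (hU_open : IsOpen U)
    (hU_conv : Convex ℝ U) (hr : 0 < r) (hz₀ : ball z₀ r ⊆ U) (hm : Module.finrank ℝ E < 2 * m)
    (hf : SobolevOn 2 U U m f) (hf_cont : ContinuousOn f U) {p : E} {χ : E → ℝ}
    (hχ : IsTestFun χ) (hχp : tsupport χ ⊆ ball p (r / 2)) :
    ∃ M : ℝ, IsDualBounded m U M fun u => χ u * f u := by
  have hχU : tsupport χ ∩ coneHull U (z₀ - p) (r / 2) ⊆ U := fun x hx =>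
    coneHull_inter_ball_subset hU_conv hz₀ ⟨hx.2, hχp hx.1⟩
  obtain ⟨M, hM⟩ := (isConeStable_coneHull U (z₀ - p) (r / 2)).exists_isDualBounded (half_pos hr)
    (isOpen_coneHull hU_open _ _) hU_bdd hm (hf.testFun_mul one_le_two hχ hχU)
    (hχ.continuousOn_mul hχU hU_open hf_cont)
  exact ⟨M, hM.mono_set (subset_coneHull (half_pos hr))⟩

/-- Multiplying by `1 - ψ` for a bump `ψ` equal to `1` near `p` removes the centre `p` from the
cover, and the complementary factor `ψ` is localised near `p`. -/
theorem exists_isDualBounded_contDiff_mul (hU_bdd : Bornology.IsBounded U) (hU_open : IsOpen U)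
    (hU_conv : Convex ℝ U) (hr : 0 < r) (hz₀ : ball z₀ r ⊆ U) (hm : Module.finrank ℝ E < 2 * m)
    (hf : SobolevOn 2 U U m f) (hf_cont : ContinuousOn f U) (T : Finset E) {φ : E → ℝ}
    (hφ : ContDiff ℝ ∞ φ) (hφT : ∀ u ∈ U, (∀ p ∈ T, u ∉ ball p (r / 8)) → φ u = 0) :
    ∃ M : ℝ, IsDualBounded m U M fun u => φ u * f u := by
  induction T using Finset.cons_induction generalizing φ with
  | empty => exact ⟨0, IsDualBounded.zero.congr fun u hu => by simp [hφT u hu (by simp)]⟩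
  | cons p T _ ih =>
    let ψ : ContDiffBump p := ⟨r / 8, r / 4, by positivity, by linarith⟩
    have hφψ : IsTestFun fun x => φ x * ψ x := ⟨hφ.mul ψ.contDiff, ψ.hasCompactSupport.mul_left⟩
    have hφψ_supp : tsupport (fun x => φ x * ψ x) ⊆ ball p (r / 2) :=
      (tsupport_mul_subset_right.trans ψ.tsupport_eq.subset).trans
        (closedBall_subset_ball (show r / 4 < r / 2 by linarith))
    have hφψ_zero : ∀ u ∈ U, (∀ q ∈ T, u ∉ ball q (r / 8)) → φ u * (1 - ψ u) = 0 := by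
      intro u hu huT
      by_cases hup : u ∈ ball p (r / 8)
      · rw [ψ.one_of_mem_closedBall (ball_subset_closedBall hup), sub_self, mul_zero]
      · rw [hφT u hu ((Finset.forall_mem_cons _ _).2 ⟨hup, huT⟩), zero_mul]
    obtain ⟨M₁, hM₁⟩ := exists_isDualBounded_testFun_mul hU_bdd hU_open hU_conv hr hz₀ hm hf
      hf_cont hφψ hφψ_supp
    obtain ⟨M₂, hM₂⟩ := ih (hφ.mul (contDiff_const.sub ψ.contDiff)) hφψ_zero
    exact ⟨M₁ + M₂, (hM₁.add hM₂).congr fun u _ => by ring⟩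

theorem SobolevOn.exists_isDualBounded_of_convex (hf : SobolevOn 2 U U m f)
    (hm : Module.finrank ℝ E < 2 * m) (hU_bdd : Bornology.IsBounded U) (hU_open : IsOpen U)
    (hU_conv : Convex ℝ U) (hf_cont : ContinuousOn f U) : ∃ M : ℝ, IsDualBounded m U M f := by
  rcases U.eq_empty_or_nonempty with rfl | ⟨z₀, hz₀U⟩
  · exact ⟨0, IsDualBounded.zero.congr fun u hu => hu.elim⟩
  obtain ⟨r, hr, hz₀⟩ := Metric.isOpen_iff.1 hU_open z₀ hz₀U
  obtain ⟨T, -, hT⟩ := hU_bdd.isCompact_closure.elim_nhds_subcover (fun p => ball p (r / 8))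
    fun p _ => ball_mem_nhds p (by positivity)
  obtain ⟨M, hM⟩ := exists_isDualBounded_contDiff_mul hU_bdd hU_open hU_conv hr hz₀ hm hf hf_cont
    T (φ := fun _ => 1) contDiff_const fun u hu huT => by
      obtain ⟨p, hp, hup⟩ := mem_iUnion₂.1 (hT (subset_closure hu))
      exact absurd hup (huT p hp)
  exact ⟨M, hM.congr fun u _ => one_mul (f u)⟩

end Convex

end Localisation

section SpectralMeasure

open Set Function

variable {E : Type*} [NormedAddCommGroup E] [InnerProductSpace ℝ E]

theorem inner_planeWave (ξ x y : E) :
    inner ℝ (planeWave ξ x) (planeWave ξ y) = (planeWave ξ (y - x)).re := by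
  rw [Complex.inner, planeWave, planeWave, planeWave, ← Complex.exp_conj, ← Complex.exp_add,
    map_mul, Complex.conj_ofReal, Complex.conj_I, inner_sub_right]
  congr 2
  push_cast
  ring

variable [MeasurableSpace E] [BorelSpace E] (μ : Measure E) [IsFiniteMeasure μ]

theorem memLp_planeWave (x : E) : MemLp (fun ξ => planeWave ξ x) 2 μ :=
  .of_bound (continuous_planeWave.comp (Continuous.prodMk_left x)).aestronglyMeasurable 1
    (.of_forall fun ξ => (norm_planeWave ξ x).le)

/-- The feature map of the stationary kernel with spectral measure `μ`. -/
noncomputable def planeWaveLp (x : E) : Lp ℂ 2 μ := (memLp_planeWave μ x).toLp _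

theorem coeFn_planeWaveLp (x : E) : planeWaveLp μ x =ᵐ[μ] fun ξ => planeWave ξ x :=
  (memLp_planeWave μ x).coeFn_toLp

theorem inner_planeWaveLp (x y : E) :
    inner ℝ (planeWaveLp μ x) (planeWaveLp μ y) = ∫ ξ, (planeWave ξ (y - x)).re ∂μ := by
  rw [L2.inner_def]
  refine integral_congr_ae ?_
  filter_upwards [coeFn_planeWaveLp μ x, coeFn_planeWaveLp μ y] with ξ hx hy
  rw [hx, hy, inner_planeWave]

theorem coeFn_sum_smul_planeWaveLp (a : E →₀ ℝ) :
    (a.sum fun u r => r • planeWaveLp μ u : Lp ℂ 2 μ) =ᵐ[μ] trigSum a := by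
  have hterm : ∀ᵐ ξ ∂μ, ∀ u ∈ a.support,
      (a u • planeWaveLp μ u : Lp ℂ 2 μ) ξ = (a u : ℂ) * planeWave ξ u := by
    refine (ae_ball_iff a.support.countable_toSet).2 fun u _ => ?_
    filter_upwards [Lp.coeFn_smul (a u) (planeWaveLp μ u), coeFn_planeWaveLp μ u] with ξ hsmul hu
    rw [hsmul, Pi.smul_apply, hu, Complex.real_smul]
  filter_upwards [Lp.coeFn_finsetSum a.support fun u => a u • planeWaveLp μ u, hterm]
    with ξ hsum hterm
  rw [Finsupp.sum, hsum, Finset.sum_apply]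
  exact Finset.sum_congr rfl hterm

theorem norm_sum_smul_planeWaveLp (a : E →₀ ℝ) :
    ‖a.sum fun u r => r • planeWaveLp μ u‖ = √(∫ ξ, ‖trigSum a ξ‖ ^ 2 ∂μ) := by
  rw [norm_eq_sqrt_real_inner, L2.inner_def]
  congr 1
  refine integral_congr_ae ?_
  filter_upwards [coeFn_sum_smul_planeWaveLp μ a] with ξ hξ
  rw [hξ, real_inner_self_eq_norm_sq]

theorem memRKHS_of_abs_sum_le_sqrt_integral_trigSum {E : Type} [NormedAddCommGroup E]
    [InnerProductSpace ℝ E] [MeasurableSpace E] [BorelSpace E] {μ : Measure E} [IsFiniteMeasure μ]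
    {U : Set E} {f : E → ℝ} {M : ℝ} (hM : ∀ a : E →₀ ℝ, (∀ u ∈ a.support, u ∈ U) →
      |a.sum fun u r => r * f u| ≤ M * √(∫ ξ, ‖trigSum a ξ‖ ^ 2 ∂μ)) :
    MemRKHS (fun u v : U => ∫ ξ, (planeWave ξ ((v : E) - u)).re ∂μ) fun u : U => f u := by
  refine memRKHS_of_abs_sum_le (Φ := fun u : U => planeWaveLp μ (u : E)) (M := M)
    (fun u v => (inner_planeWaveLp μ _ _).symm) fun a => ?_
  have hsupport : ∀ u ∈ (a.embDomain (Embedding.subtype _)).support, u ∈ U := fun u hu => by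
    rw [Finsupp.support_embDomain] at hu
    obtain ⟨v, -, rfl⟩ := Finset.mem_map.1 hu
    exact v.2
  have hbound := hM (a.embDomain (Embedding.subtype _)) hsupport
  rwa [← norm_sum_smul_planeWaveLp, Finsupp.sum_embDomain, Finsupp.sum_embDomain] at hbound

end SpectralMeasure

section MaternSpectralMeasure

open Set Function
open scoped FourierTransform

variable {s : ℕ} {ν η ℓ : ℝ}

theorem maternSpectralDensity_nonneg (hν : 0 < ν) (hη : 0 ≤ η) (ξ : EuclideanSpace ℝ (Fin s)) :
    0 ≤ maternSpectralDensity ν η ℓ ξ := by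
  rw [maternSpectralDensity, gammaMixtureDensity]
  positivity

theorem measurable_maternSpectralDensity :
    Measurable (maternSpectralDensity ν η ℓ : EuclideanSpace ℝ (Fin s) → ℝ) := by
  unfold maternSpectralDensity gammaMixtureDensity
  fun_prop

theorem integral_withDensity_maternSpectralDensity (hν : 0 < ν) (hη : 0 ≤ η)
    (g : EuclideanSpace ℝ (Fin s) → ℝ) :
    ∫ ξ, g ξ ∂(volume.withDensity fun ξ => ENNReal.ofReal (maternSpectralDensity ν η ℓ ξ)) =
      ∫ ξ, g ξ * maternSpectralDensity ν η ℓ ξ := by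
  rw [integral_withDensity_eq_integral_toReal_smul
    measurable_maternSpectralDensity.ennreal_ofReal (.of_forall fun _ => ENNReal.ofReal_lt_top)]
  congr with ξ
  rw [ENNReal.toReal_ofReal (maternSpectralDensity_nonneg hν hη ξ), smul_eq_mul, mul_comm]

theorem maternKernel_eq_integral_re_planeWave (hν : 0 < ν) (hη : 0 ≤ η) (hℓ : 0 < ℓ)
    (x y : EuclideanSpace ℝ (Fin s)) :
    maternKernel ν η ℓ x y = ∫ ξ, (planeWave ξ (y - x)).re
      ∂(volume.withDensity fun ξ => ENNReal.ofReal (maternSpectralDensity ν η ℓ ξ)) := by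
  have hre := integral_re (integrable_planeWave_mul
    (integrable_maternSpectralDensity hν hℓ η).ofReal (y - x))
  simp only [RCLike.re_to_complex, Complex.coe_algebraMap, Complex.re_mul_ofReal] at hre
  rw [integral_withDensity_maternSpectralDensity hν hη, hre,
    ← Complex.ofReal_re (maternKernel ν η ℓ x y), ← fourier_maternSpectralDensity hν hℓ,
    Real.fourier_eq']
  congr with ξ
  rw [planeWave, ← neg_sub y x, inner_neg_right, smul_eq_mul]
  congr 4
  ring

theorem inv_one_add_pow_le_rpow {b t σ : ℝ} {m : ℕ} (hb : 0 < b) (ht : 0 ≤ t) (hσ : 0 ≤ σ)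
    (hσm : σ ≤ m) : ((1 + t) ^ m)⁻¹ ≤ (1 + b) ^ σ * (1 + b * t) ^ (-σ) := by
  have hrpow : (1 + b * t) ^ σ ≤ (1 + t) ^ m * (1 + b) ^ σ :=
    calc (1 + b * t) ^ σ ≤ ((1 + t) * (1 + b)) ^ σ :=
          Real.rpow_le_rpow (by positivity) (by nlinarith) hσ
      _ = (1 + t) ^ σ * (1 + b) ^ σ := Real.mul_rpow (by positivity) (by positivity)
      _ ≤ (1 + t) ^ (m : ℝ) * (1 + b) ^ σ := by gcongr; linarith
      _ = (1 + t) ^ m * (1 + b) ^ σ := by rw [Real.rpow_natCast]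
  rwa [Real.rpow_neg (by positivity), ← div_eq_mul_inv, le_div_iff₀ (by positivity),
    inv_mul_le_iff₀ (by positivity)]

theorem exists_inv_one_add_norm_sq_pow_le (hν : 0 < ν) (hη : 0 < η) (hℓ : 0 < ℓ) {m : ℕ}
    (hνm : ν + (s : ℝ) / 2 ≤ m) : ∃ C : ℝ, 0 ≤ C ∧ ∀ ξ : EuclideanSpace ℝ (Fin s),
      ((1 + ‖ξ‖ ^ 2) ^ m)⁻¹ ≤ C * maternSpectralDensity ν η ℓ ξ := by
  set b : ℝ := Real.pi ^ 2 / (ν / (2 * ℓ ^ 2))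
  set A : ℝ := η / Real.Gamma ν *
    ((Real.pi / (ν / (2 * ℓ ^ 2))) ^ ((s : ℝ) / 2) * Real.Gamma (ν + (s : ℝ) / 2))
  have hA : 0 < A := by positivity
  have hb : 0 < b := by positivity
  refine ⟨(1 + b) ^ (ν + (s : ℝ) / 2) / A, by positivity, fun ξ => ?_⟩
  have hdensity : maternSpectralDensity ν η ℓ ξ =
      A * (1 + b * ‖ξ‖ ^ 2) ^ (-(ν + (s : ℝ) / 2)) := by
    simp only [maternSpectralDensity, gammaMixtureDensity, finrank_euclideanSpace_fin, A, b]
    ring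
  rw [hdensity, div_mul_eq_mul_div, mul_left_comm, mul_div_cancel_left₀ _ hA.ne']
  exact inv_one_add_pow_le_rpow hb (sq_nonneg _) (by positivity) hνm

theorem exists_dualNorm_le_sqrt_integral_trigSum (hν : 0 < ν) (hη : 0 < η) (hℓ : 0 < ℓ) {m : ℕ}
    (hνm : ν + (s : ℝ) / 2 ≤ m) :
    ∃ C : ℝ, ∀ a : EuclideanSpace ℝ (Fin s) →₀ ℝ, dualNorm m a ≤ C * √(∫ ξ, ‖trigSum a ξ‖ ^ 2
      ∂(volume.withDensity fun ξ => ENNReal.ofReal (maternSpectralDensity ν η ℓ ξ))) := by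
  obtain ⟨C, hC, hdensity⟩ := exists_inv_one_add_norm_sq_pow_le hν hη hℓ hνm
  have hsm : s < 2 * m := by
    have : (s : ℝ) < 2 * m := by linarith
    exact_mod_cast this
  refine ⟨√C, fun a => ?_⟩
  have hint : Integrable fun ξ => ‖trigSum a ξ‖ ^ 2 * maternSpectralDensity ν η ℓ ξ := by
    refine (integrable_maternSpectralDensity hν hℓ η).bdd_mul (c := (a.sum fun _ r => |r|) ^ 2)
      ((continuous_trigSum a).norm.pow 2).aestronglyMeasurable (.of_forall fun ξ => ?_)
    rw [norm_pow, norm_norm]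
    exact pow_le_pow_left₀ (norm_nonneg _) (norm_trigSum_le a ξ) 2
  rw [integral_withDensity_maternSpectralDensity hν hη.le, ← Real.sqrt_mul hC, dualNorm,
    ← integral_const_mul]
  refine Real.sqrt_le_sqrt (integral_mono (integrable_trigSum_sq (by simpa using hsm) a)
    (hint.const_mul C) fun ξ => ?_)
  calc ‖trigSum a ξ‖ ^ 2 * ((1 + ‖ξ‖ ^ 2) ^ m)⁻¹
      ≤ ‖trigSum a ξ‖ ^ 2 * (C * maternSpectralDensity ν η ℓ ξ) := by gcongr; exact hdensity ξ
    _ = C * (‖trigSum a ξ‖ ^ 2 * maternSpectralDensity ν η ℓ ξ) := mul_left_comm _ _ _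

theorem IsDualBounded.memRKHS_maternKernel {U : Set (EuclideanSpace ℝ (Fin s))} {m : ℕ} {M : ℝ}
    {f : EuclideanSpace ℝ (Fin s) → ℝ} (hf : IsDualBounded m U M f) (hν : 0 < ν) (hη : 0 < η)
    (hℓ : 0 < ℓ) (hνm : ν + (s : ℝ) / 2 ≤ m) :
    MemRKHS (fun u v : U => maternKernel ν η ℓ (u : EuclideanSpace ℝ (Fin s)) v)
      fun u : U => f u := by
  obtain ⟨C, hC⟩ := exists_dualNorm_le_sqrt_integral_trigSum hν hη hℓ hνm
  have : IsFiniteMeasure (volume.withDensity fun ξ : EuclideanSpace ℝ (Fin s) =>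
      ENNReal.ofReal (maternSpectralDensity ν η ℓ ξ)) :=
    isFiniteMeasure_withDensity_ofReal (integrable_maternSpectralDensity hν hℓ η).2
  simp only [maternKernel_eq_integral_re_planeWave hν hη.le hℓ]
  refine memRKHS_of_abs_sum_le_sqrt_integral_trigSum (M := |M| * C) fun a ha => ?_
  calc |a.sum fun u r => r * f u|
      ≤ M * dualNorm m a := hf a ha
    _ ≤ |M| * dualNorm m a := mul_le_mul_of_nonneg_right (le_abs_self M) (Real.sqrt_nonneg _)
    _ ≤ |M| * (C * _) := mul_le_mul_of_nonneg_left (hC a) (abs_nonneg M)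
    _ = |M| * C * _ := (mul_assoc _ _ _).symm

end MaternSpectralMeasure

section GaussianMixtures

open Set Function Filter ProbabilityTheory
open scoped Nat SchwartzMap ContDiff

theorem one_add_pow_mul_exp_neg_mul_sq_le {c r : ℝ} (hc : 0 < c) (hr : 0 ≤ r) (N : ℕ) :
    (1 + r) ^ N * Real.exp (-(c * r ^ 2)) ≤ 2 ^ N * N ! / c ^ N * Real.exp c := by
  have hpow : (1 + r) ^ N ≤ 2 ^ N * (1 + r ^ 2) ^ N := by
    rw [← mul_pow]
    exact pow_le_pow_left₀ (by positivity) (by nlinarith [sq_nonneg (r - 1)]) N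
  have hexp : (1 + r ^ 2) ^ N ≤ N ! / c ^ N * Real.exp (c * (1 + r ^ 2)) := by
    have := Real.pow_div_factorial_le_exp (x := c * (1 + r ^ 2)) (by positivity) N
    rw [div_le_iff₀ (by positivity), mul_pow] at this
    rw [div_mul_eq_mul_div, le_div_iff₀ (by positivity)]
    linarith
  calc (1 + r) ^ N * Real.exp (-(c * r ^ 2))
      ≤ 2 ^ N * (N ! / c ^ N * Real.exp (c * (1 + r ^ 2))) * Real.exp (-(c * r ^ 2)) := by
        gcongr
        exact hpow.trans (by gcongr)
    _ = 2 ^ N * N ! / c ^ N * Real.exp (c * (1 + r ^ 2) + -(c * r ^ 2)) := by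
        rw [Real.exp_add]
        ring
    _ = 2 ^ N * N ! / c ^ N * Real.exp c := by ring_nf

section Gaussian

variable {F : Type*} [NormedAddCommGroup F] [InnerProductSpace ℝ F] {c : ℝ}

variable (F c) in
theorem exists_norm_iteratedFDeriv_gaussian_le (n : ℕ) : ∃ C : ℝ, 0 ≤ C ∧ ∃ j : ℕ, ∀ y : F,
    ‖iteratedFDeriv ℝ n (fun y : F => Real.exp (-(c * ‖y‖ ^ 2))) y‖ ≤
      C * ((1 + ‖y‖) ^ j * Real.exp (-(c * ‖y‖ ^ 2))) := by
  have hgrowth : (fun y : F => -(c * ‖y‖ ^ 2)).HasTemperateGrowth := by fun_prop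
  obtain ⟨j, C, hC, hquadratic⟩ := hgrowth.norm_iteratedFDeriv_le_uniform n
  refine ⟨n ! * (C + 1) ^ n, by positivity, j * n, fun y => ?_⟩
  have hy : 1 ≤ (1 + ‖y‖) ^ j := one_le_pow₀ (by linarith [norm_nonneg y])
  refine (norm_iteratedFDeriv_comp_le (N := ∞) Real.contDiff_exp hgrowth.1
    (by exact_mod_cast le_top) y (C := Real.exp (-(c * ‖y‖ ^ 2))) (D := (C + 1) * (1 + ‖y‖) ^ j)
    (fun i _ => ?_) fun i hi hin => ?_).trans_eq ?_
  · rw [norm_iteratedFDeriv_eq_norm_iteratedDeriv, iteratedDeriv_eq_iterate, Real.iter_deriv_exp,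
      Real.norm_of_nonneg (Real.exp_nonneg _)]
  · refine ((hquadratic i hin y).trans ?_).trans (le_self_pow₀ (by nlinarith) (by omega))
    gcongr
    linarith
  · rw [mul_pow, pow_mul]
    ring

theorem exists_schwartzMap_gaussian (hc : 0 < c) :
    ∃ H : 𝓢(F, ℝ), ∀ y, H y = Real.exp (-(c * ‖y‖ ^ 2)) := by
  refine ⟨⟨fun y => Real.exp (-(c * ‖y‖ ^ 2)),
    (contDiff_const.mul (contDiff_norm_sq ℝ)).neg.exp, fun k n => ?_⟩, fun y => rfl⟩
  obtain ⟨C, hC, j, hderiv⟩ := exists_norm_iteratedFDeriv_gaussian_le F c n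
  refine ⟨C * (2 ^ (k + j) * (k + j)! / c ^ (k + j) * Real.exp c), fun y => ?_⟩
  calc ‖y‖ ^ k * ‖iteratedFDeriv ℝ n (fun y => Real.exp (-(c * ‖y‖ ^ 2))) y‖
      ≤ (1 + ‖y‖) ^ k * (C * ((1 + ‖y‖) ^ j * Real.exp (-(c * ‖y‖ ^ 2)))) := by
        gcongr
        · linarith
        · exact hderiv y
    _ = C * ((1 + ‖y‖) ^ (k + j) * Real.exp (-(c * ‖y‖ ^ 2))) := by
        rw [pow_add]
        ring
    _ ≤ _ := mul_le_mul_of_nonneg_left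
        (one_add_pow_mul_exp_neg_mul_sq_le hc (norm_nonneg y) _) hC

end Gaussian

section GammaMeasure

variable {ν : ℝ}

theorem gammaMeasure_one_eq_withDensity (ν : ℝ) :
    gammaMeasure ν 1 = (volume.restrict (Ioi 0)).withDensity fun τ =>
      ENNReal.ofReal ((Real.Gamma ν)⁻¹ * (τ ^ (ν - 1) * Real.exp (-τ))) := by
  rw [gammaMeasure, ← withDensity_indicator measurableSet_Ioi]
  refine withDensity_congr_ae ?_
  filter_upwards [compl_mem_ae_iff.2 (measure_singleton (0 : ℝ))] with τ hτ
  rcases lt_or_gt_of_ne hτ with hneg | hpos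
  · rw [gammaPDF_of_neg hneg, indicator_of_notMem (notMem_Ioi.2 hneg.le)]
  · rw [gammaPDF_of_nonneg hpos.le, indicator_of_mem (mem_Ioi.2 hpos), Real.one_rpow, one_div,
      one_mul, mul_assoc]

theorem integral_gammaMeasure_one (hν : 0 < ν) (g : ℝ → ℝ) :
    ∫ τ, g τ ∂gammaMeasure ν 1 =
      (Real.Gamma ν)⁻¹ * ∫ τ in Ioi (0 : ℝ), τ ^ (ν - 1) * Real.exp (-τ) * g τ := by
  rw [gammaMeasure_one_eq_withDensity, integral_withDensity_eq_integral_toReal_smul (by fun_prop)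
    (.of_forall fun _ => ENNReal.ofReal_lt_top), ← integral_const_mul]
  refine setIntegral_congr_fun measurableSet_Ioi fun τ (hτ : 0 < τ) => ?_
  simp only [smul_eq_mul]
  rw [ENNReal.toReal_ofReal (by positivity), mul_assoc]

theorem isScaleMeasure_gammaMeasure_one (hν : 0 < ν) : IsScaleMeasure ν (gammaMeasure ν 1) where
  ae_pos := by
    rw [gammaMeasure_one_eq_withDensity]
    exact (withDensity_absolutelyContinuous _ _).ae_le (ae_restrict_mem measurableSet_Ioi)
  integrable_rpow p hp := by
    rw [gammaMeasure_one_eq_withDensity, integrable_withDensity_iff (by fun_prop)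
      (.of_forall fun _ => ENNReal.ofReal_lt_top)]
    have hconv := Real.GammaIntegral_convergent (show 0 < p + ν by linarith)
    refine (hconv.const_mul (Real.Gamma ν)⁻¹).congr ?_
    filter_upwards [ae_restrict_mem measurableSet_Ioi] with τ (hτ : 0 < τ)
    rw [ENNReal.toReal_ofReal (by positivity), add_sub_assoc, Real.rpow_add hτ]
    ring

end GammaMeasure

theorem isScaleMeasure_dirac_one (ν : ℝ) : IsScaleMeasure ν (Measure.dirac 1) where
  ae_pos := by
    rw [ae_dirac_eq]
    exact zero_lt_one (α := ℝ)
  integrable_rpow _ _ := integrable_dirac (by simp)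

theorem exists_maternKernel_eq_scaleMixture (d : ℕ) {ν ℓ : ℝ} (hν : 0 < ν) (η : ℝ) (hℓ : 0 < ℓ) :
    ∃ H : 𝓢(EuclideanSpace ℝ (Fin d), ℝ), ∀ x y,
      maternKernel ν η ℓ x y = scaleMixture (gammaMeasure ν 1) x H 0 y := by
  obtain ⟨H, hH⟩ := exists_schwartzMap_gaussian (F := EuclideanSpace ℝ (Fin d))
    (c := ν / (2 * ℓ ^ 2)) (by positivity)
  refine ⟨η • H, fun x y => ?_⟩
  rw [maternKernel_eq_integral hν hℓ, scaleMixture, integral_gammaMeasure_one hν, div_eq_mul_inv,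
    mul_comm η, mul_assoc, ← integral_const_mul]
  congr 1
  refine setIntegral_congr_fun measurableSet_Ioi fun τ (hτ : 0 < τ) => ?_
  have hnorm : ‖(√τ)⁻¹ • (y - x)‖ ^ 2 = ‖x - y‖ ^ 2 / τ := by
    rw [norm_smul, mul_pow, norm_inv, inv_pow, Real.norm_of_nonneg (Real.sqrt_nonneg _),
      Real.sq_sqrt hτ.le, norm_sub_rev, inv_mul_eq_div]
  simp only [Nat.cast_zero, neg_zero, zero_div, Real.rpow_zero, one_mul, smul_apply,
    smul_eq_mul, hH, hnorm, mul_div_assoc]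
  ring

theorem exists_seKernel_eq_scaleMixture (d : ℕ) (η : ℝ) {ℓ : ℝ} (hℓ : 0 < ℓ) :
    ∃ H : 𝓢(EuclideanSpace ℝ (Fin d), ℝ), ∀ x y,
      seKernel η ℓ x y = scaleMixture (Measure.dirac 1) x H 0 y := by
  obtain ⟨H, hH⟩ := exists_schwartzMap_gaussian (F := EuclideanSpace ℝ (Fin d))
    (c := 1 / ℓ ^ 2) (by positivity)
  refine ⟨η • H, fun x y => ?_⟩
  rw [seKernel, scaleMixture, integral_dirac]
  simp only [Nat.cast_zero, neg_zero, zero_div, Real.rpow_zero, one_mul, smul_apply,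
    smul_eq_mul, hH, Real.sqrt_one, inv_one, one_smul]
  rw [norm_sub_rev y x]
  congr 2
  ring

theorem continuous_scaleMixture_zero {F : Type*} [NormedAddCommGroup F] [InnerProductSpace ℝ F]
    (Λ : Measure ℝ) [IsFiniteMeasure Λ] (x : F) (H : 𝓢(F, ℝ)) :
    Continuous (scaleMixture Λ x H 0) := by
  obtain ⟨C, hC⟩ := H.decay 0 0
  have hbound : ∀ y, ‖H y‖ ≤ C := fun y => by simpa using hC.2 y
  unfold scaleMixture
  simp only [Nat.cast_zero, neg_zero, zero_div, Real.rpow_zero, one_mul]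
  refine continuous_of_dominated (bound := fun _ => C) (fun y => ?_)
    (fun y => .of_forall fun τ => hbound _) (integrable_const C)
    (.of_forall fun τ => H.continuous.comp (by fun_prop))
  have hprofile : Continuous fun t : ℝ => H (t • (y - x)) := H.continuous.comp (by fun_prop)
  exact (hprofile.measurable.comp Real.continuous_sqrt.measurable.inv).aestronglyMeasurable

end GaussianMixtures

section PushforwardBound

open Set
open scoped NNReal

variable {Ω F : Type*} [MeasurableSpace Ω] [MeasurableSpace F] {ρ : Measure Ω} {U : Set Ω}
  {f : Ω → ℝ} {C : ℝ}

theorem toNNReal_smul_restrict_le_withDensity (hU : MeasurableSet U) (hf : ∀ u ∈ U, C ≤ f u) :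
    C.toNNReal • ρ.restrict U ≤ (ρ.restrict U).withDensity fun u => ENNReal.ofReal (f u) := by
  rw [ENNReal.smul_def, ← withDensity_const]
  exact withDensity_mono
    (ae_restrict_of_forall_mem hU fun u hu => ENNReal.ofReal_le_ofReal (hf u hu))

theorem withDensity_restrict_le_toNNReal_smul (hU : MeasurableSet U) (hf : ∀ u ∈ U, f u ≤ C) :
    (ρ.restrict U).withDensity (fun u => ENNReal.ofReal (f u)) ≤ C.toNNReal • ρ :=
  calc (ρ.restrict U).withDensity (fun u => ENNReal.ofReal (f u))
      ≤ (ρ.restrict U).withDensity fun _ => ENNReal.ofReal C :=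
        withDensity_mono
          (ae_restrict_of_forall_mem hU fun u hu => ENNReal.ofReal_le_ofReal (hf u hu))
    _ = C.toNNReal • ρ.restrict U := withDensity_const _
    _ ≤ C.toNNReal • ρ := by gcongr; exact Measure.restrict_le_self

theorem map_le_div_smul_of_smul_le {μ : Measure Ω} {ν : Measure F} {G : Ω → F} {c C : ℝ≥0}
    (hc : c ≠ 0) (hμ : c • μ ≤ ρ) (hG : AEMeasurable G ρ) (hν : ρ.map G ≤ C • ν) :
    μ.map G ≤ (C / c) • ν := by
  have hμ' : μ ≤ c⁻¹ • ρ := by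
    rw [← inv_smul_smul₀ hc μ]
    gcongr
  have hGμ : AEMeasurable G μ := (hG.smul_measure c⁻¹).mono_measure hμ'
  refine Measure.le_iff.2 fun A hA => ?_
  calc μ.map G A = μ (G ⁻¹' A) := Measure.map_apply_of_aemeasurable hGμ hA
    _ ≤ c⁻¹ • ρ (G ⁻¹' A) := hμ' _
    _ = c⁻¹ • ρ.map G A := by rw [Measure.map_apply_of_aemeasurable hG hA]
    _ ≤ c⁻¹ • C • ν A := by gcongr; exact hν A
    _ = ((C / c) • ν) A := by rw [smul_smul, inv_mul_eq_div, Measure.smul_apply]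

end PushforwardBound

section Pullback

open Set Filter ProbabilityTheory
open scoped NNReal SchwartzMap

variable {s d : ℕ} {U : Set (EuclideanSpace ℝ (Fin s))}
  {G : EuclideanSpace ℝ (Fin s) → EuclideanSpace ℝ (Fin d)} {l : ℕ}

theorem continuousOn_of_hasBoundedPartials (hU : IsOpen U) (hl : 1 ≤ l)
    (hG : ∀ j, HasBoundedPartials U l fun u => G u j) : ContinuousOn G U := by
  have hcoord : ContinuousOn (fun u => (G u).ofLp) U :=
    continuousOn_pi.2 fun j => (hG j).continuousOn hU hl
  exact (PiLp.continuous_toLp 2 _).comp_continuousOn hcoord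

theorem IsScaleMeasure.isFiniteMeasure {ν : ℝ} {Λ : Measure ℝ} (hΛ : IsScaleMeasure ν Λ)
    (hν : 0 ≤ ν) : IsFiniteMeasure Λ := by
  have hone := hΛ.integrable_rpow 0 (by linarith)
  simp only [Real.rpow_zero] at hone
  exact (integrable_const_iff_isFiniteMeasure one_ne_zero).1 hone

variable {C : ℝ≥0} {Λ : Measure ℝ} {ν : ℝ}

theorem sobolevOn_scaleMixture_comp_of_hasBoundedPartials [SFinite Λ] (hU : IsOpen U)
    (hUb : Bornology.IsBounded U) (hl : 1 ≤ l) (hG : ∀ j, HasBoundedPartials U l fun u => G u j)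
    (hpush : (volume.restrict U).map G ≤ C • volume) (hΛ : IsScaleMeasure ν Λ) {m : ℕ}
    (hml : m ≤ l) (hmν : (m : ℝ) ≤ ν + (d : ℝ) / 2) (x : EuclideanSpace ℝ (Fin d))
    (H : 𝓢(EuclideanSpace ℝ (Fin d), ℝ)) :
    SobolevOn 2 U U m (U.indicator fun u => scaleMixture Λ x H 0 (G u)) := by
  classical
  have hGm : Measurable (U.indicator G) := by
    rw [← piecewise_eq_indicator]
    exact (continuousOn_of_hasBoundedPartials hU hl hG).measurable_piecewise continuousOn_const
      hU.measurableSet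
  have hGeq : EqOn (U.indicator G) G U := fun u hu => indicator_of_mem hu G
  have hpush' : (volume.restrict U).map (U.indicator G) ≤ C • volume := by
    rwa [Measure.map_congr (ae_restrict_of_forall_mem hU.measurableSet hGeq)]
  choose P hP hP_sobolev using fun i j => (hG j).exists_sobolevOn_partial hU hl i
  have hP' : ∀ i j, ∀ u ∈ U, HasLineDerivAt ℝ (fun u => U.indicator G u j) (P i j u) u
      (EuclideanSpace.basisFun (Fin s) ℝ i) := fun i j u hu => by
    rw [EuclideanSpace.basisFun_apply]
    refine (hP i j u hu).congr_of_eventuallyEq ?_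
    filter_upwards [hU.mem_nhds hu] with v hv
    rw [hGeq hv]
  have hcomp : (U.indicator fun u => scaleMixture Λ x H 0 (G u)) =
      U.indicator fun u => scaleMixture Λ x H 0 (U.indicator G u) :=
    indicator_congr fun u hu => by rw [hGeq hu]
  rw [hcomp]
  exact sobolevOn_scaleMixture_comp _ hU hUb hGm hpush' hΛ hP' hP_sobolev hml (by simpa using hmν) H

theorem memRKHS_scaleMixture_comp (hUb : Bornology.IsBounded U) (hU : IsOpen U)
    (hUc : Convex ℝ U) (hG : ∀ j, HasBoundedPartials U l fun u => G u j)
    (hpush : (volume.restrict U).map G ≤ C • volume) (hν : 0 ≤ ν) (hΛ : IsScaleMeasure ν Λ)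
    {m : ℕ} (hml : m ≤ l) (hmν : (m : ℝ) ≤ ν + (d : ℝ) / 2) {νc ηc ℓc : ℝ} (hνc : 0 < νc)
    (hηc : 0 < ηc) (hℓc : 0 < ℓc) (hνm : νc + (s : ℝ) / 2 ≤ m) (x : EuclideanSpace ℝ (Fin d))
    (H : 𝓢(EuclideanSpace ℝ (Fin d), ℝ)) :
    MemRKHS (fun u v : U => maternKernel νc ηc ℓc (u : EuclideanSpace ℝ (Fin s)) v)
      fun u : U => scaleMixture Λ x H 0 (G u) := by
  have hsm : s < 2 * m := by
    have : (s : ℝ) < 2 * m := by linarith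
    exact_mod_cast this
  have hΛ_fin := hΛ.isFiniteMeasure hν
  have hsob := sobolevOn_scaleMixture_comp_of_hasBoundedPartials hU hUb (by omega) hG hpush hΛ
    hml hmν x H
  have hcont : ContinuousOn (U.indicator fun u => scaleMixture Λ x H 0 (G u)) U :=
    ((continuous_scaleMixture_zero Λ x H).comp_continuousOn
      (continuousOn_of_hasBoundedPartials hU (by omega) hG)).congr eqOn_indicator
  obtain ⟨M, hM⟩ := hsob.exists_isDualBounded_of_convex (by simpa using hsm) hUb hU hUc hcont
  simpa using hM.memRKHS_maternKernel hνc hηc hℓc hνm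

theorem pullback_kernel_mem_rkhs_general (hUb : Bornology.IsBounded U) (hU : IsOpen U)
    (hUc : Convex ℝ U) (hG : ∀ j, HasBoundedPartials U l fun u => G u j)
    (hpush : (volume.restrict U).map G ≤ C • volume) {νc ηc ℓc : ℝ} (hνc : 0 < νc)
    (hηc : 0 < ηc) (hℓc : 0 < ℓc)
    {k : EuclideanSpace ℝ (Fin d) → EuclideanSpace ℝ (Fin d) → ℝ}
    (hk : (∃ νk ηk ℓk : ℝ, 0 < νk ∧ 0 < ℓk ∧ k = maternKernel νk ηk ℓk ∧
            νc ≤ min (⌊νk + (d : ℝ) / 2⌋₊ : ℝ) (l : ℝ) - (s : ℝ) / 2) ∨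
          (∃ ηk ℓk : ℝ, 0 < ℓk ∧ k = seKernel ηk ℓk ∧ νc ≤ (l : ℝ) - (s : ℝ) / 2))
    (x : EuclideanSpace ℝ (Fin d)) :
    MemRKHS (fun u v : U => maternKernel νc ηc ℓc (u : EuclideanSpace ℝ (Fin s)) v)
      fun u : U => k x (G u) := by
  rcases hk with ⟨ν, η, ℓ, hν, hℓ, rfl, hνcν⟩ | ⟨η, ℓ, hℓ, rfl, hνcl⟩
  · obtain ⟨H, hH⟩ := exists_maternKernel_eq_scaleMixture d hν η hℓ
    have hfloor : ((min ⌊ν + (d : ℝ) / 2⌋₊ l : ℕ) : ℝ) ≤ ν + (d : ℝ) / 2 :=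
      (Nat.cast_le.2 (min_le_left _ _)).trans (Nat.floor_le (by positivity))
    simp only [hH x]
    exact memRKHS_scaleMixture_comp hUb hU hUc hG hpush hν.le
      (isScaleMeasure_gammaMeasure_one hν) (min_le_right _ _) hfloor hνc hηc hℓc
      (by rw [Nat.cast_min]; linarith) x H
  · obtain ⟨H, hH⟩ := exists_seKernel_eq_scaleMixture d η hℓ
    simp only [hH x]
    exact memRKHS_scaleMixture_comp hUb hU hUc hG hpush (Nat.cast_nonneg l)
      (isScaleMeasure_dirac_one l) le_rfl (le_add_of_nonneg_right (by positivity)) hνc hηc hℓc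
      (by linarith) x H

end Pullback

theorem pullback_kernel_mem_rkhs
    {s d : ℕ}
    (U : Set (EuclideanSpace ℝ (Fin s))) (X : Set (EuclideanSpace ℝ (Fin d)))
    (hU : Bornology.IsBounded U ∧ IsOpen U ∧ Convex ℝ U)
    (hX : X = Set.univ ∨ (Bornology.IsBounded X ∧ IsOpen X ∧ Convex ℝ X))
    (𝕌 : Measure (EuclideanSpace ℝ (Fin s))) [IsProbabilityMeasure 𝕌]
    (f𝕌 : EuclideanSpace ℝ (Fin s) → ℝ) (hf𝕌_meas : Measurable f𝕌)
    (C𝕌 C𝕌' : ℝ) (hC𝕌 : 0 < C𝕌) (hC𝕌' : 0 < C𝕌')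
    (hf𝕌 : ∀ u ∈ U, f𝕌 u ∈ Set.Icc C𝕌 C𝕌')
    (h𝕌 : 𝕌 = (volume.restrict U).withDensity fun u => ENNReal.ofReal (f𝕌 u))
    (G : EuclideanSpace ℝ (Fin s) → EuclideanSpace ℝ (Fin d))
    (hG_meas : AEMeasurable G 𝕌) (hG_maps : Set.MapsTo G U X)
    (fP : EuclideanSpace ℝ (Fin d) → ℝ) (hfP_meas : Measurable fP)
    (CP : ℝ) (hfP : ∀ x ∈ X, fP x ≤ CP)
    (hP : Measure.map G 𝕌 = (volume.restrict X).withDensity fun x => ENNReal.ofReal (fP x))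
    (l : ℕ) (hl : (s : ℝ) / 2 < l)
    (hG : ∀ j : Fin d, HasBoundedPartials U l fun u => G u j)
    (νc ηc ℓc : ℝ) (hνc : 0 < νc) (hηc : 0 < ηc) (hℓc : 0 < ℓc)
    (k : EuclideanSpace ℝ (Fin d) → EuclideanSpace ℝ (Fin d) → ℝ)
    (hk : (∃ νk ηk ℓk : ℝ, 0 < νk ∧ 0 < ηk ∧ 0 < ℓk ∧ k = maternKernel νk ηk ℓk ∧
            (s : ℝ) / 2 < (⌊νk + (d : ℝ) / 2⌋₊ : ℝ) ∧
            νc ≤ min (⌊νk + (d : ℝ) / 2⌋₊ : ℝ) (l : ℝ) - (s : ℝ) / 2) ∨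
          (∃ ηk ℓk : ℝ, 0 < ηk ∧ 0 < ℓk ∧ k = seKernel ηk ℓk ∧
            νc ≤ (l : ℝ) - (s : ℝ) / 2)) :
    ∀ x ∈ X, MemRKHS (fun u v : U => maternKernel νc ηc ℓc (u : EuclideanSpace ℝ (Fin s)) v)
      (fun u : U => k x (G u)) := by
  obtain ⟨hUb, hUo, hUc⟩ := hU
  have hXm : MeasurableSet X := by
    rcases hX with rfl | ⟨-, hXo, -⟩
    exacts [.univ, hXo.measurableSet]
  subst h𝕌
  have hpush := map_le_div_smul_of_smul_le (Real.toNNReal_pos.2 hC𝕌).ne'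
    (toNNReal_smul_restrict_le_withDensity hUo.measurableSet fun u hu => (hf𝕌 u hu).1) hG_meas
    (hP.trans_le (withDensity_restrict_le_toNNReal_smul hXm hfP))
  refine fun x _ => pullback_kernel_mem_rkhs_general hUb hUo hUc hG hpush hνc hηc hℓc ?_ x
  rcases hk with ⟨νk, ηk, ℓk, hνk, -, hℓk, hk, -, hνcν⟩ | ⟨ηk, ℓk, -, hℓk, hk, hνcl⟩
  exacts [.inl ⟨νk, ηk, ℓk, hνk, hℓk, hk, hνcν⟩, .inr ⟨ηk, ℓk, hℓk, hk, hνcl⟩]
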